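/- arXiv:1403.5335 — 2 statements merged into one kernel-verified Lean document; each statement's English description precedes it below -/
import Mathlib

section
/- For every ε > 0 there is a constant C_ε such that every finite set Λ ⊂ S¹ = {x ∈ ℝ² : |x| = 1} satisfies E₃(Λ) ≤ C_ε · |Λ|^{7/2+ε}. -/
open MeasureTheory Real

noncomputable section

/-- The `k`-energy of a set `Λ`: the number of `2k`-tuples `(λ₁,…,λ₂ₖ) ∈ Λ^{2k}` with
`λ₁ + ⋯ + λ_k = λ_{k+1} + ⋯ + λ_{2k}`. -/
def energy {E : Type*} [AddCommMonoid E] (k : ℕ) (Λ : Set E) : ℕ :=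
  Nat.card {fg : (Fin k → E) × (Fin k → E) //
    (∀ i, fg.1 i ∈ Λ) ∧ (∀ i, fg.2 i ∈ Λ) ∧ ∑ i, fg.1 i = ∑ i, fg.2 i}

namespace CircE

/-- Upper unit semicircle centred at `s`, as a function. -/
def f (s : ℝ × ℝ) (x : ℝ) : ℝ := s.2 + √(1 - (x - s.1) ^ 2)

/-- `x` lies in the domain of the semicircle centred at `s`. -/
def Dom (s : ℝ × ℝ) (x : ℝ) : Prop := -1 ≤ x - s.1 ∧ x - s.1 ≤ 1

/-- The point `p` lies on the semicircle centred at `s`. -/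
def On (s p : ℝ × ℝ) : Prop := Dom s p.1 ∧ p.2 = f s p.1

lemma continuous_f (s : ℝ × ℝ) : Continuous (f s) := by
  unfold f; fun_prop

lemma sqrt_concave {x y t : ℝ} (hx : -1 ≤ x) (hx1 : x ≤ 1) (hy : -1 ≤ y) (hy1 : y ≤ 1)
    (hxy : x ≠ y) (ht : 0 < t) (ht1 : t < 1) :
    t * √(1 - x ^ 2) + (1 - t) * √(1 - y ^ 2) < √(1 - (t * x + (1 - t) * y) ^ 2) := by
  have h1 : 0 ≤ 1 - x ^ 2 := by nlinarith
  have h2 : 0 ≤ 1 - y ^ 2 := by nlinarith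
  have a1 := Real.sq_sqrt h1
  have a2 := Real.sq_sqrt h2
  set u := √(1 - x ^ 2)
  set v := √(1 - y ^ 2)
  have hu : 0 ≤ u := Real.sqrt_nonneg _
  have hv : 0 ≤ v := Real.sqrt_nonneg _
  have hpos : 0 < (x - y) ^ 2 := by
    have := sub_ne_zero.2 hxy
    positivity
  have hxy1 : 0 ≤ 1 - x * y := by nlinarith
  have key : u * v < 1 - x * y := by
    apply lt_of_pow_lt_pow_left₀ 2 hxy1
    rw [mul_pow, a1, a2]
    nlinarith
  apply Real.lt_sqrt_of_sq_lt
  have ht2 : 0 < t * (1 - t) := mul_pos ht (by linarith)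
  have := mul_lt_mul_of_pos_left key ht2
  have e : (t * u + (1 - t) * v) ^ 2 = t ^ 2 * u ^ 2 + (1 - t) ^ 2 * v ^ 2 + 2 * (t * (1 - t) * (u * v)) := by
    ring
  rw [e, a1, a2]
  nlinarith

lemma f_mono {s s' : ℝ × ℝ} {a b : ℝ} (hs : s.1 < s'.1) (hab : a < b)
    (ha' : Dom s' a) (hb : Dom s b) :
    f s' a - f s a < f s' b - f s b := by
  obtain ⟨h1, -⟩ := ha'
  obtain ⟨-, h2⟩ := hb
  unfold f
  set A := a - s'.1 with hA
  set B := b - s.1 with hB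
  have hAB : A < B := by rw [hA, hB]; linarith
  set t := (b - a) / (B - A) with ht
  have hBA : 0 < B - A := by linarith
  have t0 : 0 < t := div_pos (by linarith) hBA
  have t1 : t < 1 := by rw [ht, div_lt_one hBA]; rw [hA, hB]; linarith
  have tt : t * (B - A) = b - a := div_mul_cancel₀ _ hBA.ne'
  have k1 := sqrt_concave (x := A) (y := B) (t := t) h1 (by linarith) (by linarith) h2 hAB.ne t0 t1
  have k2 := sqrt_concave (x := B) (y := A) (t := t) (by linarith) h2 h1 (by linarith) hAB.ne' t0 t1
  have e1 : t * A + (1 - t) * B = a - s.1 := by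
    have : t * A + (1 - t) * B = B - t * (B - A) := by ring
    rw [this, tt, hB]; ring
  have e2 : t * B + (1 - t) * A = b - s'.1 := by
    have : t * B + (1 - t) * A = A + t * (B - A) := by ring
    rw [this, tt, hA]; ring
  rw [e1] at k1
  rw [e2] at k2
  linarith

lemma eq_of_on {s s' p : ℝ × ℝ} (h : On s p) (h' : On s' p) (e : s.1 = s'.1) : s = s' := by
  have h2 := h.2
  have h3 := h'.2
  unfold f at h2 h3
  rw [← e] at h3
  exact Prod.ext e (by linarith)

/-- Two curves agreeing at two abscissae coincide. -/
lemma eq_of_two {s s' : ℝ × ℝ} {a b : ℝ} (hab : a ≠ b) (ha : Dom s a) (ha' : Dom s' a)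
    (hb : Dom s b) (hb' : Dom s' b) (ea : f s a = f s' a) (eb : f s b = f s' b) : s = s' := by
  wlog hlt : a < b generalizing a b
  · exact this hab.symm hb hb' ha ha' eb ea (lt_of_le_of_ne (not_lt.1 hlt) hab.symm)
  rcases lt_trichotomy s.1 s'.1 with h | h | h
  · have := f_mono h hlt ha' hb
    linarith
  · unfold f at ea
    rw [← h] at ea
    exact Prod.ext h (by linarith)
  · have := f_mono h hlt ha hb'
    linarith

lemma lt_right {s s' p : ℝ × ℝ} {x : ℝ} (h : On s p) (h' : On s' p) (hs : s.1 < s'.1)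
    (hx : p.1 < x) (hd : Dom s x) : f s x < f s' x := by
  have := f_mono hs hx h'.1 hd
  have h2 := h.2
  have h3 := h'.2
  linarith

lemma le_right {s s' p : ℝ × ℝ} {x : ℝ} (h : On s p) (h' : On s' p) (hs : s.1 ≤ s'.1)
    (hx : p.1 < x) (hd : Dom s x) : f s x ≤ f s' x := by
  rcases hs.lt_or_eq with h1 | h1
  · exact (lt_right h h' h1 hx hd).le
  · rw [eq_of_on h h' h1]

lemma meet {s s' : ℝ × ℝ} {a b : ℝ} (hab : a < b) (ha : f s a < f s' a) (hb : f s' b < f s b) :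
    ∃ x, a < x ∧ x < b ∧ f s x = f s' x := by
  have hc : ContinuousOn (fun x => f s x - f s' x) (Set.Icc a b) :=
    ((continuous_f s).sub (continuous_f s')).continuousOn
  have := intermediate_value_Ioo hab.le hc
  obtain ⟨x, hx, h⟩ := this (show (0 : ℝ) ∈ _ from ⟨by linarith, by linarith⟩)
  exact ⟨x, hx.1, hx.2, by simpa [sub_eq_zero] using h⟩

lemma Dom.mid {s : ℝ × ℝ} {a b x : ℝ} (ha : Dom s a) (hb : Dom s b) (h1 : a ≤ x) (h2 : x ≤ b) :
    Dom s x := ⟨by linarith [ha.1], by linarith [hb.2]⟩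

/-- `e = (s, p, q)` is an edge along the curve `s` between consecutive points `p`, `q` of `W`. -/
structure IsEdge (W : Finset (ℝ × ℝ)) (e : (ℝ × ℝ) × (ℝ × ℝ) × (ℝ × ℝ)) : Prop where
  on1 : On e.1 e.2.1
  on2 : On e.1 e.2.2
  lt : e.2.1.1 < e.2.2.1
  mem1 : e.2.1 ∈ W
  mem2 : e.2.2 ∈ W
  cons : ∀ w ∈ W, On e.1 w → e.2.1.1 < w.1 → w.1 < e.2.2.1 → False

/-- Two edges cross. -/
def Cross (e e' : (ℝ × ℝ) × (ℝ × ℝ) × (ℝ × ℝ)) : Prop :=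
  e.1 ≠ e'.1 ∧ ∃ x, (e.2.1.1 < x ∧ x < e.2.2.1) ∧ (e'.2.1.1 < x ∧ x < e'.2.2.1) ∧
    f e.1 x = f e'.1 x

lemma IsEdge.dom {W : Finset (ℝ × ℝ)} {e : (ℝ × ℝ) × (ℝ × ℝ) × (ℝ × ℝ)} (h : IsEdge W e) {x : ℝ}
    (h1 : e.2.1.1 ≤ x) (h2 : x ≤ e.2.2.1) : Dom e.1 x := h.on1.1.mid h.on2.1 h1 h2

lemma On.eq_of_fst {s p q : ℝ × ℝ} (hp : On s p) (hq : On s q) (h : p.1 = q.1) : p = q :=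
  Prod.ext h (by rw [hp.2, hq.2, h])

lemma IsEdge.eq {W : Finset (ℝ × ℝ)} {e e' : (ℝ × ℝ) × (ℝ × ℝ) × (ℝ × ℝ)} (h : IsEdge W e)
    (h' : IsEdge W e') (hs : e.1 = e'.1) (hp : e.2.1 = e'.2.1) : e = e' := by
  obtain ⟨s, p, q⟩ := e
  obtain ⟨s', p', q'⟩ := e'
  simp only at hs hp
  subst hs hp
  have : q = q' := by
    apply h.on2.eq_of_fst h'.on2
    rcases lt_trichotomy q.1 q'.1 with h1 | h1 | h1
    · exact (h'.cons q h.mem2 h.on2 h.lt h1).elim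
    · exact h1
    · exact (h.cons q' h'.mem2 h'.on2 h'.lt h1).elim
  rw [this]

/-- The wedge between `e` and the next outgoing edge `e2` is charged to `w`. -/
structure Charged (W : Finset (ℝ × ℝ)) (F : Finset ((ℝ × ℝ) × (ℝ × ℝ) × (ℝ × ℝ)))
    (e e2 : (ℝ × ℝ) × (ℝ × ℝ) × (ℝ × ℝ)) (w : ℝ × ℝ) : Prop where
  mem : e ∈ F
  mem2 : e2 ∈ F
  start : e2.2.1 = e.2.1
  lt : e.1.1 < e2.1.1
  next : ∀ e3 ∈ F, e3.2.1 = e.2.1 → e.1.1 < e3.1.1 → e2.1.1 ≤ e3.1.1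
  memw : w ∈ W
  ltw : e.2.1.1 < w.1
  le1 : w.1 ≤ e.2.2.1
  le2 : w.1 ≤ e2.2.2.1
  f1 : f e.1 w.1 ≤ w.2
  f2 : w.2 ≤ f e2.1 w.1
  first : ∀ v ∈ W, e.2.1.1 < v.1 → v.1 < w.1 → f e.1 v.1 ≤ v.2 → v.2 ≤ f e2.1 v.1 → False

variable {W : Finset (ℝ × ℝ)} {F : Finset ((ℝ × ℝ) × (ℝ × ℝ) × (ℝ × ℝ))}

lemma exists_charged (hF : ∀ e ∈ F, IsEdge W e) {e : (ℝ × ℝ) × (ℝ × ℝ) × (ℝ × ℝ)} (he : e ∈ F)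
    (hnt : ∃ e' ∈ F, e'.2.1 = e.2.1 ∧ e.1.1 < e'.1.1) : ∃ e2 w, Charged W F e e2 w := by
  classical
  obtain ⟨e2, h2, hmin⟩ := Finset.exists_min_image
    (F.filter fun e' => e'.2.1 = e.2.1 ∧ e.1.1 < e'.1.1) (fun e' => e'.1.1) (by
      obtain ⟨e', h1, h2⟩ := hnt
      exact ⟨e', Finset.mem_filter.2 ⟨h1, h2⟩⟩)
  rw [Finset.mem_filter] at h2
  obtain ⟨m2, st, hlt⟩ := h2
  have E := hF e he
  have E2 := hF e2 m2
  have on2 : On e2.1 e.2.1 := st ▸ E2.on1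
  have ltt : e.2.1.1 < e2.2.2.1 := by rw [← st]; exact E2.lt
  obtain ⟨w, hw, hwmin⟩ := Finset.exists_min_image
    (W.filter fun w => e.2.1.1 < w.1 ∧ w.1 ≤ e.2.2.1 ∧ w.1 ≤ e2.2.2.1 ∧ f e.1 w.1 ≤ w.2 ∧
      w.2 ≤ f e2.1 w.1) (fun w => w.1) (by
      rcases le_total e.2.2.1 e2.2.2.1 with h | h
      · refine ⟨e.2.2, Finset.mem_filter.2 ⟨E.mem2, E.lt, le_rfl, h, E.on2.2.ge, ?_⟩⟩
        rw [E.on2.2]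
        exact (lt_right E.on1 on2 hlt E.lt E.on2.1).le
      · refine ⟨e2.2.2, Finset.mem_filter.2 ⟨E2.mem2, ltt, h, le_rfl, ?_, E2.on2.2.le⟩⟩
        rw [E2.on2.2]
        exact (lt_right E.on1 on2 hlt ltt (E.dom ltt.le h)).le)
  rw [Finset.mem_filter] at hw
  obtain ⟨mw, a1, a2, a3, a4, a5⟩ := hw
  refine ⟨e2, w, he, m2, st, hlt, ?_, mw, a1, a2, a3, a4, a5, ?_⟩
  · intro e3 h3 h4 h5
    exact hmin e3 (Finset.mem_filter.2 ⟨h3, h4, h5⟩)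
  · intro v hv b1 b2 b3 b4
    have := hwmin v (Finset.mem_filter.2 ⟨hv, b1, by linarith, by linarith, b3, b4⟩)
    linarith

lemma charged_inj (hF : ∀ e ∈ F, IsEdge W e) (hX : ∀ e ∈ F, ∀ e' ∈ F, ¬ Cross e e')
    {e e2 e' e2' : (ℝ × ℝ) × (ℝ × ℝ) × (ℝ × ℝ)} {w : ℝ × ℝ} (c : Charged W F e e2 w)
    (c' : Charged W F e' e2' w)
    (h : (w.2 < f e2.1 w.1 ∧ w.2 < f e2'.1 w.1) ∨ (f e.1 w.1 < w.2 ∧ f e'.1 w.1 < w.2)) :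
    e = e' := by
  wlog hpp : e.2.1.1 ≤ e'.2.1.1 generalizing e e2 e' e2'
  · refine (this c' c ?_ (le_of_not_ge hpp)).symm
    tauto
  have E := hF e c.mem
  have E2 := hF e2 c.mem2
  have E' := hF e' c'.mem
  have E2' := hF e2' c'.mem2
  have on2 : On e2.1 e.2.1 := c.start ▸ E2.on1
  have on2' : On e2'.1 e'.2.1 := c'.start ▸ E2'.on1
  have st := c.start
  have st' := c'.start
  have g1 := c.f1
  have g2 := c.f2
  have g1' := c'.f1
  have g2' := c'.f2
  have up : f e2.1 w.1 ≤ f e'.1 w.1 → False := by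
    intro hh
    rcases h with h | h
    · linarith [h.1]
    · linarith [h.2]
  have down : f e2'.1 w.1 ≤ f e.1 w.1 → False := by
    intro hh
    rcases h with h | h
    · linarith [h.2]
    · linarith [h.1]
  by_cases hp : e.2.1 = e'.2.1
  · rcases lt_trichotomy e.1.1 e'.1.1 with hs | hs | hs
    · have k := c.next e' c'.mem hp.symm hs
      refine (up (le_right on2 (hp ▸ E'.on1) k c.ltw (E2.dom ?_ c.le2))).elim
      rw [st]; exact c.ltw.le
    · exact E.eq E' (eq_of_on E.on1 (hp ▸ E'.on1) hs) hp
    · have k := c'.next e c.mem hp hs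
      refine (down (le_right on2' (hp ▸ E.on1) k c'.ltw (E2'.dom ?_ c'.le2))).elim
      rw [st']; exact c'.ltw.le
  · exfalso
    have hout : e'.2.1.2 < f e.1 e'.2.1.1 ∨ f e2.1 e'.2.1.1 < e'.2.1.2 := by
      rcases hpp.lt_or_eq with h1 | h1
      · by_contra hcon
        push Not at hcon
        exact c.first _ E'.mem1 h1 c'.ltw hcon.1 hcon.2
      · have : e.2.1.2 ≠ e'.2.1.2 := fun h2 => hp (Prod.ext h1 h2)
        rcases lt_or_gt_of_ne this with h2 | h2
        · right; rw [← h1, ← on2.2]; exact h2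
        · left; rw [← h1, ← E.on1.2]; exact h2
    have w1 := c.le1
    have w2 := c.le2
    have w1' := c'.le1
    have w2' := c'.le2
    rcases hout with h1 | h1
    · apply down
      by_contra hcon
      push Not at hcon
      have h3 : f e2'.1 e'.2.1.1 < f e.1 e'.2.1.1 := by rw [← on2'.2]; exact h1
      obtain ⟨x, x1, x2, x3⟩ := meet c'.ltw h3 hcon
      refine hX e2' c'.mem2 e c.mem ⟨?_, x, ⟨?_, ?_⟩, ⟨?_, ?_⟩, x3⟩
      · intro h4; rw [h4] at h3; exact lt_irrefl _ h3
      · rw [st']; exact x1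
      · linarith
      · linarith
      · linarith
    · apply up
      by_contra hcon
      push Not at hcon
      have h3 : f e2.1 e'.2.1.1 < f e'.1 e'.2.1.1 := by rw [← E'.on1.2]; exact h1
      obtain ⟨x, x1, x2, x3⟩ := meet c'.ltw h3 hcon
      refine hX e2 c.mem2 e' c'.mem ⟨?_, x, ⟨?_, ?_⟩, ⟨?_, ?_⟩, x3⟩
      · intro h4; rw [h4] at h3; exact lt_irrefl _ h3
      · rw [st]; linarith
      · linarith
      · linarith
      · linarith

/-- Planar graphs with monotone edges have linearly many edges. -/
lemma planar (hF : ∀ e ∈ F, IsEdge W e) (hX : ∀ e ∈ F, ∀ e' ∈ F, ¬ Cross e e') :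
    F.card ≤ 3 * W.card := by
  classical
  set T := F.filter fun e => ¬ ∃ e' ∈ F, e'.2.1 = e.2.1 ∧ e.1.1 < e'.1.1
  set A := F.filter fun e => ∃ e2 w, Charged W F e e2 w ∧ w.2 < f e2.1 w.1
  set B := F.filter fun e => ∃ e2 w, Charged W F e e2 w ∧ f e.1 w.1 < w.2
  have hsub : F ⊆ T ∪ A ∪ B := by
    intro e he
    simp only [Finset.mem_union, T, A, B, Finset.mem_filter]
    by_cases ht : ∃ e' ∈ F, e'.2.1 = e.2.1 ∧ e.1.1 < e'.1.1
    · obtain ⟨e2, w, c⟩ := exists_charged hF he ht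
      have E := hF e he
      have E2 := hF e2 c.mem2
      have on2 : On e2.1 e.2.1 := c.start ▸ E2.on1
      have := lt_right E.on1 on2 c.lt c.ltw (E.dom c.ltw.le c.le1)
      by_cases h : w.2 < f e2.1 w.1
      · exact Or.inl (Or.inr ⟨he, e2, w, c, h⟩)
      · exact Or.inr ⟨he, e2, w, c, by linarith⟩
    · exact Or.inl (Or.inl ⟨he, ht⟩)
  have hT : T.card ≤ W.card := by
    apply Finset.card_le_card_of_injOn (fun e => e.2.1)
    · intro e he
      exact (hF e (Finset.mem_filter.1 he).1).mem1
    · intro e he e' he' hp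
      simp only [T, Finset.coe_filter, Set.mem_ofPred_eq] at he he' hp
      have E := hF e he.1
      have E' := hF e' he'.1
      have h1 : ¬ e.1.1 < e'.1.1 := fun h => he.2 ⟨e', he'.1, hp.symm, h⟩
      have h2 : ¬ e'.1.1 < e.1.1 := fun h => he'.2 ⟨e, he.1, hp, h⟩
      exact E.eq E' (eq_of_on E.on1 (hp ▸ E'.on1) (by linarith)) hp
  have hA : A.card ≤ W.card := by
    apply Finset.card_le_card_of_forall_subsingleton
      (fun e w => ∃ e2, Charged W F e e2 w ∧ w.2 < f e2.1 w.1)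
    · intro e he
      obtain ⟨-, e2, w, c, h⟩ := Finset.mem_filter.1 he
      exact ⟨w, c.memw, e2, c, h⟩
    · rintro w - e ⟨-, e2, c, h⟩ e' ⟨-, e2', c', h'⟩
      exact charged_inj hF hX c c' (Or.inl ⟨h, h'⟩)
  have hB : B.card ≤ W.card := by
    apply Finset.card_le_card_of_forall_subsingleton
      (fun e w => ∃ e2, Charged W F e e2 w ∧ f e.1 w.1 < w.2)
    · intro e he
      obtain ⟨-, e2, w, c, h⟩ := Finset.mem_filter.1 he
      exact ⟨w, c.memw, e2, c, h⟩
    · rintro w - e ⟨-, e2, c, h⟩ e' ⟨-, e2', c', h'⟩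
      exact charged_inj hF hX c c' (Or.inr ⟨h, h'⟩)
  have := Finset.card_le_card hsub
  have := Finset.card_union_le (T ∪ A) B
  have := Finset.card_union_le T A
  omega

open Classical in
/-- All edges determined by points `P` and curves `S`. -/
def edges (P S : Finset (ℝ × ℝ)) : Finset ((ℝ × ℝ) × (ℝ × ℝ) × (ℝ × ℝ)) :=
  (S ×ˢ P ×ˢ P).filter (IsEdge P)

open Classical in
/-- All (ordered) crossing pairs of edges. -/
def crossings (P S : Finset (ℝ × ℝ)) :
    Finset (((ℝ × ℝ) × (ℝ × ℝ) × (ℝ × ℝ)) × ((ℝ × ℝ) × (ℝ × ℝ) × (ℝ × ℝ))) :=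
  (edges P S ×ˢ edges P S).filter fun z => Cross z.1 z.2

lemma mem_edges {P S : Finset (ℝ × ℝ)} {e : (ℝ × ℝ) × (ℝ × ℝ) × (ℝ × ℝ)} :
    e ∈ edges P S ↔ e.1 ∈ S ∧ IsEdge P e := by
  simp only [edges, Finset.mem_filter, Finset.mem_product]
  constructor
  · rintro ⟨h, h'⟩; exact ⟨h.1, h'⟩
  · rintro ⟨h, h'⟩; exact ⟨⟨h, h'.mem1, h'.mem2⟩, h'⟩

lemma mem_crossings {P S : Finset (ℝ × ℝ)}
    {z : ((ℝ × ℝ) × (ℝ × ℝ) × (ℝ × ℝ)) × ((ℝ × ℝ) × (ℝ × ℝ) × (ℝ × ℝ))} :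
    z ∈ crossings P S ↔ z.1 ∈ edges P S ∧ z.2 ∈ edges P S ∧ Cross z.1 z.2 := by
  simp only [crossings, Finset.mem_filter, Finset.mem_product, and_assoc]

lemma edge_unique {P : Finset (ℝ × ℝ)} {e e' : (ℝ × ℝ) × (ℝ × ℝ) × (ℝ × ℝ)} (h : IsEdge P e)
    (h' : IsEdge P e') (hs : e.1 = e'.1) {x : ℝ} (h1 : e.2.1.1 < x) (h2 : x < e.2.2.1)
    (h1' : e'.2.1.1 < x) (h2' : x < e'.2.2.1) : e = e' := by
  apply h.eq h' hs
  apply h.on1.eq_of_fst (hs ▸ h'.on1)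
  rcases lt_trichotomy e.2.1.1 e'.2.1.1 with h3 | h3 | h3
  · exact (h.cons _ h'.mem1 (hs ▸ h'.on1) h3 (by linarith)).elim
  · exact h3
  · exact (h'.cons _ h.mem1 (hs ▸ h.on1) h3 (by linarith)).elim

lemma card_crossings (P S : Finset (ℝ × ℝ)) : (crossings P S).card ≤ S.card ^ 2 := by
  rw [sq, ← Finset.card_product]
  apply Finset.card_le_card_of_injOn (fun z => (z.1.1, z.2.1))
  · intro z hz
    have hz := mem_crossings.1 hz
    exact Finset.mem_product.2 ⟨(mem_edges.1 hz.1).1, (mem_edges.1 hz.2.1).1⟩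
  · intro z hz y hy hzy
    obtain ⟨a1, a2, a3, x, a4, a5, a6⟩ := mem_crossings.1 hz
    obtain ⟨b1, b2, b3, x', b4, b5, b6⟩ := mem_crossings.1 hy
    have A1 := (mem_edges.1 a1).2
    have A2 := (mem_edges.1 a2).2
    have B1 := (mem_edges.1 b1).2
    have B2 := (mem_edges.1 b2).2
    simp only [Prod.mk.injEq] at hzy
    obtain ⟨e1, e2⟩ := hzy
    have hx : x = x' := by
      by_contra hne
      refine a3 (eq_of_two hne (A1.dom a4.1.le a4.2.le) (A2.dom a5.1.le a5.2.le) ?_ ?_ a6 ?_)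
      · rw [e1]; exact B1.dom b4.1.le b4.2.le
      · rw [e2]; exact B2.dom b5.1.le b5.2.le
      · rw [e1, e2]; exact b6
    subst hx
    exact Prod.ext (edge_unique A1 B1 e1 a4.1 a4.2 b4.1 b4.2)
      (edge_unique A2 B2 e2 a5.1 a5.2 b5.1 b5.2)

open Classical in
lemma cross_four {P S : Finset (ℝ × ℝ)}
    {z : ((ℝ × ℝ) × (ℝ × ℝ) × (ℝ × ℝ)) × ((ℝ × ℝ) × (ℝ × ℝ) × (ℝ × ℝ))}
    (hz : z ∈ crossings P S) :
    ({z.1.2.1, z.1.2.2, z.2.2.1, z.2.2.2} : Finset (ℝ × ℝ)).card = 4 := by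
  obtain ⟨a1, a2, a3, x, a4, a5, a6⟩ := mem_crossings.1 hz
  have A1 := (mem_edges.1 a1).2
  have A2 := (mem_edges.1 a2).2
  have key : ∀ p, On z.1.1 p → On z.2.1 p → p.1 ≠ x → False := fun p h1 h2 hne =>
    a3 (eq_of_two hne h1.1 h2.1 (A1.dom a4.1.le a4.2.le) (A2.dom a5.1.le a5.2.le)
      (by rw [← h1.2, ← h2.2]) a6)
  have n1 : z.1.2.1 ≠ z.1.2.2 := fun h => by have := A1.lt; rw [h] at this; exact lt_irrefl _ this
  have n2 : z.2.2.1 ≠ z.2.2.2 := fun h => by have := A2.lt; rw [h] at this; exact lt_irrefl _ this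
  have n3 : z.1.2.1 ≠ z.2.2.1 := fun h => key _ A1.on1 (h ▸ A2.on1) a4.1.ne
  have n4 : z.1.2.1 ≠ z.2.2.2 := fun h => key _ A1.on1 (h ▸ A2.on2) a4.1.ne
  have n5 : z.1.2.2 ≠ z.2.2.1 := fun h => key _ A1.on2 (h ▸ A2.on1) a4.2.ne'
  have n6 : z.1.2.2 ≠ z.2.2.2 := fun h => key _ A1.on2 (h ▸ A2.on2) a4.2.ne'
  rw [Finset.card_insert_of_notMem, Finset.card_insert_of_notMem, Finset.card_insert_of_notMem,
    Finset.card_singleton]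
  · simp [n2]
  · simp [n5, n6]
  · simp [n1, n3, n4]

open Classical in
lemma sub_sample (P S W : Finset (ℝ × ℝ)) (hW : W ⊆ P) :
    ((edges P S).filter fun e => ({e.2.1, e.2.2} : Finset (ℝ × ℝ)) ⊆ W).card ≤
      3 * W.card + ((crossings P S).filter fun z =>
        ({z.1.2.1, z.1.2.2, z.2.2.1, z.2.2.2} : Finset (ℝ × ℝ)) ⊆ W).card := by
  set F := (edges P S).filter fun e => ({e.2.1, e.2.2} : Finset (ℝ × ℝ)) ⊆ W with hF
  set X := (crossings P S).filter fun z =>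
        ({z.1.2.1, z.1.2.2, z.2.2.1, z.2.2.2} : Finset (ℝ × ℝ)) ⊆ W with hX
  set G := F.filter fun e => ∀ e' ∈ F, ¬ Cross e e' with hG
  have h1 : G.card ≤ 3 * W.card := by
    apply planar (F := G)
    · intro e he
      have he := (Finset.mem_filter.1 (Finset.mem_filter.1 he).1)
      have E := (mem_edges.1 he.1).2
      have h2 := he.2
      simp only [Finset.insert_subset_iff, Finset.singleton_subset_iff] at h2
      exact ⟨E.on1, E.on2, E.lt, h2.1, h2.2, fun w hw => E.cons w (hW hw)⟩
    · intro e he e' he'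
      exact (Finset.mem_filter.1 he).2 e' (Finset.mem_filter.1 he').1
  have h2 : F ⊆ G ∪ X.image Prod.fst := by
    intro e he
    by_cases h : ∀ e' ∈ F, ¬ Cross e e'
    · exact Finset.mem_union_left _ (Finset.mem_filter.2 ⟨he, h⟩)
    · push Not at h
      obtain ⟨e', he', hc⟩ := h
      apply Finset.mem_union_right
      refine Finset.mem_image.2 ⟨(e, e'), Finset.mem_filter.2 ⟨mem_crossings.2
        ⟨(Finset.mem_filter.1 he).1, (Finset.mem_filter.1 he').1, hc⟩, ?_⟩, rfl⟩
      have a := (Finset.mem_filter.1 he).2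
      have b := (Finset.mem_filter.1 he').2
      simp only [Finset.insert_subset_iff, Finset.singleton_subset_iff] at a b ⊢
      exact ⟨a.1, a.2, b.1, b.2⟩
  have h3 := Finset.card_le_card h2
  have h4 := Finset.card_union_le G (X.image Prod.fst)
  have h5 : (X.image Prod.fst).card ≤ X.card := Finset.card_image_le
  omega

open Classical in
lemma count_zero {α : Type*} [Fintype α] (M : ℕ) [NeZero M] (A : Finset α) :
    (Finset.univ.filter fun c : α → Fin M => ∀ a ∈ A, c a = 0).card * M ^ A.card =
      M ^ Fintype.card α := by
  have : (Finset.univ.filter fun c : α → Fin M => ∀ a ∈ A, c a = 0) =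
      Fintype.piFinset fun a => if a ∈ A then {0} else Finset.univ := by
    ext c
    simp only [Finset.mem_filter, Finset.mem_univ, true_and, Fintype.mem_piFinset]
    constructor
    · intro h a
      by_cases ha : a ∈ A
      · simp [ha, h a ha]
      · simp [ha]
    · intro h a ha
      simpa [ha] using h a
  rw [this, Fintype.card_piFinset]
  have h2 : ∀ a, (if a ∈ A then ({0} : Finset (Fin M)) else Finset.univ).card =
      if a ∈ A then 1 else M := by
    intro a; split_ifs <;> simp
  simp only [h2]
  have h3 : M ^ A.card = ∏ a : α, if a ∈ A then M else 1 := by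
    rw [Finset.prod_ite_mem]; simp
  rw [h3, ← Finset.prod_mul_distrib]
  have : ∀ a, ((if a ∈ A then 1 else M) * if a ∈ A then M else 1) = M := by
    intro a; split_ifs <;> simp
  simp [this]

open Classical in
/-- Vertices sampled by a colouring. -/
def sample (P : Finset (ℝ × ℝ)) (M : ℕ) [NeZero M] (c : P → Fin M) : Finset (ℝ × ℝ) :=
  P.filter fun p => ∀ h : p ∈ P, c ⟨p, h⟩ = 0

open Classical in
lemma sum_sample {τ : Type*} (P : Finset (ℝ × ℝ)) (M : ℕ) [NeZero M] (T : Finset τ)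
    (g : τ → Finset (ℝ × ℝ)) (j : ℕ) (hg : ∀ t ∈ T, g t ⊆ P) (hj : ∀ t ∈ T, (g t).card = j) :
    (∑ c : P → Fin M, (T.filter fun t => g t ⊆ sample P M c).card) * M ^ j =
      T.card * M ^ P.card := by
  simp only [Finset.card_filter]
  rw [Finset.sum_comm, Finset.sum_mul, Finset.card_eq_sum_ones, Finset.sum_mul]
  apply Finset.sum_congr rfl
  intro t ht
  rw [← Finset.card_filter]
  have := count_zero M ((g t).subtype (· ∈ P))
  rw [Finset.card_subtype, Finset.filter_true_of_mem (fun x hx => hg t ht hx), hj t ht,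
    Fintype.card_coe] at this
  rw [one_mul, ← this]
  congr 2
  ext c
  simp only [Finset.mem_filter, Finset.mem_univ, true_and, Finset.mem_subtype, sample,
    Finset.subset_iff]
  constructor
  · intro h a ha
    exact (h ha).2 a.2
  · intro h a ha
    exact ⟨hg t ht ha, fun hP => h ⟨a, hP⟩ ha⟩

open Classical in
lemma crossing_ineq (P S : Finset (ℝ × ℝ)) (M : ℕ) (hM : 0 < M) :
    (edges P S).card * M ^ 2 ≤ 3 * P.card * M ^ 3 + (crossings P S).card := by
  have : NeZero M := ⟨hM.ne'⟩
  have h1 := sum_sample P M (edges P S) (fun e => {e.2.1, e.2.2}) 2 (by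
    intro e he
    have E := (mem_edges.1 he).2
    simp only [Finset.insert_subset_iff, Finset.singleton_subset_iff]
    exact ⟨E.mem1, E.mem2⟩) (by
    intro e he
    have E := (mem_edges.1 he).2
    apply Finset.card_pair
    intro h
    have := E.lt
    rw [h] at this
    exact lt_irrefl _ this)
  have h2 := sum_sample P M P (fun e => {e}) 1 (by simp) (by simp)
  have h3 := sum_sample P M (crossings P S)
    (fun z => {z.1.2.1, z.1.2.2, z.2.2.1, z.2.2.2}) 4 (by
    intro z hz
    obtain ⟨a1, a2, -⟩ := mem_crossings.1 hz
    have A1 := (mem_edges.1 a1).2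
    have A2 := (mem_edges.1 a2).2
    simp only [Finset.insert_subset_iff, Finset.singleton_subset_iff]
    exact ⟨A1.mem1, A1.mem2, A2.mem1, A2.mem2⟩) (fun z hz => cross_four hz)
  have h4 : ∀ c : P → Fin M, (P.filter fun t => {t} ⊆ sample P M c) = sample P M c := by
    intro c
    ext p
    simp only [Finset.mem_filter, Finset.singleton_subset_iff]
    exact ⟨fun h => h.2, fun h => ⟨(Finset.mem_filter.1 h).1, h⟩⟩
  simp only [h4] at h2
  have h5 := Finset.sum_le_sum fun (c : P → Fin M) (_ : c ∈ Finset.univ) =>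
    sub_sample P S (sample P M c) (Finset.filter_subset _ _)
  rw [Finset.sum_add_distrib, ← Finset.mul_sum] at h5
  have hpos : 0 < M ^ P.card := by positivity
  set a := ∑ c : P → Fin M, ((edges P S).filter fun e =>
    ({e.2.1, e.2.2} : Finset (ℝ × ℝ)) ⊆ sample P M c).card
  set b := ∑ c : P → Fin M, (sample P M c).card
  set d := ∑ c : P → Fin M, ((crossings P S).filter fun z =>
    ({z.1.2.1, z.1.2.2, z.2.2.1, z.2.2.2} : Finset (ℝ × ℝ)) ⊆ sample P M c).card
  apply Nat.le_of_mul_le_mul_right _ hpos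
  calc (edges P S).card * M ^ 2 * M ^ P.card = ((edges P S).card * M ^ P.card) * M ^ 2 := by ring
    _ = a * M ^ 4 := by rw [← h1]; ring
    _ ≤ (3 * b + d) * M ^ 4 := Nat.mul_le_mul_right _ h5
    _ = 3 * (b * M ^ 1) * M ^ 3 + d * M ^ 4 := by ring
    _ = _ := by rw [h2, h3]; ring

open Classical in
lemma card_edges (P S : Finset (ℝ × ℝ)) (k : ℕ)
    (hk : ∀ p ∈ P, k ≤ (S.filter fun s => On s p).card) :
    P.card * k ≤ (edges P S).card + S.card := by
  set I := (P ×ˢ S).filter fun z => On z.2 z.1 with hI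
  have h1 : P.card * k ≤ I.card := by
    rw [hI, Finset.card_filter, Finset.sum_product, ← smul_eq_mul, ← Finset.sum_const]
    apply Finset.sum_le_sum
    intro p hp
    rw [← Finset.card_filter]
    exact hk p hp
  set R := I.filter fun z => ∀ w ∈ P, On z.2 w → w.1 ≤ z.1.1 with hR
  have h2 : I ⊆ (edges P S).image (fun e => (e.2.1, e.1)) ∪ R := by
    rintro ⟨p, s⟩ hz
    by_cases h : ∀ w ∈ P, On s w → w.1 ≤ p.1
    · exact Finset.mem_union_right _ (Finset.mem_filter.2 ⟨hz, h⟩)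
    · apply Finset.mem_union_left
      simp only [hI, Finset.mem_filter, Finset.mem_product] at hz
      push Not at h
      obtain ⟨w, h1, h2, h3⟩ := h
      obtain ⟨q, hq, hmin⟩ := Finset.exists_min_image
        (P.filter fun w => On s w ∧ p.1 < w.1) (fun w => w.1)
        ⟨w, Finset.mem_filter.2 ⟨h1, h2, h3⟩⟩
      rw [Finset.mem_filter] at hq
      refine Finset.mem_image.2 ⟨(s, p, q), mem_edges.2 ⟨hz.1.2, hz.2, hq.2.1, hq.2.2, hz.1.1,
        hq.1, ?_⟩, rfl⟩
      intro v hv h4 h5 h6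
      have := hmin v (Finset.mem_filter.2 ⟨hv, h4, h5⟩)
      simp only at h6
      linarith
  have h3 : R.card ≤ S.card := by
    apply Finset.card_le_card_of_injOn (fun z => z.2)
    · intro z hz
      have := (Finset.mem_filter.1 (Finset.mem_filter.1 hz).1).1
      exact (Finset.mem_product.1 this).2
    · intro z hz y hy h
      simp only at h
      obtain ⟨a1, a2⟩ := Finset.mem_filter.1 hz
      obtain ⟨b1, b2⟩ := Finset.mem_filter.1 hy
      rw [hI, Finset.mem_filter, Finset.mem_product] at a1 b1
      refine Prod.ext (a1.2.eq_of_fst (h ▸ b1.2) (le_antisymm ?_ ?_)) h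
      · exact b2 _ a1.1.1 (h ▸ a1.2)
      · exact a2 _ b1.1.1 (h ▸ b1.2)
  have h4 := Finset.card_le_card h2
  have h5 := Finset.card_union_le ((edges P S).image (fun e => (e.2.1, e.1))) R
  have h6 : ((edges P S).image (fun e => (e.2.1, e.1))).card ≤ (edges P S).card :=
    Finset.card_image_le
  omega

open Classical in
/-- Szemerédi-Trotter for unit semicircles. -/
lemma szt (P S : Finset (ℝ × ℝ)) (k : ℕ)
    (hk : ∀ p ∈ P, k ≤ (S.filter fun s => On s p).card) :
    k < 12 ∨ P.card * k ≤ 2 * S.card ∨ P.card * k ^ 3 ≤ 2304 * S.card ^ 2 := by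
  by_cases h0 : k < 12
  · exact Or.inl h0
  by_cases h1 : P.card * k ≤ 2 * S.card
  · exact Or.inr (Or.inl h1)
  right; right
  have h2 := card_edges P S k hk
  have h3 := crossing_ineq P S (k / 12) (by omega)
  have h4 := card_crossings P S
  set M := k / 12
  set E := (edges P S).card
  set n := P.card
  have hM1 : 12 * M ≤ k := by omega
  have hM2 : k ≤ 24 * M := by omega
  have h5 : n * k ≤ 2 * E := by omega
  have h6 : 12 * n * M ^ 3 ≤ 2 * E * M ^ 2 := by
    calc 12 * n * M ^ 3 = n * (12 * M) * M ^ 2 := by ring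
      _ ≤ n * k * M ^ 2 := by gcongr
      _ ≤ _ := by gcongr
  have h7 : E * M ^ 2 ≤ 2 * S.card ^ 2 := by nlinarith
  calc n * k ^ 3 = (n * k) * k ^ 2 := by ring
    _ ≤ (2 * E) * (24 * M) ^ 2 := by gcongr
    _ = 1152 * (E * M ^ 2) := by ring
    _ ≤ 1152 * (2 * S.card ^ 2) := by gcongr
    _ = _ := by ring

open Classical in
/-- Number of representations `x = s + a`. -/
def dg (A S : Finset (ℝ × ℝ)) (x : ℝ × ℝ) : ℕ := (A.filter fun a => x - a ∈ S).card

open Classical in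
lemma dg_le_on {A S : Finset (ℝ × ℝ)} (hA : ∀ a ∈ A, a.1 ^ 2 + a.2 ^ 2 = 1 ∧ 0 ≤ a.2)
    (x : ℝ × ℝ) : dg A S x ≤ (S.filter fun s => On s x).card := by
  apply Finset.card_le_card_of_injOn (fun a => x - a)
  · intro a ha
    obtain ⟨h1, h2⟩ := Finset.mem_filter.1 ha
    obtain ⟨h3, h4⟩ := hA a h1
    refine Finset.mem_filter.2 ⟨h2, ⟨?_, ?_⟩, ?_⟩
    · simp only [Prod.fst_sub]; nlinarith
    · simp only [Prod.fst_sub]; nlinarith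
    · simp only [f, Prod.fst_sub, Prod.snd_sub, sub_sub_cancel]
      have : 1 - a.1 ^ 2 = a.2 ^ 2 := by linarith
      rw [this, Real.sqrt_sq h4]; ring
  · intro a _ b _ h
    simpa using h

open Classical in
lemma sum_dg (A S Y : Finset (ℝ × ℝ)) : ∑ x ∈ Y, dg A S x ≤ S.card * A.card := by
  have h : ∑ x ∈ Y, dg A S x = ((Y ×ˢ A).filter fun z => z.1 - z.2 ∈ S).card := by
    rw [Finset.card_filter, Finset.sum_product]
    apply Finset.sum_congr rfl
    intro x _
    rw [dg, Finset.card_filter]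
  rw [h, ← Finset.card_product]
  apply Finset.card_le_card_of_injOn (fun z => (z.1 - z.2, z.2))
  · intro z hz
    obtain ⟨h1, h2⟩ := Finset.mem_filter.1 hz
    exact Finset.mem_product.2 ⟨h2, (Finset.mem_product.1 h1).2⟩
  · intro z _ y _ h
    simp only [Prod.mk.injEq] at h
    obtain ⟨h1, h2⟩ := h
    rw [h2] at h1
    exact Prod.ext (by simpa using h1) h2

open Classical in
lemma rich_bound {A S : Finset (ℝ × ℝ)} (hA : ∀ a ∈ A, a.1 ^ 2 + a.2 ^ 2 = 1 ∧ 0 ≤ a.2)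
    {N : ℕ} (hN : A.card ≤ N) (hS : S.card ≤ N ^ 2) (Y : Finset (ℝ × ℝ)) (k : ℕ) :
    (k ^ 2 * (Y.filter fun x => k ≤ dg A S x).card) ^ 2 ≤ 2304 * N ^ 7 := by
  set P := Y.filter fun x => k ≤ dg A S x with hP
  have h1 : P.card * k ≤ N ^ 3 := by
    calc P.card * k = ∑ x ∈ P, k := by simp
      _ ≤ ∑ x ∈ P, dg A S x := Finset.sum_le_sum fun x hx => (Finset.mem_filter.1 hx).2
      _ ≤ S.card * A.card := sum_dg A S P
      _ ≤ N ^ 2 * N := by gcongr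
      _ = N ^ 3 := by ring
  have h67 : N ^ 6 ≤ N ^ 7 := by
    rcases Nat.eq_zero_or_pos N with h | h
    · simp [h]
    · exact Nat.pow_le_pow_right h (by norm_num)
  rcases P.eq_empty_or_nonempty with he | ⟨x, hx⟩
  · simp [he]
  have hkN : k ≤ N := by
    calc k ≤ dg A S x := (Finset.mem_filter.1 hx).2
      _ ≤ A.card := Finset.card_filter_le _ _
      _ ≤ N := hN
  rcases szt P S k (fun p hp => (Finset.mem_filter.1 hp).2.trans (dg_le_on hA p)) with h | h | h
  · calc (k ^ 2 * P.card) ^ 2 = (k * (P.card * k)) ^ 2 := by ring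
      _ ≤ (12 * N ^ 3) ^ 2 := by gcongr
      _ = 144 * N ^ 6 := by ring
      _ ≤ 2304 * N ^ 7 := by gcongr; norm_num
  · calc (k ^ 2 * P.card) ^ 2 = (k * (P.card * k)) ^ 2 := by ring
      _ ≤ (N * (2 * N ^ 2)) ^ 2 :=
        Nat.pow_le_pow_left (Nat.mul_le_mul hkN
          (h.trans (Nat.mul_le_mul_left _ hS))) 2
      _ = 4 * N ^ 6 := by ring
      _ ≤ 2304 * N ^ 7 := by gcongr; norm_num
  · calc (k ^ 2 * P.card) ^ 2 = (P.card * k) * (P.card * k ^ 3) := by ring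
      _ ≤ N ^ 3 * (2304 * (N ^ 2) ^ 2) :=
        Nat.mul_le_mul h1 (h.trans (Nat.mul_le_mul_left _ (Nat.pow_le_pow_left hS 2)))
      _ = 2304 * N ^ 7 := by ring

lemma sq_le_dyadic {d N : ℕ} (h : d ≤ N) :
    d ^ 2 ≤ ∑ j ∈ Finset.range (Nat.log 2 N + 1), 4 * (if 2 ^ j ≤ d then (2 ^ j) ^ 2 else 0) := by
  rcases Nat.eq_zero_or_pos d with h0 | h0
  · simp [h0]
  have hj : Nat.log 2 d ∈ Finset.range (Nat.log 2 N + 1) :=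
    Finset.mem_range.2 (Nat.lt_succ_of_le (Nat.log_mono_right h))
  refine le_trans ?_ (Finset.single_le_sum
    (f := fun j => 4 * (if 2 ^ j ≤ d then (2 ^ j) ^ 2 else 0)) (fun _ _ => Nat.zero_le _) hj)
  have h1 : 2 ^ Nat.log 2 d ≤ d := Nat.pow_log_le_self 2 h0.ne'
  have h2 : d < 2 ^ (Nat.log 2 d + 1) := Nat.lt_pow_succ_log_self (by norm_num) d
  simp only [h1, if_true]
  rw [pow_succ] at h2
  nlinarith

open Classical in
lemma sum_sq_dg {A S : Finset (ℝ × ℝ)} (hA : ∀ a ∈ A, a.1 ^ 2 + a.2 ^ 2 = 1 ∧ 0 ≤ a.2)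
    {N : ℕ} (hN : A.card ≤ N) (hS : S.card ≤ N ^ 2) (Y : Finset (ℝ × ℝ)) :
    ((∑ x ∈ Y, dg A S x ^ 2 : ℕ) : ℝ) ≤ 192 * ((Nat.log 2 N + 1 : ℕ) : ℝ) * √((N : ℝ) ^ 7) := by
  have h1 : ∑ x ∈ Y, dg A S x ^ 2 ≤ ∑ j ∈ Finset.range (Nat.log 2 N + 1),
      4 * ((2 ^ j) ^ 2 * (Y.filter fun x => 2 ^ j ≤ dg A S x).card) := by
    calc ∑ x ∈ Y, dg A S x ^ 2 ≤ ∑ x ∈ Y, ∑ j ∈ Finset.range (Nat.log 2 N + 1),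
          4 * (if 2 ^ j ≤ dg A S x then (2 ^ j) ^ 2 else 0) :=
        Finset.sum_le_sum fun x _ => sq_le_dyadic ((Finset.card_filter_le _ _).trans hN)
      _ = _ := by
        rw [Finset.sum_comm]
        apply Finset.sum_congr rfl
        intro j _
        rw [← Finset.mul_sum, ← Finset.sum_filter, Finset.sum_const, smul_eq_mul]
        ring
  have h2 : ∀ j, (((2 ^ j) ^ 2 * (Y.filter fun x => 2 ^ j ≤ dg A S x).card : ℕ) : ℝ) ≤
      48 * √((N : ℝ) ^ 7) := by
    intro j
    have := rich_bound hA hN hS Y (2 ^ j)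
    set m := (2 ^ j) ^ 2 * (Y.filter fun x => 2 ^ j ≤ dg A S x).card
    have h3 : ((m : ℝ)) ^ 2 ≤ 2304 * (N : ℝ) ^ 7 := by exact_mod_cast this
    apply le_of_sq_le_sq _ (by positivity)
    rw [mul_pow, Real.sq_sqrt (by positivity)]
    linarith
  calc ((∑ x ∈ Y, dg A S x ^ 2 : ℕ) : ℝ) ≤ ((∑ j ∈ Finset.range (Nat.log 2 N + 1),
      4 * ((2 ^ j) ^ 2 * (Y.filter fun x => 2 ^ j ≤ dg A S x).card) : ℕ) : ℝ) := by
        exact_mod_cast h1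
    _ = ∑ j ∈ Finset.range (Nat.log 2 N + 1),
      4 * (((2 ^ j) ^ 2 * (Y.filter fun x => 2 ^ j ≤ dg A S x).card : ℕ) : ℝ) := by
        push_cast; rfl
    _ ≤ ∑ j ∈ Finset.range (Nat.log 2 N + 1), 4 * (48 * √((N : ℝ) ^ 7)) :=
        Finset.sum_le_sum fun j _ => by linarith [h2 j]
    _ = _ := by
        rw [Finset.sum_const, Finset.card_range, nsmul_eq_mul]; ring

/-- A nonzero vector is a sum of two unit vectors in at most one way up to order. -/
lemma two_reps {b c b' c' : ℝ × ℝ} (hb : b.1 ^ 2 + b.2 ^ 2 = 1) (hc : c.1 ^ 2 + c.2 ^ 2 = 1)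
    (hb' : b'.1 ^ 2 + b'.2 ^ 2 = 1) (hc' : c'.1 ^ 2 + c'.2 ^ 2 = 1) (h : b + c = b' + c')
    (h0 : b + c ≠ 0) : b' = b ∨ b' = c := by
  obtain ⟨b1, b2⟩ := b
  obtain ⟨c1, c2⟩ := c
  obtain ⟨d1, d2⟩ := b'
  obtain ⟨e1, e2⟩ := c'
  simp only [Prod.mk_add_mk, Prod.mk.injEq, ne_eq, Prod.mk_eq_zero] at *
  obtain ⟨k1, k2⟩ := h
  set s := b1 + c1 with hs
  set t := b2 + c2 with ht
  have hc1 : c1 = s - b1 := by linarith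
  have hc2 : c2 = t - b2 := by linarith
  have he1 : e1 = s - d1 := by linarith
  have he2 : e2 = t - d2 := by linarith
  have hpos : 0 < s ^ 2 + t ^ 2 := by
    by_contra hcon
    have : s ^ 2 + t ^ 2 = 0 := le_antisymm (not_lt.1 hcon) (by positivity)
    have q1 : s = 0 := by nlinarith
    have q2 : t = 0 := by nlinarith
    exact h0 ⟨q1, q2⟩
  clear_value s t
  rw [hc1, hc2] at hc
  rw [he1, he2] at hc'
  have D1 : 2 * (b1 * s + b2 * t) = s ^ 2 + t ^ 2 := by nlinarith
  have D2 : 2 * (d1 * s + d2 * t) = s ^ 2 + t ^ 2 := by nlinarith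
  have T : (b1 * t - b2 * s) ^ 2 = (d1 * t - d2 * s) ^ 2 := by
    have e1 : (b1 * t - b2 * s) ^ 2 + (b1 * s + b2 * t) ^ 2 =
      (b1 ^ 2 + b2 ^ 2) * (s ^ 2 + t ^ 2) := by ring
    have e2 : (d1 * t - d2 * s) ^ 2 + (d1 * s + d2 * t) ^ 2 =
      (d1 ^ 2 + d2 ^ 2) * (s ^ 2 + t ^ 2) := by ring
    have e3 : b1 * s + b2 * t = d1 * s + d2 * t := by linarith
    rw [hb, e3] at e1
    rw [hb'] at e2
    linarith
  have fin : ∀ u v : ℝ, u * s + v * t = 0 → u * t - v * s = 0 → u = 0 ∧ v = 0 := by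
    intro u v h1 h2
    have : u * (s ^ 2 + t ^ 2) = 0 := by
      have : u * (s ^ 2 + t ^ 2) = (u * s + v * t) * s + (u * t - v * s) * t := by ring
      rw [this, h1, h2]; ring
    have h3 : v * (s ^ 2 + t ^ 2) = 0 := by
      have : v * (s ^ 2 + t ^ 2) = (u * s + v * t) * t - (u * t - v * s) * s := by ring
      rw [this, h1, h2]; ring
    exact ⟨(mul_eq_zero.1 this).resolve_right hpos.ne', (mul_eq_zero.1 h3).resolve_right hpos.ne'⟩
  rcases sq_eq_sq_iff_eq_or_eq_neg.1 T with hT | hT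
  · left
    obtain ⟨q1, q2⟩ := fin (d1 - b1) (d2 - b2) (by linarith) (by linarith)
    exact ⟨by linarith, by linarith⟩
  · right
    obtain ⟨q1, q2⟩ := fin (d1 - (s - b1)) (d2 - (t - b2)) (by linarith) (by linarith)
    exact ⟨by linarith, by linarith⟩

open Classical in
lemma reps_le (L : Finset (ℝ × ℝ)) (hL : ∀ a ∈ L, a.1 ^ 2 + a.2 ^ 2 = 1) (s : ℝ × ℝ) :
    ((L ×ˢ L).filter fun z => z.1 + z.2 = s).card ≤
      2 * (if s ∈ (L ×ˢ L).image (fun z => z.1 + z.2) then 1 else 0) +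
        L.card * (if s = 0 then 1 else 0) := by
  by_cases h0 : s = 0
  · have : ((L ×ˢ L).filter fun z => z.1 + z.2 = s).card ≤ L.card := by
      apply Finset.card_le_card_of_injOn (fun z => z.1)
      · intro z hz
        exact (Finset.mem_product.1 (Finset.mem_filter.1 hz).1).1
      · intro z hz y hy h
        have a := (Finset.mem_filter.1 hz).2
        have b := (Finset.mem_filter.1 hy).2
        simp only at h
        refine Prod.ext h ?_
        rw [h, ← b] at a
        simpa using a
    simp only [h0, if_true] at this ⊢
    omega
  · simp only [h0, if_false]
    by_cases hs : s ∈ (L ×ˢ L).image (fun z => z.1 + z.2)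
    · simp only [hs, if_true]
      obtain ⟨⟨b, c⟩, hz, h⟩ := Finset.mem_image.1 hs
      simp only [Finset.mem_product] at hz h
      have : ((L ×ˢ L).filter fun z => z.1 + z.2 = s) ⊆ {(b, c), (c, b)} := by
        rintro ⟨b', c'⟩ hz'
        simp only [Finset.mem_filter, Finset.mem_product] at hz'
        obtain ⟨⟨h1, h2⟩, h3⟩ := hz'
        have h4 : b + c = b' + c' := by rw [h, h3]
        simp only [Finset.mem_insert, Finset.mem_singleton, Prod.mk.injEq]
        rcases two_reps (hL _ hz.1) (hL _ hz.2) (hL _ h1) (hL _ h2) h4 (by rwa [h]) with h5 | h5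
        · left
          refine ⟨h5, ?_⟩
          rw [h5] at h4
          exact (add_left_cancel h4).symm
        · right
          refine ⟨h5, ?_⟩
          rw [h5, add_comm] at h4
          exact (add_left_cancel h4).symm
      exact (Finset.card_le_card this).trans (Finset.card_le_two)
    · have : ((L ×ˢ L).filter fun z => z.1 + z.2 = s) = ∅ := by
        apply Finset.filter_eq_empty_iff.2
        intro z hz h
        exact hs (Finset.mem_image.2 ⟨z, hz, h⟩)
      simp [this]

open Classical in
lemma triple_le (L : Finset (ℝ × ℝ)) (hL : ∀ a ∈ L, a.1 ^ 2 + a.2 ^ 2 = 1) (x : ℝ × ℝ) :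
    ((L ×ˢ L ×ˢ L).filter fun z => z.1 + (z.2.1 + z.2.2) = x).card ≤
      2 * dg L ((L ×ˢ L).image (fun z => z.1 + z.2)) x + L.card * (if x ∈ L then 1 else 0) := by
  have h1 : ((L ×ˢ L ×ˢ L).filter fun z => z.1 + (z.2.1 + z.2.2) = x).card =
      ∑ a ∈ L, ((L ×ˢ L).filter fun z => z.1 + z.2 = x - a).card := by
    rw [Finset.card_filter, Finset.sum_product]
    apply Finset.sum_congr rfl
    intro a _
    rw [Finset.card_filter]
    apply Finset.sum_congr rfl
    intro z _
    congr 1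
    rw [eq_iff_iff, eq_sub_iff_add_eq, add_comm]
  rw [h1]
  refine (Finset.sum_le_sum fun a _ => reps_le L hL (x - a)).trans ?_
  rw [Finset.sum_add_distrib, ← Finset.mul_sum, ← Finset.mul_sum, dg, Finset.card_filter]
  gcongr
  simp only [sub_eq_zero]
  rw [Finset.sum_ite_eq]

open Classical in
lemma sum_sq_dg_full {L S : Finset (ℝ × ℝ)} (hL : ∀ a ∈ L, a.1 ^ 2 + a.2 ^ 2 = 1)
    {N : ℕ} (hN : L.card ≤ N) (hS : S.card ≤ N ^ 2) (Y : Finset (ℝ × ℝ)) :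
    ((∑ x ∈ Y, dg L S x ^ 2 : ℕ) : ℝ) ≤ 768 * ((Nat.log 2 N + 1 : ℕ) : ℝ) * √((N : ℝ) ^ 7) := by
  set U := L.filter fun a => 0 ≤ a.2
  set D := (L.filter fun a => ¬ 0 ≤ a.2).image Neg.neg
  have hU := sum_sq_dg (A := U) (S := S) (N := N) (fun a ha =>
    ⟨hL a (Finset.mem_filter.1 ha).1, (Finset.mem_filter.1 ha).2⟩)
    ((Finset.card_filter_le _ _).trans hN) hS Y
  have hD := sum_sq_dg (A := D) (S := S.image Neg.neg) (N := N) (by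
    intro a ha
    obtain ⟨b, hb, rfl⟩ := Finset.mem_image.1 ha
    obtain ⟨h1, h2⟩ := Finset.mem_filter.1 hb
    have := hL b h1
    simp only [Prod.fst_neg, Prod.snd_neg]
    exact ⟨by nlinarith, by linarith⟩)
    (Finset.card_image_le.trans ((Finset.card_filter_le _ _).trans hN))
    (Finset.card_image_le.trans hS) (Y.image Neg.neg)
  rw [Finset.sum_image (fun a _ b _ h => neg_injective h)] at hD
  have hsplit : ∀ x, dg L S x ≤ dg U S x + dg D (S.image Neg.neg) (-x) := by
    intro x
    have h1 : dg D (S.image Neg.neg) (-x) = dg (L.filter fun a => ¬ 0 ≤ a.2) S x := by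
      unfold dg
      simp only [D]
      rw [Finset.filter_image, Finset.card_image_of_injective _ neg_injective]
      congr 1
      ext a
      simp only [Finset.mem_filter, and_congr_right_iff]
      intro _
      have : -x - -a = -(x - a) := by abel
      rw [this, Finset.mem_image]
      constructor
      · rintro ⟨b, hb, h⟩
        rwa [← neg_injective h]
      · intro h
        exact ⟨_, h, rfl⟩
    rw [h1]
    unfold dg
    refine (Finset.card_le_card ?_).trans (Finset.card_union_le _ _)
    intro a ha
    obtain ⟨h2, h3⟩ := Finset.mem_filter.1 ha
    simp only [Finset.mem_union, Finset.mem_filter, U]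
    tauto
  have h2 : ∑ x ∈ Y, dg L S x ^ 2 ≤
      2 * ∑ x ∈ Y, dg U S x ^ 2 + 2 * ∑ x ∈ Y, dg D (S.image Neg.neg) (-x) ^ 2 := by
    rw [Finset.mul_sum, Finset.mul_sum, ← Finset.sum_add_distrib]
    apply Finset.sum_le_sum
    intro x _
    have := hsplit x
    calc dg L S x ^ 2 ≤ (dg U S x + dg D (S.image Neg.neg) (-x)) ^ 2 := by gcongr
      _ ≤ _ := by zify; nlinarith [sq_nonneg ((dg U S x : ℤ) - dg D (S.image Neg.neg) (-x))]
  have h3 : ((∑ x ∈ Y, dg L S x ^ 2 : ℕ) : ℝ) ≤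
      2 * ((∑ x ∈ Y, dg U S x ^ 2 : ℕ) : ℝ) +
      2 * ((∑ x ∈ Y, dg D (S.image Neg.neg) (-x) ^ 2 : ℕ) : ℝ) := by
    exact_mod_cast h2
  linarith

open Classical in
lemma triple_energy (L : Finset (ℝ × ℝ)) (hL : ∀ a ∈ L, a.1 ^ 2 + a.2 ^ 2 = 1) :
    ((((L ×ˢ L ×ˢ L) ×ˢ (L ×ˢ L ×ˢ L)).filter fun z =>
      z.1.1 + (z.1.2.1 + z.1.2.2) = z.2.1 + (z.2.2.1 + z.2.2.2)).card : ℝ) ≤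
      6146 * ((Nat.log 2 L.card + 1 : ℕ) : ℝ) * √((L.card : ℝ) ^ 7) := by
  set N := L.card with hN
  set Q := L ×ˢ L ×ˢ L with hQ
  set S := (L ×ˢ L).image (fun z => z.1 + z.2) with hS
  set Y := Q.image fun z => z.1 + (z.2.1 + z.2.2) with hY
  set Z := (Q ×ˢ Q).filter fun z =>
      z.1.1 + (z.1.2.1 + z.1.2.2) = z.2.1 + (z.2.2.1 + z.2.2.2) with hZ
  have hScard : S.card ≤ N ^ 2 := by
    refine Finset.card_image_le.trans ?_
    rw [Finset.card_product, sq]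
  have h1 : Z.card ≤ ∑ x ∈ Y, (Q.filter fun z => z.1 + (z.2.1 + z.2.2) = x).card ^ 2 := by
    rw [Finset.card_eq_sum_card_fiberwise (f := fun z => z.1.1 + (z.1.2.1 + z.1.2.2)) (t := Y)]
    · apply Finset.sum_le_sum
      intro x _
      rw [sq, ← Finset.card_product]
      apply Finset.card_le_card
      intro z hz
      simp only [hZ, Finset.mem_filter, Finset.mem_product] at hz ⊢
      exact ⟨⟨hz.1.1.1, hz.2⟩, hz.1.1.2, by rw [← hz.1.2]; exact hz.2⟩
    · intro z hz
      exact Finset.mem_image.2 ⟨z.1, (Finset.mem_product.1 (Finset.mem_filter.1 hz).1).1, rfl⟩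
  have h2 : Z.card ≤ 8 * (∑ x ∈ Y, dg L S x ^ 2) + 2 * N ^ 3 := by
    refine h1.trans ?_
    calc ∑ x ∈ Y, (Q.filter fun z => z.1 + (z.2.1 + z.2.2) = x).card ^ 2
        ≤ ∑ x ∈ Y, (8 * dg L S x ^ 2 + 2 * N ^ 2 * (if x ∈ L then 1 else 0)) := by
          apply Finset.sum_le_sum
          intro x _
          have := triple_le L hL x
          calc (Q.filter fun z => z.1 + (z.2.1 + z.2.2) = x).card ^ 2
              ≤ (2 * dg L S x + N * (if x ∈ L then 1 else 0)) ^ 2 := by gcongr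
            _ ≤ _ := by
              split_ifs
              · zify; nlinarith [sq_nonneg (2 * (dg L S x : ℤ) - N)]
              · zify; nlinarith [sq_nonneg (dg L S x : ℤ)]
      _ = 8 * (∑ x ∈ Y, dg L S x ^ 2) + 2 * N ^ 2 * (Y.filter fun x => x ∈ L).card := by
          rw [Finset.sum_add_distrib, ← Finset.mul_sum, ← Finset.mul_sum, ← Finset.card_filter]
      _ ≤ 8 * (∑ x ∈ Y, dg L S x ^ 2) + 2 * N ^ 2 * N := by
          gcongr
          apply Finset.card_le_card
          intro x hx
          exact (Finset.mem_filter.1 hx).2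
      _ = _ := by ring
  have h3 := sum_sq_dg_full hL le_rfl hScard Y
  have h4 : (N : ℝ) ^ 3 ≤ √((N : ℝ) ^ 7) := by
    apply Real.le_sqrt_of_sq_le
    have : N ^ 6 ≤ N ^ 7 := by
      rcases Nat.eq_zero_or_pos N with h | h
      · simp [h]
      · exact Nat.pow_le_pow_right h (by norm_num)
    have : (N : ℝ) ^ 6 ≤ (N : ℝ) ^ 7 := by exact_mod_cast this
    calc ((N : ℝ) ^ 3) ^ 2 = (N : ℝ) ^ 6 := by ring
      _ ≤ _ := this
  have h5 : (Z.card : ℝ) ≤ 8 * ((∑ x ∈ Y, dg L S x ^ 2 : ℕ) : ℝ) + 2 * (N : ℝ) ^ 3 := by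
    exact_mod_cast h2
  have h6 : (1 : ℝ) ≤ ((Nat.log 2 N + 1 : ℕ) : ℝ) := by
    push_cast
    have : (0 : ℝ) ≤ (Nat.log 2 N : ℝ) := by positivity
    linarith
  have h7 : √((N : ℝ) ^ 7) ≤ ((Nat.log 2 N + 1 : ℕ) : ℝ) * √((N : ℝ) ^ 7) :=
    le_mul_of_one_le_left (Real.sqrt_nonneg _) h6
  nlinarith

lemma log_bound {ε : ℝ} (hε : 0 < ε) (N : ℕ) :
    ((Nat.log 2 N + 1 : ℕ) : ℝ) * √((N : ℝ) ^ 7) ≤ (2 / ε + 1) * (N : ℝ) ^ ((7 : ℝ) / 2 + ε) := by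
  rcases Nat.eq_zero_or_pos N with h | h
  · subst h
    simp
    positivity
  have hN : (1 : ℝ) ≤ N := by exact_mod_cast h
  have hN0 : (0 : ℝ) < N := by linarith
  have h1 : √((N : ℝ) ^ 7) = (N : ℝ) ^ ((7 : ℝ) / 2) := by
    rw [Real.sqrt_eq_rpow, ← Real.rpow_natCast, ← Real.rpow_mul hN0.le]
    norm_num
  have h2 : (Nat.log 2 N : ℝ) * Real.log 2 ≤ Real.log N := by
    rw [← Real.log_pow]
    apply Real.log_le_log (by positivity)
    exact_mod_cast Nat.pow_log_le_self 2 h.ne'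
  have h3 := Real.log_le_rpow_div hN0.le hε
  have h4 := Real.log_two_gt_d9
  have h5 : (Nat.log 2 N : ℝ) ≤ 2 / ε * (N : ℝ) ^ ε := by
    have h0 : (0 : ℝ) ≤ (Nat.log 2 N : ℝ) := by positivity
    have : (Nat.log 2 N : ℝ) * (1 / 2) ≤ (N : ℝ) ^ ε / ε := by nlinarith
    calc (Nat.log 2 N : ℝ) ≤ 2 * ((N : ℝ) ^ ε / ε) := by linarith
      _ = _ := by ring
  have h6 : 1 ≤ (N : ℝ) ^ ε := Real.one_le_rpow hN hε.le
  rw [h1, Real.rpow_add hN0]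
  have h7 : 0 ≤ (N : ℝ) ^ ((7 : ℝ) / 2) := by positivity
  have h8 : ((Nat.log 2 N + 1 : ℕ) : ℝ) ≤ (2 / ε + 1) * (N : ℝ) ^ ε := by
    push_cast; linarith
  calc _ ≤ ((2 / ε + 1) * (N : ℝ) ^ ε) * (N : ℝ) ^ ((7 : ℝ) / 2) := by gcongr
    _ = _ := by ring

/-- Coordinates. -/
def co (x : EuclideanSpace ℝ (Fin 2)) : ℝ × ℝ := (x 0, x 1)

lemma co_inj : Function.Injective co := by
  intro x y h
  simp only [co, Prod.mk.injEq] at h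
  ext i
  fin_cases i
  · exact h.1
  · exact h.2

lemma co_add (x y : EuclideanSpace ℝ (Fin 2)) : co (x + y) = co x + co y := by
  simp [co]

open Classical in
lemma energy_le (Λ : Set (EuclideanSpace ℝ (Fin 2))) (hf : Λ.Finite) (L : Finset (ℝ × ℝ))
    (hL : L = hf.toFinset.image co) :
    energy 3 Λ ≤ (((L ×ˢ L ×ˢ L) ×ˢ (L ×ˢ L ×ˢ L)).filter fun z =>
      z.1.1 + (z.1.2.1 + z.1.2.2) = z.2.1 + (z.2.2.1 + z.2.2.2)).card := by
  set Z := ((L ×ˢ L ×ˢ L) ×ˢ (L ×ˢ L ×ˢ L)).filter fun z =>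
      z.1.1 + (z.1.2.1 + z.1.2.2) = z.2.1 + (z.2.2.1 + z.2.2.2) with hZ
  have hmem : ∀ x ∈ Λ, co x ∈ L := by
    intro x hx
    rw [hL]
    exact Finset.mem_image.2 ⟨x, hf.mem_toFinset.2 hx, rfl⟩
  rw [energy, ← Fintype.card_coe Z, ← Nat.card_eq_fintype_card]
  let g : {fg : (Fin 3 → EuclideanSpace ℝ (Fin 2)) × (Fin 3 → EuclideanSpace ℝ (Fin 2)) //
    (∀ i, fg.1 i ∈ Λ) ∧ (∀ i, fg.2 i ∈ Λ) ∧ ∑ i, fg.1 i = ∑ i, fg.2 i} → Z := fun t =>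
    ⟨((co (t.1.1 0), co (t.1.1 1), co (t.1.1 2)), (co (t.1.2 0), co (t.1.2 1), co (t.1.2 2))), by
      obtain ⟨⟨u, v⟩, h1, h2, h3⟩ := t
      simp only [hZ, Finset.mem_filter, Finset.mem_product]
      refine ⟨⟨⟨hmem _ (h1 0), hmem _ (h1 1), hmem _ (h1 2)⟩,
        hmem _ (h2 0), hmem _ (h2 1), hmem _ (h2 2)⟩, ?_⟩
      simp only [← co_add]
      simp only [Fin.sum_univ_three] at h3
      rw [← add_assoc, ← add_assoc, h3]⟩
  apply Nat.card_le_card_of_injective g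
  rintro ⟨⟨u, v⟩, h⟩ ⟨⟨u', v'⟩, h'⟩ hg
  simp only [g, Subtype.mk.injEq, Prod.mk.injEq] at hg
  obtain ⟨⟨a0, a1, a2⟩, b0, b1, b2⟩ := hg
  simp only [Subtype.mk.injEq, Prod.mk.injEq]
  constructor
  · funext i
    fin_cases i
    · exact co_inj a0
    · exact co_inj a1
    · exact co_inj a2
  · funext i
    fin_cases i
    · exact co_inj b0
    · exact co_inj b1
    · exact co_inj b2

end CircE

theorem additive_energy_circle :
    ∀ ε > (0 : ℝ), ∃ C > (0 : ℝ),
      ∀ Λ : Set (EuclideanSpace ℝ (Fin 2)), Λ.Finite →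
        (∀ x ∈ Λ, ‖x‖ = 1) →
        (energy 3 Λ : ℝ) ≤ C * (Λ.ncard : ℝ) ^ ((7 : ℝ) / 2 + ε) := by
  classical
  intro ε hε
  refine ⟨6146 * (2 / ε + 1), by positivity, ?_⟩
  intro Λ hf hn
  set L := hf.toFinset.image CircE.co with hL
  have hcard : L.card = Λ.ncard := by
    rw [hL, Finset.card_image_of_injective _ CircE.co_inj, Set.ncard_eq_toFinset_card Λ hf]
  have hunit : ∀ a ∈ L, a.1 ^ 2 + a.2 ^ 2 = 1 := by
    intro a ha
    obtain ⟨x, hx, rfl⟩ := Finset.mem_image.1 ha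
    have h1 := hn x (hf.mem_toFinset.1 hx)
    have h2 := EuclideanSpace.real_norm_sq_eq x
    rw [h1, Fin.sum_univ_two] at h2
    simp only [CircE.co]
    linarith
  have h1 := CircE.energy_le Λ hf L hL
  have h2 := CircE.triple_energy L hunit
  have h3 := CircE.log_bound hε L.card
  rw [hcard] at h2 h3
  have h4 : (energy 3 Λ : ℝ) ≤ _ := (Nat.cast_le.2 h1).trans h2
  refine h4.trans ?_
  rw [mul_assoc, mul_assoc]
  exact mul_le_mul_of_nonneg_left h3 (by norm_num)

end
end

section
/- For every ε > 0 there is a constant C_ε such that for every real number R > 1, the set A_R' = {ξ ∈ ℤ² : R ≤ |ξ| ≤ R + R^{-1/3}} of lattice points in the thin annulus of width R^{-1/3} satisfies E₃(A_R') ≤ C_ε · |A_R'|^{3+ε}. -/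
open MeasureTheory Real

noncomputable section

/-- The lattice points in the annulus `R ≤ |ξ| ≤ R + R^{-1/3}`. -/
def annulusLattice (R : ℝ) : Set (ℤ × ℤ) :=
  {ξ | R ≤ Real.sqrt ((ξ.1 : ℝ) ^ 2 + (ξ.2 : ℝ) ^ 2) ∧
    Real.sqrt ((ξ.1 : ℝ) ^ 2 + (ξ.2 : ℝ) ^ 2) ≤ R + R ^ (-(1 : ℝ) / 3)}

set_option linter.all false

/-! ### The group algebra of `ℤ²` and sixfold counts -/

/-- The real group algebra of `ℤ²`. -/
abbrev GA : Type := AddMonoidAlgebra ℝ (ℤ × ℤ)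

/-- The coefficient at `0`. -/
def tau : GA →+ ℝ where
  toFun F := F.coeff 0
  map_zero' := by simp
  map_add' F G := by simp

/-- The involution induced by negation. -/
def cj : GA →+* GA := AddMonoidAlgebra.mapDomainRingHom ℝ (negAddMonoidHom : (ℤ × ℤ) →+ (ℤ × ℤ))

/-- The indicator element of a finite set. -/
def ind (A : Finset (ℤ × ℤ)) : GA := ∑ a ∈ A, AddMonoidAlgebra.single a 1

lemma cj_single (a : ℤ × ℤ) (r : ℝ) :
    cj (AddMonoidAlgebra.single a r) = AddMonoidAlgebra.single (-a) r := by
  simp [cj]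

lemma cj_cj (F : GA) : cj (cj F) = F := by
  induction F using AddMonoidAlgebra.induction_linear with
  | zero => simp
  | add f g hf hg => simp [hf, hg]
  | single a r => simp [cj_single]

lemma tau_single (a : ℤ × ℤ) (r : ℝ) :
    tau (AddMonoidAlgebra.single a r) = if a = 0 then r else 0 := by
  change (AddMonoidAlgebra.single a r).coeff 0 = _
  simp [Finsupp.single_apply]

lemma tau_mul_cj (F G : GA) (s : Finset (ℤ × ℤ)) (hF : F.coeff.support ⊆ s) :
    tau (F * cj G) = ∑ a ∈ s, F.coeff a * G.coeff a := by
  have h : tau (F * cj G) = F.coeff.sum fun a r => r * G.coeff a := by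
    clear hF
    induction F using AddMonoidAlgebra.induction_linear with
    | zero => simp
    | add f g hf hg =>
      rw [add_mul, map_add, hf, hg, AddMonoidAlgebra.coeff_add, Finsupp.sum_add_index']
      · simp
      · intros; ring
    | single a r =>
      induction G using AddMonoidAlgebra.induction_linear with
      | zero => simp
      | add f g hf hg =>
        rw [map_add, mul_add, map_add, hf, hg]
        simp [mul_add]
      | single b t =>
        rw [cj_single, AddMonoidAlgebra.single_mul_single, tau_single]
        simp only [AddMonoidAlgebra.coeff_single, zero_mul, Finsupp.sum_single_index]
        by_cases h : a = b
        · subst h; simp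
        · rw [if_neg, Finsupp.single_apply, if_neg (Ne.symm h)]
          · simp
          · rw [← sub_eq_add_neg, sub_eq_zero]; exact h
  rw [h, Finsupp.sum]
  apply Finset.sum_subset hF
  intro x _ hx
  simp at hx
  simp [hx]

lemma tau_CS (F G : GA) : tau (F * cj G) ^ 2 ≤ tau (F * cj F) * tau (G * cj G) := by
  classical
  set s := F.coeff.support ∪ G.coeff.support
  rw [tau_mul_cj F G s Finset.subset_union_left, tau_mul_cj F F s Finset.subset_union_left,
    tau_mul_cj G G s Finset.subset_union_right]
  have := Finset.sum_mul_sq_le_sq_mul_sq s (fun a => F.coeff a) (fun a => G.coeff a)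
  simpa [pow_two] using this

/-- Nonnegativity of all coefficients. -/
def NN (F : GA) : Prop := ∀ s, 0 ≤ F.coeff s

lemma NN.add {F G : GA} (hF : NN F) (hG : NN G) : NN (F + G) := by
  intro s; simpa using add_nonneg (hF s) (hG s)

lemma NN.mul {F G : GA} (hF : NN F) (hG : NN G) : NN (F * G) := by
  intro s
  classical
  rw [AddMonoidAlgebra.coeff_mul]
  refine Finset.sum_nonneg fun a _ => Finset.sum_nonneg fun b _ => ?_
  dsimp only
  split_ifs
  · exact mul_nonneg (hF _) (hG _)
  · exact le_rfl

lemma NN.single (a : ℤ × ℤ) {r : ℝ} (hr : 0 ≤ r) : NN (AddMonoidAlgebra.single a r) := by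
  intro s
  classical
  simp only [AddMonoidAlgebra.coeff_single, Finsupp.single_apply]
  split_ifs <;> simp [hr]

lemma NN.sum {ι : Type*} {s : Finset ι} {f : ι → GA} (h : ∀ i ∈ s, NN (f i)) :
    NN (∑ i ∈ s, f i) := by
  classical
  induction s using Finset.induction_on with
  | empty => intro s; simp
  | insert a s ha ih =>
    rw [Finset.sum_insert ha]
    exact (h a (by simp)).add (ih fun i hi => h i (by simp [hi]))

lemma NN.ofInd (A : Finset (ℤ × ℤ)) : NN (ind A) := NN.sum fun a _ => NN.single a zero_le_one

lemma cj_ind (A : Finset (ℤ × ℤ)) : cj (ind A) = ∑ a ∈ A, AddMonoidAlgebra.single (-a) 1 := by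
  simp [ind, cj_single]

lemma NN.ofCj (A : Finset (ℤ × ℤ)) : NN (cj (ind A)) := by
  rw [cj_ind]; exact NN.sum fun a _ => NN.single _ zero_le_one

lemma NN.tau_nonneg {F : GA} (hF : NN F) : 0 ≤ tau F := hF 0

lemma tau_CS' {P Q S : GA} (F G : GA) (hP : P = F * cj G) (hQ : Q = F * cj F)
    (hS : S = G * cj G) : tau P ^ 2 ≤ tau Q * tau S := by
  rw [hP, hQ, hS]; exact tau_CS F G

/-- Sixfold count as a sum. -/
lemma tau_six (A₁ A₂ A₃ B₁ B₂ B₃ : Finset (ℤ × ℤ)) :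
    tau (ind A₁ * ind A₂ * ind A₃ * (cj (ind B₁) * cj (ind B₂) * cj (ind B₃))) =
      ∑ b₃ ∈ B₃, ∑ b₂ ∈ B₂, ∑ b₁ ∈ B₁, ∑ a₃ ∈ A₃, ∑ a₂ ∈ A₂, ∑ a₁ ∈ A₁,
        if a₁ + a₂ + a₃ = b₁ + b₂ + b₃ then (1 : ℝ) else 0 := by
  rw [cj_ind, cj_ind, cj_ind]
  simp only [ind, Finset.sum_mul, Finset.mul_sum, AddMonoidAlgebra.single_mul_single, map_sum,
    tau_single, mul_one]
  have e : ∀ a₁ a₂ a₃ b₁ b₂ b₃ : ℤ × ℤ, (a₁ + a₂ + a₃ + (-b₁ + -b₂ + -b₃) = 0) ↔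
      a₁ + a₂ + a₃ = b₁ + b₂ + b₃ := by
    intro a₁ a₂ a₃ b₁ b₂ b₃
    rw [← sub_eq_zero (a := a₁ + a₂ + a₃)]
    have : a₁ + a₂ + a₃ + (-b₁ + -b₂ + -b₃) = a₁ + a₂ + a₃ - (b₁ + b₂ + b₃) := by abel
    rw [this]
  simp only [e]

/-- The 3-energy of a finite set. -/
def En (A : Finset (ℤ × ℤ)) : ℝ := tau ((ind A * cj (ind A)) ^ 3)

/-- The mixed energy. -/
def Mx (A B : Finset (ℤ × ℤ)) : ℝ := tau (ind A * cj (ind A) * (ind B * cj (ind B)) ^ 2)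

lemma En_eq_card (A : Finset (ℤ × ℤ)) :
    En A = (((Fintype.piFinset (fun _ : Fin 3 => A)) ×ˢ (Fintype.piFinset (fun _ : Fin 3 => A))).filter
      (fun p => ∑ i, p.1 i = ∑ i, p.2 i)).card := by
  have h3 : ind A ^ 3 = ∑ x ∈ Fintype.piFinset (fun _ : Fin 3 => A),
      AddMonoidAlgebra.single (∑ i, x i) (1 : ℝ) := by
    have h := Finset.prod_univ_sum (fun _ : Fin 3 => A)
      (fun _ a => (AddMonoidAlgebra.single a (1 : ℝ) : GA))
    have h' : ∏ i : Fin 3, ∑ j ∈ A, (AddMonoidAlgebra.single j (1 : ℝ) : GA) = ind A ^ 3 := by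
      simp [ind]
    rw [← h', h]
    refine Finset.sum_congr rfl fun x _ => ?_
    simp [Fin.prod_univ_three, Fin.sum_univ_three, AddMonoidAlgebra.single_mul_single]
  rw [En, mul_pow, ← map_pow, h3, map_sum, Finset.sum_mul_sum, map_sum]
  simp only [map_sum, cj_single, AddMonoidAlgebra.single_mul_single, tau_single, mul_one,
    ← sub_eq_add_neg, sub_eq_zero]
  rw [Finset.card_filter, Finset.sum_product]
  push_cast
  rfl

lemma En_eq_energy (A : Finset (ℤ × ℤ)) : En A = (energy 3 (A : Set (ℤ × ℤ)) : ℝ) := by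
  rw [En_eq_card, energy, ← Nat.card_eq_finsetCard]
  congr 1
  refine Nat.card_congr (Equiv.subtypeEquivRight fun p => ?_)
  simp [Fintype.mem_piFinset, and_assoc]

lemma En_nonneg (A : Finset (ℤ × ℤ)) : 0 ≤ En A := by rw [En_eq_card]; positivity

lemma En_le_card (A : Finset (ℤ × ℤ)) : En A ≤ (A.card : ℝ) ^ 6 := by
  rw [En_eq_card]
  have := Finset.card_filter_le ((Fintype.piFinset (fun _ : Fin 3 => A)) ×ˢ
    (Fintype.piFinset (fun _ : Fin 3 => A))) (fun p => ∑ i, p.1 i = ∑ i, p.2 i)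
  rw [Finset.card_product, Fintype.card_piFinset] at this
  simp at this
  calc _ ≤ ((A.card ^ 3 * A.card ^ 3 : ℕ) : ℝ) := by exact_mod_cast this
    _ = _ := by push_cast; ring

lemma Mx_nonneg (A B : Finset (ℤ × ℤ)) : 0 ≤ Mx A B :=
  (((NN.ofInd A).mul (NN.ofCj A)).mul (by
    rw [pow_two]; exact ((NN.ofInd B).mul (NN.ofCj B)).mul ((NN.ofInd B).mul (NN.ofCj B)))).tau_nonneg

lemma Mx_switch (A B : Finset (ℤ × ℤ)) : Mx A B ^ 2 ≤ Mx B A * En B :=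
  tau_CS' (ind A * cj (ind A) * ind B) (ind B * cj (ind B) * ind B)
    (by simp only [map_mul, map_pow, cj_cj]; ring) (by simp only [map_mul, map_pow, cj_cj]; ring)
    (by simp only [map_mul, map_pow, cj_cj]; ring)

lemma cube_aux (a b e f : ℝ) (n1 : 0 ≤ a) (e1 : 0 ≤ e) (n2 : 0 ≤ b) (e2 : 0 ≤ f)
    (h1 : a ^ 2 ≤ b * f) (h2 : b ^ 2 ≤ a * e) : a ^ 3 ≤ e * f ^ 2 := by
  rcases n1.eq_or_lt with h0 | h0
  · rw [← h0]; simp; positivity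
  · have : a * a ^ 3 ≤ a * (e * f ^ 2) := by
      calc a * a ^ 3 = (a ^ 2) ^ 2 := by ring
        _ ≤ (b * f) ^ 2 := by gcongr
        _ = b ^ 2 * f ^ 2 := by ring
        _ ≤ (a * e) * f ^ 2 := by gcongr
        _ = _ := by ring
    exact le_of_mul_le_mul_left this h0

lemma Mx_cube (A B : Finset (ℤ × ℤ)) : Mx A B ^ 3 ≤ En A * En B ^ 2 :=
  cube_aux _ _ _ _ (Mx_nonneg A B) (En_nonneg A) (Mx_nonneg B A) (En_nonneg B)
    (Mx_switch A B) (Mx_switch B A)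

/-- Coefficientwise order. -/
def LE' (F G : GA) : Prop := NN F ∧ NN (G - F)

lemma LE'.nnr {F G : GA} (h : LE' F G) : NN G := by
  have := h.1.add h.2
  simpa using this

lemma LE'.mul {F G F' G' : GA} (h : LE' F G) (h' : LE' F' G') : LE' (F * F') (G * G') := by
  refine ⟨h.1.mul h'.1, ?_⟩
  have e : G * G' - F * F' = (G - F) * G' + F * (G' - F') := by ring
  rw [e]
  exact (h.2.mul h'.nnr).add (h.1.mul h'.2)

lemma LE'.refl {F : GA} (h : NN F) : LE' F F := ⟨h, by intro s; simp⟩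

lemma LE'.tau {F G : GA} (h : LE' F G) : tau F ≤ tau G := by
  have := h.2.tau_nonneg
  rw [map_sub] at this
  linarith

lemma ind_mono {A B : Finset (ℤ × ℤ)} (h : A ⊆ B) : LE' (ind A) (ind B) := by
  classical
  refine ⟨NN.ofInd A, ?_⟩
  have : ind B - ind A = ind (B \ A) := by
    rw [sub_eq_iff_eq_add]
    simp only [ind]
    rw [Finset.sum_sdiff h]
  rw [this]; exact NN.ofInd _

lemma cj_mono {A B : Finset (ℤ × ℤ)} (h : A ⊆ B) : LE' (cj (ind A)) (cj (ind B)) := by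
  classical
  refine ⟨NN.ofCj A, ?_⟩
  have : cj (ind B) - cj (ind A) = cj (ind (B \ A)) := by
    rw [sub_eq_iff_eq_add, ← map_add]
    simp only [ind]
    rw [Finset.sum_sdiff h]
  rw [this]; exact NN.ofCj _

lemma Mx_le_En {X A : Finset (ℤ × ℤ)} (h : X ⊆ A) : Mx X A ≤ En A := by
  have r : LE' ((ind A * cj (ind A)) ^ 2) ((ind A * cj (ind A)) ^ 2) := LE'.refl (by
    rw [pow_two]; exact ((NN.ofInd _).mul (NN.ofCj _)).mul ((NN.ofInd _).mul (NN.ofCj _)))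
  have h1 := (((ind_mono h).mul (cj_mono h)).mul r).tau
  have e : ind A * cj (ind A) * (ind A * cj (ind A)) ^ 2 = (ind A * cj (ind A)) ^ 3 := by ring
  rw [e] at h1
  exact h1

lemma mid_CS (X Y A : Finset (ℤ × ℤ)) :
    tau (ind X * cj (ind X) * (ind Y * cj (ind Y)) * (ind A * cj (ind A))) ^ 2 ≤
      Mx X Y * Mx X A :=
  tau_CS' (ind X * (ind Y * cj (ind Y))) (ind X * (ind A * cj (ind A)))
    (by simp only [map_mul, map_pow, cj_cj]; ring) (by simp only [map_mul, map_pow, cj_cj]; ring)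
    (by simp only [map_mul, map_pow, cj_cj]; ring)

lemma four_aux (T m e x y : ℝ) (hT : T ^ 2 ≤ m * e) (h1 : m ^ 2 ≤ x * y) (h2 : y ≤ e)
    (hx : 0 ≤ x) : T ^ 4 ≤ x * e ^ 3 := by
  calc T ^ 4 = (T ^ 2) ^ 2 := by ring
    _ ≤ (m * e) ^ 2 := by gcongr
    _ = m ^ 2 * e ^ 2 := by ring
    _ ≤ (x * e) * e ^ 2 := by
      gcongr
      exact h1.trans (by gcongr)
    _ = _ := by ring

lemma broad_one {X Y A : Finset (ℤ × ℤ)} (h : X ⊆ A) :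
    tau (ind X * ind Y * ind A * cj (ind A) ^ 3) ^ 4 ≤ Mx X Y * En A ^ 3 :=
  four_aux _ _ _ _ _ (tau_CS' (ind X * ind Y * ind A) (ind A ^ 3)
    (by simp only [map_pow]) (by simp only [map_mul, map_pow, cj_cj]; ring)
    (by simp only [map_mul, map_pow, cj_cj]; ring)) (mid_CS X Y A) (Mx_le_En h) (Mx_nonneg _ _)

lemma broad_two {X Y A : Finset (ℤ × ℤ)} (h : X ⊆ A) :
    tau (ind X * cj (ind Y) * ind A ^ 2 * cj (ind A) ^ 2) ^ 4 ≤ Mx X Y * En A ^ 3 :=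
  four_aux _ _ _ _ _ (tau_CS' (ind X * cj (ind Y) * ind A) (cj (ind A) * ind A ^ 2)
    (by simp only [map_mul, map_pow, cj_cj]; ring) (by simp only [map_mul, map_pow, cj_cj]; ring)
    (by simp only [map_mul, map_pow, cj_cj]; ring)) (mid_CS X Y A) (Mx_le_En h) (Mx_nonneg _ _)

lemma cross_CS (X X' Y : Finset (ℤ × ℤ)) :
    tau (ind X * cj (ind X') * (ind Y * cj (ind Y)) ^ 2) ≤ (Mx X Y + Mx X' Y) / 2 := by
  have h' : tau (ind X * cj (ind X') * (ind Y * cj (ind Y)) ^ 2) ^ 2 ≤ Mx X Y * Mx X' Y :=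
    tau_CS' (ind X * (ind Y * cj (ind Y))) (ind X' * (ind Y * cj (ind Y)))
      (by simp only [map_mul, map_pow, cj_cj]; ring) (by simp only [map_mul, map_pow, cj_cj]; ring)
      (by simp only [map_mul, map_pow, cj_cj]; ring)
  have h1 := Mx_nonneg X Y
  have h2 := Mx_nonneg X' Y
  generalize tau (ind X * cj (ind X') * (ind Y * cj (ind Y)) ^ 2) = T at *
  generalize Mx X Y = p at *
  generalize Mx X' Y = q at *
  nlinarith [sq_nonneg (p - q)]

lemma cross_zero (X X' Y : Finset (ℤ × ℤ))
    (h : ∀ x ∈ X, ∀ x' ∈ X', ∀ y₁ ∈ Y, ∀ y₂ ∈ Y, ∀ y₃ ∈ Y, ∀ y₄ ∈ Y,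
      x + y₁ + y₂ ≠ x' + y₃ + y₄) :
    tau (ind X * cj (ind X') * (ind Y * cj (ind Y)) ^ 2) = 0 := by
  have e : ind X * cj (ind X') * (ind Y * cj (ind Y)) ^ 2 =
    ind X * ind Y * ind Y * (cj (ind X') * cj (ind Y) * cj (ind Y)) := by ring
  rw [e, tau_six]
  refine Finset.sum_eq_zero fun y₄ h4 => Finset.sum_eq_zero fun y₃ h3 =>
    Finset.sum_eq_zero fun x' hx' => Finset.sum_eq_zero fun y₂ h2 =>
    Finset.sum_eq_zero fun y₁ h1 => Finset.sum_eq_zero fun x hx => if_neg ?_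
  exact h x hx x' hx' y₁ h1 y₂ h2 y₃ h3 y₄ h4

/-- Partition of the indicator along the fibres of a map. -/
lemma ind_fiber {ι : Type*} [DecidableEq ι] (A : Finset (ℤ × ℤ)) (κ : ℤ × ℤ → ι) :
    ind A = ∑ i ∈ A.image κ, ind (A.filter fun x => κ x = i) := by
  simp only [ind]
  exact (Finset.sum_fiberwise_of_maps_to (fun x hx => Finset.mem_image_of_mem κ hx) _).symm


/-! ### Abstract decoupling -/

/-- Pairs in the same unit cap. -/
def Sq (t : ℤ × ℤ → ℝ) (A : Finset (ℤ × ℤ)) : ℝ :=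
  (((A ×ˢ A).filter (fun p => ⌊t p.1⌋ = ⌊t p.2⌋)).card : ℝ)

/-- Diameter bound. -/
def Dm (t : ℤ × ℤ → ℝ) (A : Finset (ℤ × ℤ)) (L : ℝ) : Prop := ∀ x ∈ A, ∀ y ∈ A, |t x - t y| ≤ L

/-- Separation. -/
def SepT (t : ℤ × ℤ → ℝ) (X Y : Finset (ℤ × ℤ)) (s : ℝ) : Prop :=
  (∀ x ∈ X, ∀ y ∈ Y, t x + s ≤ t y) ∨ (∀ x ∈ X, ∀ y ∈ Y, t y + s ≤ t x)

/-- The geometric hypothesis (transversality and curvature). -/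
def Hyp (t : ℤ × ℤ → ℝ) (Λ : Finset (ℤ × ℤ)) (C₀ : ℝ) : Prop :=
  ∀ b s : ℝ, 1 ≤ b → 0 < s → ∀ X Y, X ⊆ Λ → Y ⊆ Λ → SepT t X Y s → Dm t Y b →
    ∀ x ∈ X, ∀ x' ∈ X, ∀ y₁ ∈ Y, ∀ y₂ ∈ Y, ∀ y₃ ∈ Y, ∀ y₄ ∈ Y,
      x + y₁ + y₂ = x' + y₃ + y₄ → |t x - t x'| ≤ C₀ * b ^ 2 / s

/-- The decoupling inequality with constant `C`. -/
def Pd (t : ℤ × ℤ → ℝ) (Λ : Finset (ℤ × ℤ)) (ε C : ℝ) : Prop :=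
  ∀ A, A ⊆ Λ → ∀ L : ℝ, 1 ≤ L → Dm t A L → En A ≤ C * L ^ ε * Sq t A ^ 3

lemma SepT.symm {t X Y s} (h : SepT t X Y s) : SepT t Y X s := by
  rcases h with h | h
  · right; exact fun x hx y hy => h y hy x hx
  · left; exact fun x hx y hy => h y hy x hx

lemma SepT.mono {t X Y s X' Y'} (h : SepT t X Y s) (hX : X' ⊆ X) (hY : Y' ⊆ Y) : SepT t X' Y' s := by
  rcases h with h | h
  · left; exact fun x hx y hy => h x (hX hx) y (hY hy)
  · right; exact fun x hx y hy => h x (hX hx) y (hY hy)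

lemma Dm.mono {t A L A' L'} (h : Dm t A L) (hA : A' ⊆ A) (hL : L ≤ L') : Dm t A' L' :=
  fun x hx y hy => (h x (hA hx) y (hA hy)).trans hL

lemma Sq_nonneg (t A) : 0 ≤ Sq t A := by unfold Sq; positivity

lemma Sq_mono {t} {A B : Finset (ℤ × ℤ)} (h : A ⊆ B) : Sq t A ≤ Sq t B := by
  unfold Sq
  exact_mod_cast Finset.card_le_card (Finset.filter_subset_filter _ (Finset.product_subset_product h h))

lemma Sq_fiber (t) (A : Finset (ℤ × ℤ)) (κ : ℤ × ℤ → ℤ) :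
    ∑ i ∈ A.image κ, Sq t (A.filter fun x => κ x = i) ≤ Sq t A := by
  unfold Sq
  rw [Finset.card_eq_sum_card_fiberwise (f := fun p => κ p.1) (t := A.image κ)]
  · push_cast
    gcongr with i hi
    intro p
    simp only [Finset.mem_filter, Finset.mem_product]
    tauto
  · intro p hp
    simp only [Finset.coe_filter, Finset.mem_product, Set.mem_setOf_eq] at hp
    exact Finset.mem_coe.2 (Finset.mem_image_of_mem _ hp.1.1)

lemma Sq_window (t) (A : Finset (ℤ × ℤ)) (κ : ℤ × ℤ → ℤ) (I : Finset ℤ) :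
    ∑ k ∈ I, Sq t (A.filter fun x => |κ x - k| ≤ 1) ≤ 3 * Sq t A := by
  unfold Sq
  have h : ∀ k ∈ I, ((((A.filter fun x => |κ x - k| ≤ 1) ×ˢ (A.filter fun x => |κ x - k| ≤ 1)).filter
      (fun p => ⌊t p.1⌋ = ⌊t p.2⌋)).card : ℝ) ≤
      ∑ p ∈ (A ×ˢ A).filter (fun p => ⌊t p.1⌋ = ⌊t p.2⌋), if |κ p.1 - k| ≤ 1 then (1 : ℝ) else 0 := by
    intro k _
    rw [← Finset.sum_filter, Finset.sum_const, nsmul_eq_mul, mul_one]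
    norm_cast
    apply Finset.card_le_card
    intro p
    simp only [Finset.mem_filter, Finset.mem_product]
    tauto
  refine (Finset.sum_le_sum h).trans ?_
  rw [Finset.sum_comm, Finset.card_eq_sum_ones]
  push_cast
  rw [Finset.mul_sum]
  refine Finset.sum_le_sum fun p _ => ?_
  rw [← Finset.sum_filter, Finset.sum_const, nsmul_eq_mul, mul_one, mul_one]
  have : (I.filter fun k => |κ p.1 - k| ≤ 1) ⊆ Finset.Icc (κ p.1 - 1) (κ p.1 + 1) := by
    intro k
    simp only [Finset.mem_filter, Finset.mem_Icc, abs_le]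
    intro h; omega
  have := Finset.card_le_card this
  rw [Int.card_Icc] at this
  have h2 : (κ p.1 + 1 + 1 - (κ p.1 - 1)).toNat = 3 := by omega
  rw [h2] at this
  exact_mod_cast this

lemma floor_close {a b c : ℝ} (hc : 0 < c) (h : |a - b| ≤ c) : |⌊a / c⌋ - ⌊b / c⌋| ≤ 1 := by
  rw [abs_le] at h ⊢
  have h1 : a / c ≤ b / c + 1 := by
    rw [div_add_one hc.ne']; gcongr; linarith
  have h2 : b / c ≤ a / c + 1 := by
    rw [div_add_one hc.ne']; gcongr; linarith
  have h3 := Int.floor_mono h1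
  have h4 := Int.floor_mono h2
  rw [Int.floor_add_one] at h3 h4
  constructor <;> omega

lemma floor_same {a b c : ℝ} (hc : 0 < c) (h : ⌊a / c⌋ = ⌊b / c⌋) : |a - b| ≤ c := by
  have := Int.abs_sub_lt_one_of_floor_eq_floor h
  rw [← sub_div, abs_div, abs_of_pos hc, div_lt_one hc] at this
  exact this.le

lemma cong_gen (X Y : Finset (ℤ × ℤ)) (κ : ℤ × ℤ → ℤ)
    (h : ∀ x ∈ X, ∀ x' ∈ X, ∀ y₁ ∈ Y, ∀ y₂ ∈ Y, ∀ y₃ ∈ Y, ∀ y₄ ∈ Y,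
      x + y₁ + y₂ = x' + y₃ + y₄ → |κ x - κ x'| ≤ 1) :
    Mx X Y ≤ 3 * ∑ i ∈ X.image κ, Mx (X.filter fun x => κ x = i) Y := by
  set m : ℤ → ℝ := fun i => Mx (X.filter fun x => κ x = i) Y with hm
  have hm0 : ∀ i, 0 ≤ m i := fun i => Mx_nonneg _ _
  have e : Mx X Y = ∑ i ∈ X.image κ, ∑ j ∈ X.image κ,
      tau (ind (X.filter fun x => κ x = i) * cj (ind (X.filter fun x => κ x = j)) *
        (ind Y * cj (ind Y)) ^ 2) := by
    rw [Mx]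
    conv_lhs => rw [ind_fiber X κ, map_sum, Finset.sum_mul_sum, Finset.sum_mul, map_sum]
    refine Finset.sum_congr rfl fun i _ => ?_
    rw [Finset.sum_mul, map_sum]
  have b : ∀ i j, tau (ind (X.filter fun x => κ x = i) * cj (ind (X.filter fun x => κ x = j)) *
        (ind Y * cj (ind Y)) ^ 2) ≤ if |i - j| ≤ 1 then (m i + m j) / 2 else 0 := by
    intro i j
    split_ifs with hij
    · exact cross_CS _ _ _
    · apply le_of_eq
      apply cross_zero
      intro x hx x' hx' y₁ h1 y₂ h2 y₃ h3 y₄ h4 heq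
      simp only [Finset.mem_filter] at hx hx'
      have := h x hx.1 x' hx'.1 y₁ h1 y₂ h2 y₃ h3 y₄ h4 heq
      rw [hx.2, hx'.2] at this
      exact hij this
  have cnt : ∀ i : ℤ, ∑ j ∈ X.image κ, (if |i - j| ≤ 1 then m i / 2 else 0) ≤ 3 * (m i / 2) := by
    intro i
    rw [← Finset.sum_filter, Finset.sum_const, nsmul_eq_mul]
    have : ((X.image κ).filter fun k => |i - k| ≤ 1) ⊆ Finset.Icc (i - 1) (i + 1) := by
      intro k
      simp only [Finset.mem_filter, Finset.mem_Icc, abs_le]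
      intro h; omega
    have := Finset.card_le_card this
    rw [Int.card_Icc] at this
    have h2 : (i + 1 + 1 - (i - 1)).toNat = 3 := by omega
    rw [h2] at this
    have h3 : (((X.image κ).filter fun k => |i - k| ≤ 1).card : ℝ) ≤ 3 := by exact_mod_cast this
    have := hm0 i
    gcongr
  rw [e]
  calc _ ≤ ∑ i ∈ X.image κ, ∑ j ∈ X.image κ, (if |i - j| ≤ 1 then (m i + m j) / 2 else 0) :=
        Finset.sum_le_sum fun i _ => Finset.sum_le_sum fun j _ => b i j
    _ = ∑ i ∈ X.image κ, ∑ j ∈ X.image κ, (if |i - j| ≤ 1 then m i / 2 else 0) +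
        ∑ i ∈ X.image κ, ∑ j ∈ X.image κ, (if |i - j| ≤ 1 then m j / 2 else 0) := by
      rw [← Finset.sum_add_distrib]
      refine Finset.sum_congr rfl fun i _ => ?_
      rw [← Finset.sum_add_distrib]
      refine Finset.sum_congr rfl fun j _ => ?_
      split_ifs <;> ring
    _ = ∑ i ∈ X.image κ, ∑ j ∈ X.image κ, (if |i - j| ≤ 1 then m i / 2 else 0) +
        ∑ j ∈ X.image κ, ∑ i ∈ X.image κ, (if |j - i| ≤ 1 then m j / 2 else 0) := by
      congr 1
      rw [Finset.sum_comm]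
      simp only [abs_sub_comm]
    _ ≤ ∑ i ∈ X.image κ, 3 * (m i / 2) + ∑ i ∈ X.image κ, 3 * (m i / 2) :=
      add_le_add (Finset.sum_le_sum fun i _ => cnt i) (Finset.sum_le_sum fun i _ => cnt i)
    _ = _ := by
      rw [← Finset.sum_add_distrib, Finset.mul_sum]
      refine Finset.sum_congr rfl fun i _ => ?_
      ring

lemma bil {t : ℤ × ℤ → ℝ} {Λ : Finset (ℤ × ℤ)} {C₀ ε C K L : ℝ} (hC₀ : 1 ≤ C₀) (hH : Hyp t Λ C₀)
    (hε : 0 < ε) (hC : 0 ≤ C) (hP : Pd t Λ ε C) (hK : 1 ≤ K) (hL : 1 ≤ L) (n : ℕ) :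
    ∀ γ : ℝ, 0 < γ → γ ≤ 1 → ∀ X Y, X ⊆ Λ → Y ⊆ Λ → SepT t X Y (L / K) → Dm t X L →
      Dm t Y (γ * L / (C₀ * K)) → 1 ≤ γ ^ (2 ^ n) * L / (C₀ * K) →
      Mx X Y ≤ 9 * γ ^ (n * ε / 2) * C * L ^ ε * (Sq t X * Sq t Y ^ 2) := by
  induction n with
  | zero =>
    intro γ hγ hγ1 X Y hX hY hs hdX hdY h1
    have hY' : Dm t Y L := hdY.mono subset_rfl (by
      rw [div_le_iff₀ (by positivity)]
      have : 1 ≤ C₀ * K := one_le_mul_of_one_le_of_one_le hC₀ hK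
      nlinarith)
    have e1 := hP X hX L hL hdX
    have e2 := hP Y hY L hL hY'
    have e3 := Mx_cube X Y
    have s1 := Sq_nonneg t X
    have s2 := Sq_nonneg t Y
    have l0 : 0 ≤ C * L ^ ε := by positivity
    have : Mx X Y ≤ C * L ^ ε * (Sq t X * Sq t Y ^ 2) := by
      apply le_of_pow_le_pow_left₀ (n := 3) (by norm_num) (by positivity)
      calc Mx X Y ^ 3 ≤ En X * En Y ^ 2 := e3
        _ ≤ (C * L ^ ε * Sq t X ^ 3) * (C * L ^ ε * Sq t Y ^ 3) ^ 2 := by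
          have := En_nonneg X
          have := En_nonneg Y
          gcongr
        _ = _ := by ring
    have h9 : C * L ^ ε * (Sq t X * Sq t Y ^ 2) ≤ 9 * (C * L ^ ε * (Sq t X * Sq t Y ^ 2)) := by
      have : 0 ≤ C * L ^ ε * (Sq t X * Sq t Y ^ 2) := by positivity
      linarith
    calc _ ≤ _ := this.trans h9
      _ = _ := by simp; ring
  | succ n ih =>
    intro γ hγ hγ1 X Y hX hY hs hdX hdY h1
    have hCK : 0 < C₀ * K := by positivity
    set b := γ * L / (C₀ * K) with hb
    have hb1 : 1 ≤ b := by
      refine h1.trans ?_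
      rw [hb]
      gcongr
      exact pow_le_of_le_one hγ.le hγ1 (by positivity)
    have hs0 : 0 < L / K := by positivity
    have hbeq : C₀ * b ^ 2 / (L / K) = γ ^ 2 * L / (C₀ * K) := by
      rw [hb]; field_simp
    set b' := γ ^ 2 * L / (C₀ * K) with hb'
    have hb'0 : 0 < b' := by positivity
    have hbL : b ≤ L := by
      rw [hb, div_le_iff₀ (by positivity)]
      have : 1 ≤ C₀ * K := one_le_mul_of_one_le_of_one_le hC₀ hK
      nlinarith
    have hbγ : b ≤ γ * L := by
      rw [hb, div_le_iff₀ (by positivity)]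
      have : 1 ≤ C₀ * K := one_le_mul_of_one_le_of_one_le hC₀ hK
      have : 0 ≤ γ * L := by positivity
      nlinarith
    set κ : ℤ × ℤ → ℤ := fun x => ⌊t x / b'⌋ with hκ
    have hc := cong_gen X Y κ (by
      intro x hx x' hx' y₁ h1 y₂ h2 y₃ h3 y₄ h4 heq
      apply floor_close hb'0
      rw [← hbeq]
      exact hH b (L / K) hb1 hs0 X Y hX hY hs hdY x hx x' hx' y₁ h1 y₂ h2 y₃ h3 y₄ h4 heq)
    have s2 := Sq_nonneg t Y
    have piece : ∀ i, Mx (X.filter fun x => κ x = i) Y ≤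
        3 * γ ^ ((n + 1 : ℕ) * ε / 2) * C * L ^ ε * Sq t Y ^ 2 * Sq t (X.filter fun x => κ x = i) := by
      intro i
      set Z := X.filter fun x => κ x = i with hZ
      have hZX : Z ⊆ X := Finset.filter_subset _ _
      have hdZ : Dm t Z b' := by
        intro x hx y hy
        simp only [hZ, Finset.mem_filter] at hx hy
        exact floor_same hb'0 (hx.2.trans hy.2.symm)
      have i1 := ih (γ ^ 2) (by positivity) (pow_le_one₀ hγ.le hγ1) Y Z hY (hZX.trans hX)
        (hs.mono hZX subset_rfl).symm (hdY.mono subset_rfl hbL) hdZ (by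
          rw [← pow_mul, ← pow_succ']; exact h1)
      have i2 := hP Y hY b hb1 hdY
      have i3 := Mx_switch Z Y
      have s1 := Sq_nonneg t Z
      have l0 : 0 ≤ L ^ ε := by positivity
      have hbe : b ^ ε ≤ γ ^ ε * L ^ ε := by
        rw [← Real.mul_rpow (by positivity) (by positivity)]
        gcongr
      have g1 : (γ ^ 2 : ℝ) ^ (n * ε / 2) = γ ^ (n * ε) := by
        rw [← Real.rpow_natCast, ← Real.rpow_mul hγ.le]; congr 1; push_cast; ring
      have g2 : (γ ^ (((n + 1 : ℕ) : ℝ) * ε / 2)) ^ 2 = γ ^ (n * ε) * γ ^ ε := by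
        rw [← Real.rpow_natCast, ← Real.rpow_mul hγ.le, ← Real.rpow_add hγ]; congr 1; push_cast; ring
      rw [g1] at i1
      apply le_of_pow_le_pow_left₀ (n := 2) (by norm_num) (by positivity)
      have z1 := En_nonneg Y
      have z2 := Mx_nonneg Y Z
      calc Mx Z Y ^ 2 ≤ Mx Y Z * En Y := i3
        _ ≤ (9 * γ ^ (n * ε) * C * L ^ ε * (Sq t Y * Sq t Z ^ 2)) *
            (C * (γ ^ ε * L ^ ε) * Sq t Y ^ 3) := by
          gcongr
          exact i2.trans (by gcongr)
        _ = 9 * (γ ^ (n * ε) * γ ^ ε) * C ^ 2 * (L ^ ε) ^ 2 * Sq t Y ^ 4 * Sq t Z ^ 2 := by ring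
        _ = _ := by rw [← g2]; ring
    calc Mx X Y ≤ _ := hc
      _ ≤ 3 * ∑ i ∈ X.image κ, 3 * γ ^ ((n + 1 : ℕ) * ε / 2) * C * L ^ ε * Sq t Y ^ 2 *
            Sq t (X.filter fun x => κ x = i) := by
        gcongr with i _
        exact piece i
      _ = 3 * (3 * γ ^ ((n + 1 : ℕ) * ε / 2) * C * L ^ ε * Sq t Y ^ 2) *
            ∑ i ∈ X.image κ, Sq t (X.filter fun x => κ x = i) := by
        rw [← Finset.mul_sum]; ring
      _ ≤ 3 * (3 * γ ^ ((n + 1 : ℕ) * ε / 2) * C * L ^ ε * Sq t Y ^ 2) * Sq t X := by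
        gcongr
        exact Sq_fiber t X κ
      _ = _ := by ring


lemma ind_split (A : Finset (ℤ × ℤ)) (p : ℤ × ℤ → Prop) [DecidablePred p] :
    ind A = ind (A.filter p) + ind (A.filter fun x => ¬ p x) := by
  unfold ind
  exact (Finset.sum_filter_add_sum_filter_not A p _).symm

lemma tele (f n v fs ns vs k : GA) (h : f = n + v) (hs : fs = ns + vs) :
    k * f ^ 2 * fs ^ 3 = k * n ^ 2 * ns ^ 3 + (k * v * f * fs ^ 3 + k * v * n * fs ^ 3
      + (k * vs * n ^ 2 * fs ^ 2 + k * vs * n ^ 2 * (fs * ns) + k * vs * n ^ 2 * (ns * ns))) := by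
  subst h hs; ring

lemma NN.one : NN (1 : GA) := NN.single 0 zero_le_one

lemma LE'.pow {F G : GA} (h : LE' F G) (n : ℕ) : LE' (F ^ n) (G ^ n) := by
  induction n with
  | zero => simpa using LE'.refl NN.one
  | succ n ih => rw [pow_succ, pow_succ]; exact ih.mul h

lemma one_k {A Ak W V : Finset (ℤ × ℤ)} (hk : Ak ⊆ W) (hW : W ⊆ A)
    (h : ind A = ind W + ind V) :
    tau (ind Ak * ind A ^ 2 * cj (ind A) ^ 3) ≤ En W +
      (2 * tau (ind Ak * ind V * ind A * cj (ind A) ^ 3) +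
        3 * tau (ind Ak * cj (ind V) * ind A ^ 2 * cj (ind A) ^ 2)) := by
  rw [tele (ind A) (ind W) (ind V) (cj (ind A)) (cj (ind W)) (cj (ind V)) _ h (by rw [h, map_add])]
  simp only [map_add]
  have nk := LE'.refl (NN.ofInd Ak)
  have nv := LE'.refl (NN.ofInd V)
  have nvs := LE'.refl (NN.ofCj V)
  have na := LE'.refl (NN.ofInd A)
  have nas := LE'.refl (NN.ofCj A)
  have nw := ind_mono hW
  have nws := cj_mono hW
  have e0 : tau (ind Ak * ind W ^ 2 * cj (ind W) ^ 3) ≤ En W := by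
    have := ((((ind_mono hk).mul ((LE'.refl (NN.ofInd W)).pow 2)).mul
      ((LE'.refl (NN.ofCj W)).pow 3))).tau
    have e : (ind W * cj (ind W)) ^ 3 = ind W * ind W ^ 2 * cj (ind W) ^ 3 := by ring
    rw [En, e]
    exact this
  have e1 := (((nk.mul nv).mul nw).mul (nas.pow 3)).tau
  have e2 := (((nk.mul nvs).mul (nw.pow 2)).mul (nas.pow 2)).tau
  have e3 := (((nk.mul nvs).mul (nw.pow 2)).mul (nas.mul nws)).tau
  have e4 := (((nk.mul nvs).mul (nw.pow 2)).mul (nws.mul nws)).tau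
  rw [← pow_two (cj (ind A))] at e3 e4
  linarith

lemma two_fold (X Y : Finset (ℤ × ℤ)) (κ : ℤ × ℤ → ℤ) (G : GA) :
    tau (ind X * ind Y * G) = ∑ i ∈ X.image κ, ∑ j ∈ Y.image κ,
      tau (ind (X.filter fun x => κ x = i) * ind (Y.filter fun x => κ x = j) * G) := by
  conv_lhs => rw [ind_fiber X κ, ind_fiber Y κ, Finset.sum_mul_sum, Finset.sum_mul, map_sum]
  refine Finset.sum_congr rfl fun i _ => ?_
  rw [Finset.sum_mul, map_sum]

lemma two_fold' (X Y : Finset (ℤ × ℤ)) (κ : ℤ × ℤ → ℤ) (G : GA) :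
    tau (ind X * cj (ind Y) * G) = ∑ i ∈ X.image κ, ∑ j ∈ Y.image κ,
      tau (ind (X.filter fun x => κ x = i) * cj (ind (Y.filter fun x => κ x = j)) * G) := by
  conv_lhs => rw [ind_fiber X κ, ind_fiber Y κ, map_sum, Finset.sum_mul_sum, Finset.sum_mul, map_sum]
  refine Finset.sum_congr rfl fun i _ => ?_
  rw [Finset.sum_mul, map_sum]

lemma sum2_le {I J : Finset ℤ} {f : ℤ → ℤ → ℝ} {B M : ℝ} (hB : 0 ≤ B) (hI : (I.card : ℝ) ≤ M)
    (hJ : (J.card : ℝ) ≤ M) (h : ∀ i ∈ I, ∀ j ∈ J, f i j ≤ B) :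
    ∑ i ∈ I, ∑ j ∈ J, f i j ≤ M ^ 2 * B := by
  have hM : 0 ≤ M := le_trans (by positivity) hI
  calc _ ≤ ∑ i ∈ I, ∑ j ∈ J, B := Finset.sum_le_sum fun i hi => Finset.sum_le_sum fun j hj => h i hi j hj
    _ = I.card * (J.card * B) := by simp
    _ ≤ M * (M * B) := by gcongr
    _ = _ := by ring

lemma broad_narrow (A : Finset (ℤ × ℤ)) (κ : ℤ × ℤ → ℤ) (g : ℤ → ℤ) (M N B : ℝ)
    (hM : ((A.image κ).card : ℝ) ≤ M)
    (hN : ∀ i j X Y, X ⊆ A → Y ⊆ A → (∀ x ∈ X, κ x = i) → (∀ y ∈ Y, κ y = j) → 2 ≤ |g i - g j| →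
      Mx X Y ≤ N) (hB : 0 ≤ B) (hNB : N * En A ^ 3 ≤ B ^ 4) :
    En A ≤ ∑ k ∈ A.image (fun x => g (κ x)), En (A.filter fun x => |g (κ x) - k| ≤ 1) +
      5 * (M ^ 3 * B) := by
  have hM0 : 0 ≤ M := le_trans (by positivity) hM
  have e : En A = ∑ k ∈ A.image (fun x => g (κ x)),
      tau (ind (A.filter fun x => g (κ x) = k) * ind A ^ 2 * cj (ind A) ^ 3) := by
    rw [En, mul_pow, pow_succ', ]
    conv_lhs => enter [2, 1, 1]; rw [ind_fiber A (fun x => g (κ x))]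
    rw [Finset.sum_mul, Finset.sum_mul, map_sum]
  have hM2 : ((A.image (fun x => g (κ x))).card : ℝ) ≤ M := by
    refine le_trans ?_ hM
    norm_cast
    have : A.image (fun x => g (κ x)) = (A.image κ).image g := by rw [Finset.image_image]; rfl
    rw [this]; exact Finset.card_image_le
  have key : ∀ k, tau (ind (A.filter fun x => g (κ x) = k) * ind A ^ 2 * cj (ind A) ^ 3) ≤
      En (A.filter fun x => |g (κ x) - k| ≤ 1) + 5 * (M ^ 2 * B) := by
    intro k
    set V := A.filter fun x => ¬ |g (κ x) - k| ≤ 1 with hV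
    set Ak := A.filter fun x => g (κ x) = k with hAk
    have hkA : Ak ⊆ A := Finset.filter_subset _ _
    have hVA : V ⊆ A := Finset.filter_subset _ _
    have h1 := one_k (A := A) (Ak := Ak) (W := A.filter fun x => |g (κ x) - k| ≤ 1) (V := V) (by
      intro x; simp only [hAk, Finset.mem_filter]; rintro ⟨h, rfl⟩; simp [h]) (Finset.filter_subset _ _)
      (ind_split A _)
    have cI : ((Ak.image κ).card : ℝ) ≤ M := le_trans (by
      exact_mod_cast Finset.card_le_card (Finset.image_subset_image hkA)) hM
    have cJ : ((V.image κ).card : ℝ) ≤ M := le_trans (by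
      exact_mod_cast Finset.card_le_card (Finset.image_subset_image hVA)) hM
    have mx : ∀ i ∈ Ak.image κ, ∀ j ∈ V.image κ,
        Mx (Ak.filter fun x => κ x = i) (V.filter fun x => κ x = j) ≤ N := by
      intro i hi j hj
      apply hN i j _ _ ((Finset.filter_subset _ _).trans hkA) ((Finset.filter_subset _ _).trans hVA)
      · intro x hx; exact (Finset.mem_filter.1 hx).2
      · intro x hx; exact (Finset.mem_filter.1 hx).2
      · obtain ⟨x, hx, rfl⟩ := Finset.mem_image.1 hi
        obtain ⟨y, hy, rfl⟩ := Finset.mem_image.1 hj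
        rw [(Finset.mem_filter.1 hx).2]
        have := (Finset.mem_filter.1 hy).2
        rw [abs_sub_comm]; omega
    have t1 : tau (ind Ak * ind V * ind A * cj (ind A) ^ 3) ≤ M ^ 2 * B := by
      rw [mul_assoc, two_fold Ak V κ]
      apply sum2_le hB cI cJ
      intro i hi j hj
      apply le_of_pow_le_pow_left₀ (n := 4) (by norm_num) hB
      rw [← mul_assoc]
      refine (broad_one ((Finset.filter_subset _ _).trans hkA)).trans (le_trans ?_ hNB)
      have := En_nonneg A
      have := mx i hi j hj
      gcongr
    have t2 : tau (ind Ak * cj (ind V) * ind A ^ 2 * cj (ind A) ^ 2) ≤ M ^ 2 * B := by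
      rw [mul_assoc, two_fold' Ak V κ]
      apply sum2_le hB cI cJ
      intro i hi j hj
      apply le_of_pow_le_pow_left₀ (n := 4) (by norm_num) hB
      rw [← mul_assoc]
      refine (broad_two ((Finset.filter_subset _ _).trans hkA)).trans (le_trans ?_ hNB)
      have := En_nonneg A
      have := mx i hi j hj
      gcongr
    linarith
  rw [e]
  refine (Finset.sum_le_sum fun k _ => key k).trans ?_
  rw [Finset.sum_add_distrib, Finset.sum_const, nsmul_eq_mul]
  have : ((A.image (fun x => g (κ x))).card : ℝ) * (5 * (M ^ 2 * B)) ≤ M * (5 * (M ^ 2 * B)) := by gcongr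
  linarith


lemma image_card {t : ℤ × ℤ → ℝ} {A : Finset (ℤ × ℤ)} {δ : ℝ} (hδ : 0 < δ) (m : ℕ)
    (h : Dm t A (m * δ)) : ((A.image fun x => ⌊t x / δ⌋).card : ℝ) ≤ 2 * m + 1 := by
  rcases A.eq_empty_or_nonempty with rfl | ⟨x₀, h0⟩
  · simp; positivity
  have : (A.image fun x => ⌊t x / δ⌋) ⊆ Finset.Icc (⌊t x₀ / δ⌋ - m) (⌊t x₀ / δ⌋ + m) := by
    intro i hi
    obtain ⟨x, hx, rfl⟩ := Finset.mem_image.1 hi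
    have := abs_le.1 (h x hx x₀ h0)
    have h1 : t x / δ ≤ t x₀ / δ + (m : ℤ) := by
      rw [div_add' _ _ _ hδ.ne']; gcongr; push_cast; linarith
    have h2 : t x₀ / δ ≤ t x / δ + (m : ℤ) := by
      rw [div_add' _ _ _ hδ.ne']; gcongr; push_cast; linarith
    have h1 := Int.floor_mono h1
    have h2 := Int.floor_mono h2
    rw [Int.floor_add_intCast] at h1 h2
    rw [Finset.mem_Icc]
    constructor <;> omega
  have := Finset.card_le_card this
  rw [Int.card_Icc] at this
  have e : (⌊t x₀ / δ⌋ + m + 1 - (⌊t x₀ / δ⌋ - m)).toNat = 2 * m + 1 := by omega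
  rw [e] at this
  exact_mod_cast this

lemma card_sq_le {t : ℤ × ℤ → ℝ} {A : Finset (ℤ × ℤ)} {L : ℝ} (hL : 0 ≤ L) (h : Dm t A L) :
    (A.card : ℝ) ^ 2 ≤ (2 * L + 3) * Sq t A := by
  have h1 := image_card (t := t) (A := A) one_pos ⌈L⌉₊ (h.mono subset_rfl (by
    rw [mul_one]; exact Nat.le_ceil L))
  have h2 := (Nat.ceil_lt_add_one hL).le
  simp only [div_one] at h1
  have h3 : (A.card : ℝ) = ∑ i ∈ A.image (fun x => ⌊t x⌋), ((A.filter fun x => ⌊t x⌋ = i).card : ℝ) := by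
    exact_mod_cast Finset.card_eq_sum_card_image (fun x => ⌊t x⌋) A
  have h4 := Sq_fiber t A (fun x => ⌊t x⌋)
  have h5 : ∀ i, Sq t (A.filter fun x => ⌊t x⌋ = i) = ((A.filter fun x => ⌊t x⌋ = i).card : ℝ) ^ 2 := by
    intro i
    unfold Sq
    rw [Finset.filter_true_of_mem, Finset.card_product]
    · push_cast; ring
    · intro p hp
      simp only [Finset.mem_product, Finset.mem_filter] at hp
      rw [hp.1.2, hp.2.2]
  simp only [h5] at h4
  have h6 := sq_sum_le_card_mul_sum_sq (s := A.image (fun x => ⌊t x⌋))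
    (f := fun i => ((A.filter fun x => ⌊t x⌋ = i).card : ℝ))
  rw [← h3] at h6
  refine h6.trans ?_
  have := Sq_nonneg t A
  have : (((A.image fun x => ⌊t x⌋).card : ℕ) : ℝ) ≤ 2 * L + 3 := by linarith
  gcongr

lemma Sq_one_le {t : ℤ × ℤ → ℝ} {A : Finset (ℤ × ℤ)} (h : A.Nonempty) : 1 ≤ Sq t A := by
  obtain ⟨x, hx⟩ := h
  unfold Sq
  have : 0 < ((A ×ˢ A).filter (fun p => ⌊t p.1⌋ = ⌊t p.2⌋)).card :=
    Finset.card_pos.2 ⟨(x, x), by simp [hx]⟩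
  exact_mod_cast this

lemma Pd_init (t : ℤ × ℤ → ℝ) (Λ : Finset (ℤ × ℤ)) {ε : ℝ} (hε : 0 < ε) :
    Pd t Λ ε ((Λ.card : ℝ) ^ 6) := by
  intro A hA L hL _
  have h1 := En_le_card A
  rcases A.eq_empty_or_nonempty with rfl | hne
  · simp at h1
    have := Sq_nonneg t ∅
    exact h1.trans (by positivity)
  · have h2 := Sq_one_le (t := t) hne
    have h3 : 1 ≤ L ^ ε := Real.one_le_rpow hL hε.le
    have h4 : (A.card : ℝ) ^ 6 ≤ (Λ.card : ℝ) ^ 6 := by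
      gcongr
    calc En A ≤ (Λ.card : ℝ) ^ 6 * 1 * 1 ^ 3 := by linarith
      _ ≤ _ := by gcongr

lemma cell {u δ : ℝ} (hδ : 0 < δ) {q : ℕ} (hq : 0 < q) :
    (⌊u / δ⌋ / (q : ℤ) : ℤ) * (q * δ) ≤ u ∧ u ≤ ((⌊u / δ⌋ / (q : ℤ) : ℤ) + 1) * (q * δ) := by
  set i := ⌊u / δ⌋
  have h1 : (i : ℝ) * δ ≤ u := by
    rw [← le_div_iff₀ hδ]; exact Int.floor_le _
  have h2 : u ≤ (i + 1) * δ := by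
    rw [← div_le_iff₀ hδ]; exact (Int.lt_floor_add_one _).le
  have hq' : (0 : ℤ) < q := by exact_mod_cast hq
  have h3 : (i / (q : ℤ)) * q ≤ i := Int.ediv_mul_le _ hq'.ne'
  have h4 : i + 1 ≤ (i / (q : ℤ) + 1) * q := Int.lt_ediv_add_one_mul_self i hq'
  have h3' : ((i / (q : ℤ) : ℤ) : ℝ) * q ≤ i := by exact_mod_cast h3
  have h4' : (i : ℝ) + 1 ≤ (((i / (q : ℤ) : ℤ) : ℝ) + 1) * q := by exact_mod_cast h4
  constructor
  · calc _ = (((i / (q : ℤ) : ℤ) : ℝ) * q) * δ := by ring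
      _ ≤ i * δ := by gcongr
      _ ≤ u := h1
  · calc u ≤ (i + 1) * δ := h2
      _ ≤ ((((i / (q : ℤ) : ℤ) : ℝ) + 1) * q) * δ := by gcongr
      _ = _ := by ring

set_option maxHeartbeats 2000000 in
lemma improve {ε : ℝ} (hε : 0 < ε) {C₀ : ℕ} (hC₀ : 1 ≤ C₀) :
    ∃ C₁ : ℝ, 0 < C₁ ∧ ∀ t Λ, Hyp t Λ C₀ → ∀ C, 0 ≤ C → Pd t Λ ε C → Pd t Λ ε (max (C / 2) C₁) := by
  obtain ⟨K, hK2, hKε⟩ : ∃ K : ℕ, 2 ≤ K ∧ 6 * (3 / (K : ℝ)) ^ ε ≤ 1 / 2 := by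
    have h1 : Filter.Tendsto (fun K : ℕ => 6 * (3 / (K : ℝ)) ^ ε) Filter.atTop (nhds (6 * (0 : ℝ) ^ ε)) := by
      apply Filter.Tendsto.const_mul
      apply Filter.Tendsto.rpow_const
      · exact tendsto_const_div_atTop_nhds_zero_nat 3
      · right; exact hε.le
    rw [Real.zero_rpow hε.ne', mul_zero] at h1
    have h2 := h1.eventually (gt_mem_nhds (show (0 : ℝ) < 1 / 2 by norm_num))
    obtain ⟨K, hK, hK2⟩ := (h2.and (Filter.eventually_ge_atTop 2)).exists
    exact ⟨K, hK2, hK.le⟩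
  have hK0 : (0 : ℝ) < K := by positivity
  set γ : ℝ := 1 / K with hγ
  have hγ0 : 0 < γ := by positivity
  have hγ1 : γ < 1 := by
    rw [hγ, div_lt_one hK0]; exact_mod_cast hK2
  set m : ℕ := C₀ * K ^ 2 with hm
  have hm0 : 0 < m := by positivity
  set M : ℝ := 2 * m + 1 with hM
  obtain ⟨n, hn⟩ : ∃ n : ℕ, (10 * M ^ 3) ^ 4 * (9 * γ ^ (n * ε / 2)) ≤ 1 / 2 := by
    have e : ∀ n : ℕ, γ ^ (n * ε / 2) = (γ ^ (ε / 2)) ^ n := by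
      intro n
      rw [← Real.rpow_natCast, ← Real.rpow_mul hγ0.le]; congr 1; ring
    have h1 := tendsto_pow_atTop_nhds_zero_of_lt_one (r := γ ^ (ε / 2)) (by positivity)
      (Real.rpow_lt_one hγ0.le hγ1 (by positivity))
    have h2 := (h1.const_mul 9).const_mul ((10 * M ^ 3) ^ 4)
    rw [mul_zero, mul_zero] at h2
    obtain ⟨n, hn⟩ := (h2.eventually (gt_mem_nhds (show (0 : ℝ) < 1 / 2 by norm_num))).exists
    exact ⟨n, by rw [e]; exact hn.le⟩
  set L₀ : ℝ := C₀ * K * K ^ (2 ^ n) with hL₀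
  refine ⟨(2 * L₀ + 3) ^ 3, by positivity, ?_⟩
  intro t Λ hH C hC hP A hA L hL hd
  have hS := Sq_nonneg t A
  have hL0 : 0 < L := by linarith
  have hLε : 1 ≤ L ^ ε := Real.one_le_rpow hL hε.le
  rcases lt_or_ge L L₀ with hlt | hge
  · have h1 := card_sq_le (by linarith) hd
    calc En A ≤ (A.card : ℝ) ^ 6 := En_le_card A
      _ = ((A.card : ℝ) ^ 2) ^ 3 := by ring
      _ ≤ ((2 * L + 3) * Sq t A) ^ 3 := by gcongr
      _ ≤ ((2 * L₀ + 3) * Sq t A) ^ 3 := by gcongr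
      _ = (2 * L₀ + 3) ^ 3 * 1 * Sq t A ^ 3 := by ring
      _ ≤ (2 * L₀ + 3) ^ 3 * L ^ ε * Sq t A ^ 3 := by gcongr
      _ ≤ _ := by gcongr; exact le_max_right _ _
  · suffices h : En A ≤ C / 2 * L ^ ε * Sq t A ^ 3 by
      refine h.trans ?_
      gcongr
      exact le_max_left _ _
    have hC0' : (1 : ℝ) ≤ C₀ := by exact_mod_cast hC₀
    have hK1 : (1 : ℝ) ≤ K := by exact_mod_cast (by omega : 1 ≤ K)
    set δ : ℝ := L / m with hδd
    have hmR : (0 : ℝ) < m := by exact_mod_cast hm0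
    have hδ : 0 < δ := by positivity
    set q : ℕ := C₀ * K with hqd
    have hq : 0 < q := by positivity
    have hqδ : (q : ℝ) * δ = L / K := by
      rw [hqd, hδd, hm]; push_cast; field_simp
    set κ : ℤ × ℤ → ℤ := fun x => ⌊t x / δ⌋ with hκ
    set g : ℤ → ℤ := fun i => i / (q : ℤ) with hg
    have hcell : ∀ x, (g (κ x) : ℝ) * (L / K) ≤ t x ∧ t x ≤ ((g (κ x) : ℝ) + 1) * (L / K) := by
      intro x
      have := cell (u := t x) hδ hq
      rw [hqδ] at this
      exact this
    have hLK : 0 < L / K := by positivity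
    have hLK1 : 1 ≤ L / K := by
      rw [le_div_iff₀ hK0, one_mul]
      refine le_trans ?_ hge
      have h2 : (1 : ℝ) ≤ (K : ℝ) ^ (2 ^ n) := one_le_pow₀ hK1
      calc (K : ℝ) = 1 * K * 1 := by ring
        _ ≤ C₀ * K * K ^ (2 ^ n) := by gcongr
    set N : ℝ := 9 * γ ^ (n * ε / 2) * C * L ^ ε * Sq t A ^ 3 with hNd
    have hN0 : 0 ≤ N := by positivity
    have hE := En_nonneg A
    set B : ℝ := (N * En A ^ 3) ^ ((1 : ℝ) / 4) with hBd
    have hB4 : B ^ 4 = N * En A ^ 3 := by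
      rw [hBd, ← Real.rpow_natCast, ← Real.rpow_mul (by positivity)]; norm_num
    have hB0 : 0 ≤ B := by positivity
    have bn := broad_narrow A κ g M N B (image_card hδ m (hd.mono subset_rfl (by
        rw [hδd]; apply le_of_eq; field_simp))) (by
      intro i j X Y hX hY hi hj hij
      have hsep : SepT t X Y (L / K) := by
        rcases le_abs.1 hij with h | h
        · right
          intro x hx y hy
          have h1 := (hcell x).1
          have h2 := (hcell y).2
          rw [hi x hx] at h1
          rw [hj y hy] at h2
          have h3 : (g j : ℝ) + 2 ≤ g i := by exact_mod_cast (by linarith : g j + 2 ≤ g i)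
          nlinarith
        · left
          intro x hx y hy
          have h1 := (hcell y).1
          have h2 := (hcell x).2
          rw [hi x hx] at h2
          rw [hj y hy] at h1
          have h3 : (g i : ℝ) + 2 ≤ g j := by exact_mod_cast (by linarith : g i + 2 ≤ g j)
          nlinarith
      have hY' : Dm t Y (γ * L / (C₀ * K)) := by
        have : γ * L / (C₀ * K) = δ := by
          rw [hδd, hγ, hm]; push_cast; field_simp
        rw [this]
        intro x hx y hy
        exact floor_same hδ ((hj x hx).trans (hj y hy).symm)
      have := bil hC0' hH hε hC hP hK1 hL n γ hγ0 hγ1.le X Y (hX.trans hA) (hY.trans hA) hsep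
        (hd.mono hX le_rfl) hY' (by
          rw [le_div_iff₀ (by positivity), hγ, div_pow, one_pow, one_div, one_mul,
            le_inv_mul_iff₀ (by positivity)]
          refine le_trans (le_of_eq ?_) hge
          rw [hL₀]; ring)
      refine this.trans ?_
      rw [hNd]
      have s1 := Sq_mono (t := t) hX
      have s2 := Sq_mono (t := t) hY
      have s3 := Sq_nonneg t X
      have s4 := Sq_nonneg t Y
      have : Sq t X * Sq t Y ^ 2 ≤ Sq t A ^ 3 := by
        calc _ ≤ Sq t A * Sq t A ^ 2 := by gcongr
          _ = _ := by ring
      gcongr) hB0 hB4.ge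
    have nar : ∑ k ∈ A.image (fun x => g (κ x)), En (A.filter fun x => |g (κ x) - k| ≤ 1) ≤
        C / 4 * L ^ ε * Sq t A ^ 3 := by
      have p : ∀ k, En (A.filter fun x => |g (κ x) - k| ≤ 1) ≤
          C * (3 * (L / K)) ^ ε * Sq t A ^ 2 * Sq t (A.filter fun x => |g (κ x) - k| ≤ 1) := by
        intro k
        have := hP (A.filter fun x => |g (κ x) - k| ≤ 1) ((Finset.filter_subset _ _).trans hA)
          (3 * (L / K)) (by linarith) (by
            intro x hx y hy
            have hx := abs_le.1 (Finset.mem_filter.1 hx).2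
            have hy := abs_le.1 (Finset.mem_filter.1 hy).2
            have x1 := hcell x
            have y1 := hcell y
            have a1 : (k : ℝ) - 1 ≤ g (κ x) := by exact_mod_cast (by linarith : k - 1 ≤ g (κ x))
            have a2 : (g (κ x) : ℝ) ≤ k + 1 := by exact_mod_cast (by linarith : g (κ x) ≤ k + 1)
            have b1 : (k : ℝ) - 1 ≤ g (κ y) := by exact_mod_cast (by linarith : k - 1 ≤ g (κ y))
            have b2 : (g (κ y) : ℝ) ≤ k + 1 := by exact_mod_cast (by linarith : g (κ y) ≤ k + 1)
            rw [abs_le]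
            constructor <;> nlinarith)
        refine this.trans ?_
        have s1 := Sq_mono (t := t) (Finset.filter_subset (fun x => |g (κ x) - k| ≤ 1) A)
        have s3 := Sq_nonneg t (A.filter fun x => |g (κ x) - k| ≤ 1)
        generalize Sq t (A.filter fun x => |g (κ x) - k| ≤ 1) = z at *
        have : z ^ 3 ≤ Sq t A ^ 2 * z := by
          calc z ^ 3 = z ^ 2 * z := by ring
            _ ≤ _ := by gcongr
        calc _ ≤ C * (3 * (L / K)) ^ ε * (Sq t A ^ 2 * z) := by gcongr
          _ = _ := by ring
      refine (Finset.sum_le_sum fun k _ => p k).trans ?_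
      rw [← Finset.mul_sum]
      have w := Sq_window t A (fun x => g (κ x)) (A.image (fun x => g (κ x)))
      have e : (3 * (L / K)) ^ ε = (3 / K) ^ ε * L ^ ε := by
        rw [← Real.mul_rpow (by positivity) (by positivity)]; congr 1; ring
      calc _ ≤ C * (3 * (L / K)) ^ ε * Sq t A ^ 2 * (3 * Sq t A) := by gcongr
        _ = C / 2 * L ^ ε * Sq t A ^ 3 * (6 * (3 / K) ^ ε) := by rw [e]; ring
        _ ≤ C / 2 * L ^ ε * Sq t A ^ 3 * (1 / 2) := by gcongr
        _ = _ := by ring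
    by_cases hcase : En A ≤ 2 * (C / 4 * L ^ ε * Sq t A ^ 3)
    · linarith
    · have hpos : 0 ≤ C / 4 * L ^ ε * Sq t A ^ 3 := by positivity
      have hEpos : 0 < En A := by linarith
      have h1 : En A ≤ 10 * M ^ 3 * B := by linarith
      have h2 : En A ^ 4 ≤ (10 * M ^ 3) ^ 4 * (N * En A ^ 3) := by
        rw [← hB4, ← mul_pow]; gcongr
      have h3 : En A ≤ (10 * M ^ 3) ^ 4 * N := by
        have : En A * En A ^ 3 ≤ ((10 * M ^ 3) ^ 4 * N) * En A ^ 3 := by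
          calc _ = En A ^ 4 := by ring
            _ ≤ _ := h2
            _ = _ := by ring
        exact le_of_mul_le_mul_right this (by positivity)
      calc En A ≤ (10 * M ^ 3) ^ 4 * N := h3
        _ = ((10 * M ^ 3) ^ 4 * (9 * γ ^ (n * ε / 2))) * (C * L ^ ε * Sq t A ^ 3) := by rw [hNd]; ring
        _ ≤ (1 / 2) * (C * L ^ ε * Sq t A ^ 3) := by gcongr
        _ = _ := by ring

theorem decoup {ε : ℝ} (hε : 0 < ε) {C₀ : ℕ} (hC₀ : 1 ≤ C₀) :
    ∃ C₁ : ℝ, 0 < C₁ ∧ ∀ t Λ, Hyp t Λ C₀ → Pd t Λ ε C₁ := by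
  obtain ⟨C₁, h1, h⟩ := improve hε hC₀
  refine ⟨C₁, h1, fun t Λ hH => ?_⟩
  have it : ∀ k : ℕ, Pd t Λ ε (max ((Λ.card : ℝ) ^ 6 / 2 ^ k) C₁) := by
    intro k
    induction k with
    | zero =>
      intro A hA L hL hd
      refine (Pd_init t Λ hε A hA L hL hd).trans ?_
      have := Sq_nonneg t A
      gcongr
      simp
    | succ k ih =>
      have := h t Λ hH _ (by positivity) ih
      have e : max (max ((Λ.card : ℝ) ^ 6 / 2 ^ k) C₁ / 2) C₁ = max ((Λ.card : ℝ) ^ 6 / 2 ^ (k + 1)) C₁ := by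
        rw [← max_div_div_right (by norm_num : (0 : ℝ) ≤ 2), max_assoc,
          max_eq_right (by linarith : C₁ / 2 ≤ C₁), pow_succ 2 k, div_div]
      rw [e] at this
      exact this
  have h2 : Filter.Tendsto (fun k : ℕ => (Λ.card : ℝ) ^ 6 * (1 / 2) ^ k) Filter.atTop (nhds ((Λ.card : ℝ) ^ 6 * 0)) :=
    (tendsto_pow_atTop_nhds_zero_of_lt_one (by norm_num) (by norm_num)).const_mul _
  rw [mul_zero] at h2
  obtain ⟨k, hk⟩ := (h2.eventually (gt_mem_nhds h1)).exists
  have := it k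
  rw [max_eq_right] at this
  · exact this
  · refine le_of_eq_of_le ?_ hk.le
    rw [div_pow, one_pow]; ring


/-! ### Geometry of the arc -/

/-- Lattice points of the thickened arc in the quadrant around the first axis. -/
def Arc (ρ : ℝ) (p : ℤ × ℤ) : Prop :=
  ρ ^ 6 ≤ (p.1 : ℝ) ^ 2 + (p.2 : ℝ) ^ 2 ∧ (p.1 : ℝ) ^ 2 + (p.2 : ℝ) ^ 2 ≤ ρ ^ 6 + 3 * ρ ^ 2 ∧
    |(p.2 : ℝ)| ≤ p.1

lemma rho_facts {ρ : ℝ} (h : 10 ≤ ρ) : 1000 * ρ ^ 2 ≤ ρ ^ 5 ∧ 100 ≤ ρ ^ 2 ∧ 10 * ρ ^ 2 ≤ ρ ^ 3 ∧ 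
    1000 ≤ ρ ^ 3 ∧ 10 * ρ ^ 5 ≤ ρ ^ 6 := by
  have h1 : 100 ≤ ρ ^ 2 := by nlinarith
  have h2 : 10 * ρ ^ 2 ≤ ρ ^ 3 := by nlinarith
  have h3 : 1000 ≤ ρ ^ 3 := by nlinarith
  have h5 : 1000 * ρ ^ 2 ≤ ρ ^ 5 := by nlinarith
  have h6 : 10 * ρ ^ 5 ≤ ρ ^ 6 := by
    have : 0 ≤ ρ ^ 5 := by positivity
    nlinarith
  exact ⟨h5, h1, h2, h3, h6⟩

lemma Arc.bounds {ρ : ℝ} {p : ℤ × ℤ} (hρ : 10 ≤ ρ) (h : Arc ρ p) :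
    0.7 * ρ ^ 3 ≤ p.1 ∧ (p.1 : ℝ) ≤ 1.01 * ρ ^ 3 ∧ |(p.2 : ℝ)| ≤ ρ ^ 3 := by
  obtain ⟨h1, h2, h3⟩ := h
  obtain ⟨f5, f2, f3, f0, f6⟩ := rho_facts hρ
  have h0 : (0 : ℝ) ≤ p.1 := (abs_nonneg _).trans h3
  have h4 : (p.2 : ℝ) ^ 2 ≤ (p.1 : ℝ) ^ 2 := by
    rw [← sq_abs (p.2 : ℝ)]; gcongr
  have e : ρ ^ 6 = (ρ ^ 3) ^ 2 := by ring
  refine ⟨?_, ?_, ?_⟩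
  · apply le_of_sq_le_sq _ h0
    nlinarith
  · apply le_of_sq_le_sq _ (by positivity)
    nlinarith
  · apply le_of_sq_le_sq _ (by positivity)
    rw [sq_abs]
    nlinarith

/-- Second coordinates control first coordinates. -/
lemma Arc.diff {ρ : ℝ} {p q : ℤ × ℤ} (hρ : 10 ≤ ρ) (hp : Arc ρ p) (hq : Arc ρ q) :
    |p.1 - q.1| ≤ |p.2 - q.2| := by
  obtain ⟨p1, p2, p3⟩ := hp.bounds hρ
  obtain ⟨q1, q2, q3⟩ := hq.bounds hρ
  obtain ⟨f5, f2, f3, f0, f6⟩ := rho_facts hρ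
  have hp3 := hp.2.2
  have hq3 := hq.2.2
  have hs : 0 < (p.1 : ℝ) + q.1 := by linarith
  have h1 : |(p.1 : ℝ) - q.1| * (p.1 + q.1) ≤ |(p.2 : ℝ) - q.2| * (p.1 + q.1) + 3 * ρ ^ 2 := by
    have e : ((p.1 : ℝ) - q.1) * (p.1 + q.1) = - (((p.2 : ℝ) - q.2) * (p.2 + q.2)) +
      (((p.1 : ℝ) ^ 2 + (p.2 : ℝ) ^ 2) - ((q.1 : ℝ) ^ 2 + (q.2 : ℝ) ^ 2)) := by ring
    have b1 : |((p.1 : ℝ) ^ 2 + (p.2 : ℝ) ^ 2) - ((q.1 : ℝ) ^ 2 + (q.2 : ℝ) ^ 2)| ≤ 3 * ρ ^ 2 := by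
      rw [abs_le]
      constructor <;> linarith [hp.1, hp.2.1, hq.1, hq.2.1]
    calc |(p.1 : ℝ) - q.1| * (p.1 + q.1) = |((p.1 : ℝ) - q.1) * (p.1 + q.1)| := by
          rw [abs_mul, abs_of_pos hs]
      _ ≤ |(p.2 : ℝ) - q.2| * |(p.2 : ℝ) + q.2| + 3 * ρ ^ 2 := by
          rw [e]
          refine (abs_add_le _ _).trans ?_
          rw [abs_neg, abs_mul]
          linarith
      _ ≤ _ := by
          have : |(p.2 : ℝ) + q.2| ≤ p.1 + q.1 := (abs_add_le _ _).trans (by linarith)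
          gcongr
  by_contra hcon
  push Not at hcon
  have h2 : |(p.2 : ℝ) - q.2| + 1 ≤ |(p.1 : ℝ) - q.1| := by exact_mod_cast hcon
  have : (|(p.2 : ℝ) - q.2| + 1) * (p.1 + q.1) ≤ |(p.1 : ℝ) - q.1| * (p.1 + q.1) := by gcongr
  nlinarith

lemma Arc.inj {ρ : ℝ} {p q : ℤ × ℤ} (hρ : 10 ≤ ρ) (hp : Arc ρ p) (hq : Arc ρ q) (h : p.2 = q.2) :
    p = q := by
  have := hp.diff hρ hq
  rw [h, sub_self, abs_zero] at this
  have := abs_nonpos_iff.1 this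
  ext
  · omega
  · exact h

/-- Dot products with differences are small. -/
lemma Arc.dot {ρ β : ℝ} {p q : ℤ × ℤ} (hρ : 10 ≤ ρ) (hp : Arc ρ p) (hq : Arc ρ q)
    (hβ : |(q.2 : ℝ) - p.2| ≤ β) :
    |(p.1 : ℝ) * (q.1 - p.1) + p.2 * (q.2 - p.2)| ≤ (3 * ρ ^ 2 + 2 * β ^ 2) / 2 := by
  have hd : |(q.1 : ℝ) - p.1| ≤ |(q.2 : ℝ) - p.2| := by exact_mod_cast hq.diff hρ hp
  have s2 : ((q.2 : ℝ) - p.2) ^ 2 ≤ β ^ 2 := by rw [← sq_abs]; gcongr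
  have s1 : ((q.1 : ℝ) - p.1) ^ 2 ≤ β ^ 2 := by rw [← sq_abs]; gcongr; linarith
  have := sq_nonneg ((q.1 : ℝ) - p.1)
  have := sq_nonneg ((q.2 : ℝ) - p.2)
  have e : (p.1 : ℝ) * (q.1 - p.1) + p.2 * (q.2 - p.2) =
    (((q.1 : ℝ) ^ 2 + (q.2 : ℝ) ^ 2) - ((p.1 : ℝ) ^ 2 + (p.2 : ℝ) ^ 2) - ((q.1 : ℝ) - p.1) ^ 2
      - ((q.2 : ℝ) - p.2) ^ 2) / 2 := by ring
  rw [e, abs_le]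
  constructor <;> linarith [hp.1, hp.2.1, hq.1, hq.2.1]

/-- Transversality. -/
lemma Arc.cross {ρ : ℝ} {p q : ℤ × ℤ} (hρ : 10 ≤ ρ) (hp : Arc ρ p) (hq : Arc ρ q)
    (h : q.2 < p.2) : ((p.2 : ℝ) - q.2) * ρ ^ 3 / 5 ≤ (q.1 : ℝ) * p.2 - q.2 * p.1 := by
  obtain ⟨p1, p2, p3⟩ := hp.bounds hρ
  obtain ⟨q1, q2, q3⟩ := hq.bounds hρ
  obtain ⟨f5, f2, f3, f0, f6⟩ := rho_facts hρ
  have hs : 0 < (p.1 : ℝ) + q.1 := by linarith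
  have h1 : (1 : ℝ) ≤ p.2 - q.2 := by
    have : q.2 + 1 ≤ p.2 := h
    have : (q.2 : ℝ) + 1 ≤ p.2 := by exact_mod_cast this
    linarith
  have e : ((p.1 : ℝ) + q.1) * ((q.1 : ℝ) * p.2 - q.2 * p.1) =
      ((p.2 : ℝ) - q.2) * ((p.1 : ℝ) * q.1 + p.2 * q.2 + ((q.1 : ℝ) ^ 2 + (q.2 : ℝ) ^ 2)) +
      q.2 * (((q.1 : ℝ) ^ 2 + (q.2 : ℝ) ^ 2) - ((p.1 : ℝ) ^ 2 + (p.2 : ℝ) ^ 2)) := by ring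
  have b1 : |((q.1 : ℝ) ^ 2 + (q.2 : ℝ) ^ 2) - ((p.1 : ℝ) ^ 2 + (p.2 : ℝ) ^ 2)| ≤ 3 * ρ ^ 2 := by
    rw [abs_le]
    constructor <;> linarith [hp.1, hp.2.1, hq.1, hq.2.1]
  have b2 : -(3 * ρ ^ 5) ≤ (q.2 : ℝ) * (((q.1 : ℝ) ^ 2 + (q.2 : ℝ) ^ 2) - ((p.1 : ℝ) ^ 2 + (p.2 : ℝ) ^ 2)) := by
    have : |(q.2 : ℝ) * (((q.1 : ℝ) ^ 2 + (q.2 : ℝ) ^ 2) - ((p.1 : ℝ) ^ 2 + (p.2 : ℝ) ^ 2))| ≤ ρ ^ 3 * (3 * ρ ^ 2) := by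
      rw [abs_mul]; gcongr
    have := (abs_le.1 this).1
    linarith
  have b3 : 0 ≤ (p.1 : ℝ) * q.1 + p.2 * q.2 := by
    have : |(p.2 : ℝ) * q.2| ≤ p.1 * q.1 := by
      rw [abs_mul]
      have := hp.2.2
      have := hq.2.2
      have : (0 : ℝ) ≤ p.1 := by linarith
      gcongr
    linarith [(abs_le.1 this).1]
  have b4 : ((p.2 : ℝ) - q.2) * ρ ^ 6 ≤ ((p.2 : ℝ) - q.2) *
      ((p.1 : ℝ) * q.1 + p.2 * q.2 + ((q.1 : ℝ) ^ 2 + (q.2 : ℝ) ^ 2)) := by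
    have := hq.1
    apply mul_le_mul_of_nonneg_left _ (by linarith)
    linarith
  have b5 : 10 * ρ ^ 5 ≤ ((p.2 : ℝ) - q.2) * ρ ^ 6 := by
    have : 0 ≤ ρ ^ 6 := by positivity
    nlinarith
  have b6 : 0.7 * (((p.2 : ℝ) - q.2) * ρ ^ 6) ≤ ((p.1 : ℝ) + q.1) * ((q.1 : ℝ) * p.2 - q.2 * p.1) := by
    rw [e]; linarith
  have b7 : ((p.1 : ℝ) + q.1) * (((p.2 : ℝ) - q.2) * ρ ^ 3 / 5) ≤ 0.7 * (((p.2 : ℝ) - q.2) * ρ ^ 6) := by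
    have : 0 ≤ (((p.2 : ℝ) - q.2) * ρ ^ 3 / 5) := by positivity
    calc _ ≤ (2.02 * ρ ^ 3) * (((p.2 : ℝ) - q.2) * ρ ^ 3 / 5) := by gcongr; linarith
      _ = 0.404 * (((p.2 : ℝ) - q.2) * ρ ^ 6) := by ring
      _ ≤ _ := by
        have : 0 ≤ ((p.2 : ℝ) - q.2) * ρ ^ 6 := by positivity
        linarith
  exact le_of_mul_le_mul_left (b7.trans b6) hs

/-- Transversality, symmetric form. -/
lemma Arc.cross_abs {ρ : ℝ} {p q : ℤ × ℤ} (hρ : 10 ≤ ρ) (hp : Arc ρ p) (hq : Arc ρ q) :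
    |(p.2 : ℝ) - q.2| * ρ ^ 3 / 5 ≤ |(q.1 : ℝ) * p.2 - q.2 * p.1| := by
  rcases lt_trichotomy p.2 q.2 with h | h | h
  · have := hq.cross hρ hp h
    have h' : (p.2 : ℝ) < q.2 := by exact_mod_cast h
    rw [abs_of_neg (by linarith), neg_sub, abs_sub_comm]
    refine this.trans ?_
    refine le_trans (le_of_eq ?_) (le_abs_self _)
    ring
  · rw [h, sub_self, abs_zero, zero_mul, zero_div]; positivity
  · have := hp.cross hρ hq h
    have h' : (q.2 : ℝ) < p.2 := by exact_mod_cast h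
    rw [abs_of_pos (by linarith)]
    exact this.trans (le_abs_self _)

/-- The arc parameter. -/
def tt (ρ : ℝ) (p : ℤ × ℤ) : ℝ := (p.2 : ℝ) / (ρ / 10)

lemma hyp_core {ρ σ β : ℝ} (hρ : 10 ≤ ρ) (hσ : 0 < σ) (hβ : ρ / 10 ≤ β) {x x' c z₂ z₃ z₄ : ℤ × ℤ}
    (hx : Arc ρ x) (hx' : Arc ρ x') (hc : Arc ρ c) (h2 : Arc ρ z₂) (h3 : Arc ρ z₃) (h4 : Arc ρ z₄)
    (d2 : |(z₂.2 : ℝ) - c.2| ≤ β) (d3 : |(z₃.2 : ℝ) - c.2| ≤ β) (d4 : |(z₄.2 : ℝ) - c.2| ≤ β)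
    (hs : ((x.2 : ℝ) + σ ≤ c.2 ∧ (x'.2 : ℝ) + σ ≤ c.2) ∨ ((c.2 : ℝ) + σ ≤ x.2 ∧ (c.2 : ℝ) + σ ≤ x'.2))
    (heq : x + c + z₂ = x' + z₃ + z₄) : |(x.2 : ℝ) - x'.2| * σ ≤ 4000 * β ^ 2 := by
  obtain ⟨c1, c2, c3⟩ := hc.bounds hρ
  obtain ⟨x1, x2, x3⟩ := hx.bounds hρ
  obtain ⟨y1, y2, y3⟩ := hx'.bounds hρ
  have e1 := congrArg Prod.fst heq
  have e2 := congrArg Prod.snd heq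
  simp only [Prod.fst_add, Prod.snd_add] at e1 e2
  have e1 : (x.1 : ℝ) + c.1 + z₂.1 = x'.1 + z₃.1 + z₄.1 := by exact_mod_cast e1
  have e2 : (x.2 : ℝ) + c.2 + z₂.2 = x'.2 + z₃.2 + z₄.2 := by exact_mod_cast e2
  have k2 := hc.dot hρ h2 d2
  have k3 := hc.dot hρ h3 d3
  have k4 := hc.dot hρ h4 d4
  have hρ0 : 0 < ρ := by linarith
  have hβ2 : ρ ^ 2 ≤ 100 * β ^ 2 := by nlinarith
  have hβ0 : 0 ≤ β ^ 2 := by positivity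
  set e := (x.2 : ℝ) - x'.2 with he
  have ce : |(c.1 : ℝ) * (x.1 - x'.1) + c.2 * e| ≤ 453 * β ^ 2 := by
    have : (c.1 : ℝ) * (x.1 - x'.1) + c.2 * e = ((c.1 : ℝ) * (z₃.1 - c.1) + c.2 * (z₃.2 - c.2)) +
      ((c.1 : ℝ) * (z₄.1 - c.1) + c.2 * (z₄.2 - c.2)) - ((c.1 : ℝ) * (z₂.1 - c.1) + c.2 * (z₂.2 - c.2)) := by
      have r1 : (x.1 : ℝ) - x'.1 = (z₃.1 - c.1) + (z₄.1 - c.1) - (z₂.1 - c.1) := by linarith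
      have r2 : e = (z₃.2 - c.2) + (z₄.2 - c.2) - (z₂.2 - c.2) := by linarith
      rw [r1, r2]; ring
    rw [this]
    have := abs_le.1 k2
    have := abs_le.1 k3
    have := abs_le.1 k4
    rw [abs_le]; constructor <;> linarith
  have me : |((x.1 : ℝ) + x'.1) * (x.1 - x'.1) + (x.2 + x'.2) * e| ≤ 300 * β ^ 2 := by
    have : ((x.1 : ℝ) + x'.1) * (x.1 - x'.1) + (x.2 + x'.2) * e =
      ((x.1 : ℝ) ^ 2 + (x.2 : ℝ) ^ 2) - ((x'.1 : ℝ) ^ 2 + (x'.2 : ℝ) ^ 2) := by rw [he]; ring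
    rw [this, abs_le]
    constructor <;> linarith [hx.1, hx.2.1, hx'.1, hx'.2.1]
  have r0 : 0 < ρ ^ 3 := by positivity
  have hcr : 2 * σ * ρ ^ 3 / 5 ≤ |(c.1 : ℝ) * (x.2 + x'.2) - (x.1 + x'.1) * c.2| := by
    rcases hs with ⟨s1, s2⟩ | ⟨s1, s2⟩
    · have a1 := hc.cross hρ hx (by exact_mod_cast (by linarith : (x.2 : ℝ) < c.2))
      have a2 := hc.cross hρ hx' (by exact_mod_cast (by linarith : (x'.2 : ℝ) < c.2))
      have b1 : σ * ρ ^ 3 ≤ ((c.2 : ℝ) - x.2) * ρ ^ 3 := by gcongr; linarith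
      have b2 : σ * ρ ^ 3 ≤ ((c.2 : ℝ) - x'.2) * ρ ^ 3 := by gcongr; linarith
      rw [abs_sub_comm]
      refine le_trans ?_ (le_abs_self _)
      linarith
    · have a1 := hx.cross hρ hc (by exact_mod_cast (by linarith : (c.2 : ℝ) < x.2))
      have a2 := hx'.cross hρ hc (by exact_mod_cast (by linarith : (c.2 : ℝ) < x'.2))
      have b1 : σ * ρ ^ 3 ≤ ((x.2 : ℝ) - c.2) * ρ ^ 3 := by gcongr; linarith
      have b2 : σ * ρ ^ 3 ≤ ((x'.2 : ℝ) - c.2) * ρ ^ 3 := by gcongr; linarith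
      refine le_trans ?_ (le_abs_self _)
      linarith
  have id : ((c.1 : ℝ) * (x.2 + x'.2) - (x.1 + x'.1) * c.2) * e =
      c.1 * (((x.1 : ℝ) + x'.1) * (x.1 - x'.1) + (x.2 + x'.2) * e) -
      (x.1 + x'.1) * ((c.1 : ℝ) * (x.1 - x'.1) + c.2 * e) := by ring
  have up : |((c.1 : ℝ) * (x.2 + x'.2) - (x.1 + x'.1) * c.2) * e| ≤
      (1.01 * ρ ^ 3) * (300 * β ^ 2) + (2.02 * ρ ^ 3) * (453 * β ^ 2) := by
    rw [id]
    refine (abs_sub _ _).trans ?_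
    rw [abs_mul, abs_mul, abs_of_nonneg (by linarith : (0 : ℝ) ≤ c.1),
      abs_of_nonneg (by linarith : (0 : ℝ) ≤ x.1 + x'.1)]
    gcongr
    linarith
  rw [abs_mul] at up
  have lo : 2 * σ * ρ ^ 3 / 5 * |e| ≤ |(c.1 : ℝ) * (x.2 + x'.2) - (x.1 + x'.1) * c.2| * |e| := by gcongr
  have : ρ ^ 3 * (|e| * σ) ≤ ρ ^ 3 * (4000 * β ^ 2) := by
    have : 0 ≤ ρ ^ 3 * β ^ 2 := by positivity
    nlinarith
  exact le_of_mul_le_mul_left this r0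

lemma hyp_arc {ρ : ℝ} (hρ : 10 ≤ ρ) (Λ : Finset (ℤ × ℤ)) (hΛ : ∀ p ∈ Λ, Arc ρ p) :
    Hyp (tt ρ) Λ ((4000 : ℕ) : ℝ) := by
  intro b s hb hs X Y hX hY hsep hd x hx x' hx' y₁ h1 y₂ h2 y₃ h3 y₄ h4 heq
  set l := ρ / 10 with hl
  have hl0 : 0 < l := by positivity
  have ht : ∀ p, (p.2 : ℝ) = tt ρ p * l := by
    intro p; unfold tt; rw [← hl]; field_simp
  have dd : ∀ z ∈ Y, |(z.2 : ℝ) - y₁.2| ≤ b * l := by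
    intro z hz
    have := hd z hz y₁ h1
    rw [ht z, ht y₁, ← sub_mul, abs_mul, abs_of_pos hl0]
    gcongr
  have := hyp_core (σ := s * l) (β := b * l) hρ (by positivity) (by nlinarith) (hΛ x (hX hx)) (hΛ x' (hX hx'))
    (hΛ y₁ (hY h1)) (hΛ y₂ (hY h2)) (hΛ y₃ (hY h3)) (hΛ y₄ (hY h4)) (dd y₂ h2) (dd y₃ h3) (dd y₄ h4) (by
      simp only [ht]
      simp only [← add_mul]
      rcases hsep with h | h
      · left
        have a := h x hx y₁ h1
        have b := h x' hx' y₁ h1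
        constructor <;> gcongr
      · right
        have a := h x hx y₁ h1
        have b := h x' hx' y₁ h1
        constructor <;> gcongr) heq
  rw [le_div_iff₀ hs]
  rw [ht x, ht x', ← sub_mul, abs_mul, abs_of_pos hl0] at this
  have h2 : (|tt ρ x - tt ρ x'| * s) * l ^ 2 ≤ (4000 * b ^ 2) * l ^ 2 := by
    calc _ = |tt ρ x - tt ρ x'| * l * (s * l) := by ring
      _ ≤ _ := this
      _ = _ := by ring
  push_cast
  exact le_of_mul_le_mul_right h2 (by positivity)


/-! ### Counting pairs in caps -/

lemma Arc.collinear {ρ : ℝ} {p q r : ℤ × ℤ} (hρ : 10 ≤ ρ) (hp : Arc ρ p) (hq : Arc ρ q) (hr : Arc ρ r)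
    (h1 : |(q.2 : ℝ) - p.2| ≤ ρ / 10) (h2 : |(r.2 : ℝ) - p.2| ≤ ρ / 10) :
    (q.1 - p.1) * (r.2 - p.2) = (q.2 - p.2) * (r.1 - p.1) := by
  obtain ⟨p1, p2, p3⟩ := hp.bounds hρ
  have k1 := hp.dot hρ hq h1
  have k2 := hp.dot hρ hr h2
  have hρ0 : 0 < ρ := by linarith
  have k : (3 * ρ ^ 2 + 2 * (ρ / 10) ^ 2) / 2 ≤ 2 * ρ ^ 2 := by nlinarith
  have k1 := k1.trans k
  have k2 := k2.trans k
  have id : (p.1 : ℝ) * (((q.1 : ℝ) - p.1) * (r.2 - p.2) - (q.2 - p.2) * (r.1 - p.1)) =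
      ((p.1 : ℝ) * (q.1 - p.1) + p.2 * (q.2 - p.2)) * (r.2 - p.2) -
      ((p.1 : ℝ) * (r.1 - p.1) + p.2 * (r.2 - p.2)) * (q.2 - p.2) := by ring
  have up : |(p.1 : ℝ) * (((q.1 : ℝ) - p.1) * (r.2 - p.2) - (q.2 - p.2) * (r.1 - p.1))| ≤
      (2 * ρ ^ 2) * (ρ / 10) + (2 * ρ ^ 2) * (ρ / 10) := by
    rw [id]
    refine (abs_sub _ _).trans ?_
    rw [abs_mul, abs_mul]
    gcongr
  have r0 : 0 < ρ ^ 3 := by positivity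
  rw [abs_mul, abs_of_nonneg (by linarith : (0 : ℝ) ≤ p.1)] at up
  by_contra hcon
  have h0 : (q.1 - p.1) * (r.2 - p.2) - (q.2 - p.2) * (r.1 - p.1) ≠ 0 := sub_ne_zero.2 hcon
  have h1 := Int.one_le_abs h0
  have h2 : (1 : ℝ) ≤ |((q.1 : ℝ) - p.1) * (r.2 - p.2) - (q.2 - p.2) * (r.1 - p.1)| := by
    exact_mod_cast h1
  nlinarith

lemma near_low {ρ : ℝ} {n : ℕ} {z z' D : ℤ × ℤ} (hρ : 10 ≤ ρ) (hn : 1 ≤ n) (hD : D.2 = n)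
    (hnρ : (n : ℝ) ≤ ρ / 10) (hz : Arc ρ z) (hz' : Arc ρ z') (h : Arc ρ (z + D)) (h' : Arc ρ (z' + D)) :
    |tt ρ z - tt ρ z'| ≤ 250 * ρ / n := by
  have hρ0 : 0 < ρ := by linarith
  have hn0 : (0 : ℝ) < n := by exact_mod_cast hn
  have k : (3 * ρ ^ 2 + 2 * (ρ / 10) ^ 2) / 2 ≤ 2 * ρ ^ 2 := by nlinarith
  have hD' : (D.2 : ℝ) = n := by exact_mod_cast hD
  have k1 := (hz.dot hρ h (β := ρ / 10) (by
    simp only [Prod.snd_add]; push_cast; rw [hD', add_sub_cancel_left, abs_of_pos hn0]; exact hnρ)).trans k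
  have k2 := (hz'.dot hρ h' (β := ρ / 10) (by
    simp only [Prod.snd_add]; push_cast; rw [hD', add_sub_cancel_left, abs_of_pos hn0]; exact hnρ)).trans k
  simp only [Prod.snd_add, Prod.fst_add] at k1 k2
  push_cast at k1 k2
  rw [hD', add_sub_cancel_left, add_sub_cancel_left] at k1 k2
  obtain ⟨z1, z2, z3⟩ := hz.bounds hρ
  obtain ⟨y1, y2, y3⟩ := hz'.bounds hρ
  have cr := hz.cross_abs hρ hz'
  have id : (n : ℝ) * ((z'.1 : ℝ) * z.2 - z'.2 * z.1) = z'.1 * ((z.1 : ℝ) * D.1 + z.2 * n) -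
    z.1 * ((z'.1 : ℝ) * D.1 + z'.2 * n) := by ring
  have r0 : 0 < ρ ^ 3 := by positivity
  have up : |(n : ℝ) * ((z'.1 : ℝ) * z.2 - z'.2 * z.1)| ≤ (1.01 * ρ ^ 3) * (2 * ρ ^ 2) + (1.01 * ρ ^ 3) * (2 * ρ ^ 2) := by
    rw [id]
    refine (abs_sub _ _).trans ?_
    rw [abs_mul, abs_mul, abs_of_nonneg (by linarith : (0 : ℝ) ≤ z'.1), abs_of_nonneg (by linarith : (0 : ℝ) ≤ z.1)]
    gcongr
  rw [abs_mul, abs_of_pos hn0] at up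
  have h5 : ρ ^ 3 * (n * |(z.2 : ℝ) - z'.2|) ≤ ρ ^ 3 * (25 * ρ ^ 2) := by
    have : n * (|(z.2 : ℝ) - z'.2| * ρ ^ 3 / 5) ≤ n * |(z'.1 : ℝ) * z.2 - z'.2 * z.1| := by gcongr
    have : 0 ≤ ρ ^ 3 * ρ ^ 2 := by positivity
    nlinarith
  have h6 := le_of_mul_le_mul_left h5 r0
  unfold tt
  rw [← sub_div, abs_div, abs_of_pos (by positivity : 0 < ρ / 10), div_le_div_iff₀ (by positivity) hn0]
  nlinarith

lemma gcd_count (n a : ℕ) (hn : 1 ≤ n) :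
    ((Finset.range n).filter fun m => n ∣ a * m).card ≤ Nat.gcd n a := by
  have hg : 0 < Nat.gcd n a := Nat.gcd_pos_of_pos_left _ hn
  obtain ⟨n', a', hc, e1, e2⟩ := Nat.exists_coprime n a
  set g := Nat.gcd n a with hgd
  have : ((Finset.range n).filter fun m => n ∣ a * m) ⊆ (Finset.range g).image (fun i => i * n') := by
    intro m hm
    simp only [Finset.mem_filter, Finset.mem_range, Finset.mem_image] at hm ⊢
    obtain ⟨hm1, hm2⟩ := hm
    have h1 : n' ∣ a' * m := by
      have : n' * g ∣ (a' * m) * g := by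
        rw [← e1]; convert hm2 using 1; conv_rhs => rw [e2]
        ring
      exact Nat.dvd_of_mul_dvd_mul_right hg this
    have h2 : n' ∣ m := hc.dvd_of_dvd_mul_left h1
    obtain ⟨i, rfl⟩ := h2
    refine ⟨i, ?_, by ring⟩
    rw [e1] at hm1
    exact lt_of_mul_lt_mul_left hm1 (Nat.zero_le _)
  exact (Finset.card_le_card this).trans (Finset.card_image_le.trans (by simp))

/-- The index set for differences. -/
def Tn (n : ℕ) : Finset (ℤ × ℕ) :=
  ((Finset.Icc (-(n : ℤ)) n) ×ˢ (Finset.range n)).filter fun τ => (n : ℤ) ∣ τ.1 * τ.2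

lemma Tn_card (n : ℕ) (hn : 1 ≤ n) : (Tn n).card ≤ 3 * n * n.divisors.card := by
  have e : (Tn n).card = ∑ D ∈ Finset.Icc (-(n : ℤ)) n,
      ((Finset.range n).filter fun m => (n : ℤ) ∣ D * (m : ℕ)).card := by
    rw [Tn, Finset.card_filter, Finset.sum_product]
    refine Finset.sum_congr rfl fun D _ => ?_
    rw [Finset.card_filter]
  rw [e]
  have b1 : ∀ D : ℤ, ((Finset.range n).filter fun m => (n : ℤ) ∣ D * (m : ℕ)).card ≤
      ∑ d ∈ n.divisors, if (d : ℤ) ∣ D then d else 0 := by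
    intro D
    have : ((Finset.range n).filter fun m => (n : ℤ) ∣ D * (m : ℕ)) =
        (Finset.range n).filter fun m => n ∣ D.natAbs * m := by
      apply Finset.filter_congr
      intro m _
      rw [Int.natCast_dvd, Int.natAbs_mul, Int.natAbs_natCast]
    rw [this]
    refine (gcd_count n D.natAbs hn).trans ?_
    have hm : Nat.gcd n D.natAbs ∈ n.divisors := Nat.mem_divisors.2 ⟨Nat.gcd_dvd_left _ _, by omega⟩
    refine le_trans (le_of_eq ?_) (Finset.single_le_sum (f := fun d : ℕ => if (d : ℤ) ∣ D then d else 0)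
      (fun i _ => Nat.zero_le _) hm)
    rw [if_pos]
    rw [Int.natCast_dvd]; exact Nat.gcd_dvd_right _ _
  refine (Finset.sum_le_sum fun D _ => b1 D).trans ?_
  rw [Finset.sum_comm]
  have b2 : ∀ d ∈ n.divisors, (∑ D ∈ Finset.Icc (-(n : ℤ)) n, if (d : ℤ) ∣ D then d else 0) ≤ 3 * n := by
    intro d hd
    obtain ⟨⟨k, hk⟩, _⟩ := Nat.mem_divisors.1 hd
    have hd0 : 0 < d := Nat.pos_of_mem_divisors hd
    rw [← Finset.sum_filter, Finset.sum_const, smul_eq_mul]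
    have : (Finset.Icc (-(n : ℤ)) n).filter (fun D => (d : ℤ) ∣ D) ⊆
        (Finset.Icc (-(k : ℤ)) k).image (fun i => (d : ℤ) * i) := by
      intro D hD
      simp only [Finset.mem_filter, Finset.mem_Icc, Finset.mem_image] at hD ⊢
      obtain ⟨⟨h1, h2⟩, i, rfl⟩ := hD
      refine ⟨i, ?_, rfl⟩
      have hdz : (0 : ℤ) < d := by exact_mod_cast hd0
      rw [hk] at h1 h2
      push_cast at h1 h2
      constructor
      · apply le_of_mul_le_mul_left _ hdz; linarith
      · exact le_of_mul_le_mul_left h2 hdz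
    have := (Finset.card_le_card this).trans Finset.card_image_le
    rw [Int.card_Icc] at this
    have e : ((k : ℤ) + 1 - -k).toNat = 2 * k + 1 := by omega
    rw [e] at this
    have hk1 : 1 ≤ k := by
      rcases Nat.eq_zero_or_pos k with rfl | h
      · omega
      · exact h
    calc _ ≤ (2 * k + 1) * d := by gcongr
      _ ≤ (3 * k) * d := by gcongr; omega
      _ = 3 * n := by rw [hk]; ring
  refine (Finset.sum_le_sum b2).trans ?_
  rw [Finset.sum_const, smul_eq_mul, mul_comm]

lemma sum_divisors_le (N : ℕ) : (∑ n ∈ Finset.Icc 1 N, (n.divisors.card : ℝ)) ≤ N * (1 + Real.log N) := by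
  have h1 : ∀ n ∈ Finset.Icc 1 N, (n.divisors.card : ℝ) ≤ ∑ d ∈ Finset.Icc 1 N, if d ∣ n then (1 : ℝ) else 0 := by
    intro n hn
    rw [← Finset.sum_filter, Finset.sum_const, nsmul_eq_mul, mul_one]
    norm_cast
    apply Finset.card_le_card
    intro d hd
    rw [Finset.mem_Icc] at hn
    have := Nat.mem_divisors.1 hd
    have h3 := Nat.pos_of_mem_divisors hd
    have h4 := Nat.le_of_dvd (by omega) this.1
    simp only [Finset.mem_filter, Finset.mem_Icc]
    exact ⟨⟨h3, by omega⟩, this.1⟩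
  refine (Finset.sum_le_sum h1).trans ?_
  rw [Finset.sum_comm]
  have h2 : ∀ d ∈ Finset.Icc 1 N, (∑ n ∈ Finset.Icc 1 N, if d ∣ n then (1 : ℝ) else 0) ≤ N * (d : ℝ)⁻¹ := by
    intro d hd
    rw [← Finset.sum_filter, Finset.sum_const, nsmul_eq_mul, mul_one]
    have : Finset.Icc 1 N = Finset.Ioc 0 N := by ext; simp [Nat.succ_le_iff]
    rw [this, Nat.Ioc_filter_dvd_card_eq_div, ← div_eq_mul_inv]
    exact Nat.cast_div_le
  refine (Finset.sum_le_sum h2).trans ?_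
  rw [← Finset.mul_sum]
  have h3 := harmonic_le_one_add_log N
  rw [harmonic_eq_sum_Icc] at h3
  push_cast at h3
  gcongr


/-- Ordered pairs in a common cap. -/
def Pr (ρ : ℝ) (Λ : Finset (ℤ × ℤ)) : Finset ((ℤ × ℤ) × (ℤ × ℤ)) :=
  (Λ ×ˢ Λ).filter fun p => ⌊tt ρ p.1⌋ = ⌊tt ρ p.2⌋ ∧ p.1.2 < p.2.2

lemma exists_low (ρ : ℝ) (Λ : Finset (ℤ × ℤ)) : ∃ low : ℤ → ℤ × ℤ, ∀ x ∈ Λ,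
    low ⌊tt ρ x⌋ ∈ Λ ∧ ⌊tt ρ (low ⌊tt ρ x⌋)⌋ = ⌊tt ρ x⌋ ∧ (low ⌊tt ρ x⌋).2 ≤ x.2 := by
  have : ∀ j : ℤ, ∃ p : ℤ × ℤ, ∀ x ∈ Λ, ⌊tt ρ x⌋ = j → p ∈ Λ ∧ ⌊tt ρ p⌋ = j ∧ p.2 ≤ x.2 := by
    intro j
    rcases (Λ.filter fun x => ⌊tt ρ x⌋ = j).eq_empty_or_nonempty with h | h
    · refine ⟨0, fun x hx hj => ?_⟩
      have : x ∈ Λ.filter fun x => ⌊tt ρ x⌋ = j := Finset.mem_filter.2 ⟨hx, hj⟩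
      rw [h] at this
      simp at this
    · obtain ⟨p, hp, hmin⟩ := Finset.exists_min_image _ (fun x : ℤ × ℤ => x.2) h
      rw [Finset.mem_filter] at hp
      exact ⟨p, fun x hx hj => ⟨hp.1, hp.2, hmin x (Finset.mem_filter.2 ⟨hx, hj⟩)⟩⟩
  choose low hlow using this
  exact ⟨low, fun x hx => hlow _ x hx rfl⟩

lemma cap_close {ρ : ℝ} (hρ : 10 ≤ ρ) {x y : ℤ × ℤ} (h : ⌊tt ρ x⌋ = ⌊tt ρ y⌋) :
    |(x.2 : ℝ) - y.2| ≤ ρ / 10 := floor_same (by positivity) h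

lemma Pr_card {ρ : ℝ} (hρ : 10 ≤ ρ) (Λ : Finset (ℤ × ℤ)) (hΛ : ∀ p ∈ Λ, Arc ρ p) :
    ((Pr ρ Λ).card : ℝ) ≤ 151 * ρ ^ 2 * (1 + Real.log ρ) := by
  have hρ0 : 0 < ρ := by linarith
  obtain ⟨low, hlow⟩ := exists_low ρ Λ
  set N := ⌊ρ / 10⌋₊ with hN
  set f1 : (ℤ × ℤ) × (ℤ × ℤ) → ℕ := fun p => (p.2.2 - (low ⌊tt ρ p.1⌋).2).toNat with hf1
  set f2 : (ℤ × ℤ) × (ℤ × ℤ) → ℤ × ℕ := fun p =>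
    (p.2.1 - (low ⌊tt ρ p.1⌋).1, (p.1.2 - (low ⌊tt ρ p.1⌋).2).toNat) with hf2
  have hP : ∀ p ∈ Pr ρ Λ, p.1 ∈ Λ ∧ p.2 ∈ Λ ∧ ⌊tt ρ p.1⌋ = ⌊tt ρ p.2⌋ ∧ p.1.2 < p.2.2 := by
    intro p hp
    simp only [Pr, Finset.mem_filter, Finset.mem_product] at hp
    exact ⟨hp.1.1, hp.1.2, hp.2.1, hp.2.2⟩
  have hmap1 : ∀ p ∈ Pr ρ Λ, f1 p ∈ Finset.Icc 1 N := by
    intro p hp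
    obtain ⟨a, b, c, d⟩ := hP p hp
    obtain ⟨l1, l2, l3⟩ := hlow p.1 a
    have := cap_close hρ (l2.trans c)
    simp only [hf1, Finset.mem_Icc]
    constructor
    · omega
    · rw [hN]
      apply Nat.le_floor
      have h0 : ((p.2.2 - (low ⌊tt ρ p.1⌋).2).toNat : ℤ) = p.2.2 - (low ⌊tt ρ p.1⌋).2 :=
        Int.toNat_of_nonneg (by omega)
      have h1 : (((p.2.2 - (low ⌊tt ρ p.1⌋).2).toNat : ℕ) : ℝ) = (p.2.2 : ℝ) - (low ⌊tt ρ p.1⌋).2 := by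
        exact_mod_cast h0
      rw [h1]
      linarith [(abs_le.1 this).1]
  have fib : ∀ n ∈ Finset.Icc 1 N, (((Pr ρ Λ).filter fun p => f1 p = n).card : ℝ) ≤
      503 * ρ / n * (Tn n).card := by
    intro n hn
    rw [Finset.mem_Icc] at hn
    have hn0 : (0 : ℝ) < n := by exact_mod_cast hn.1
    have hnρ : (n : ℝ) ≤ ρ / 10 := by
      refine le_trans ?_ (Nat.floor_le (by positivity : 0 ≤ ρ / 10))
      exact_mod_cast hn.2
    rw [Finset.card_eq_sum_card_fiberwise (f := f2) (t := Tn n)]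
    · push_cast
      have : ∀ τ ∈ Tn n, (((((Pr ρ Λ).filter fun p => f1 p = n).filter fun p => f2 p = τ).card : ℕ) : ℝ) ≤
          503 * ρ / n := by
        intro τ _
        set F := ((Pr ρ Λ).filter fun p => f1 p = n).filter fun p => f2 p = τ with hF
        have hFm : ∀ p ∈ F, (p.1 ∈ Λ ∧ p.2 ∈ Λ ∧ ⌊tt ρ p.1⌋ = ⌊tt ρ p.2⌋ ∧ p.1.2 < p.2.2) ∧
            p.2 = low ⌊tt ρ p.1⌋ + (τ.1, (n : ℤ)) ∧ p.1.2 = (low ⌊tt ρ p.1⌋).2 + τ.2 := by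
          intro p hp
          simp only [hF, Finset.mem_filter] at hp
          obtain ⟨⟨q1, q2⟩, q3⟩ := hp
          have hq := hP p q1
          obtain ⟨l1, l2, l3⟩ := hlow p.1 hq.1
          refine ⟨hq, ?_, ?_⟩
          · have e3 := congrArg Prod.fst q3
            simp only [hf2] at e3
            simp only [hf1] at q2
            ext
            · simp only [Prod.fst_add]; omega
            · simp only [Prod.snd_add]; omega
          · have e3 := congrArg Prod.snd q3
            simp only [hf2] at e3
            omega
        set Z := F.image (fun p => low ⌊tt ρ p.1⌋) with hZ
        have hdm : Dm (tt ρ) Z ((⌈250 * ρ / n⌉₊ : ℕ) * 1) := by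
          intro z hz z' hz'
          obtain ⟨p, hp, rfl⟩ := Finset.mem_image.1 hz
          obtain ⟨p', hp', rfl⟩ := Finset.mem_image.1 hz'
          obtain ⟨a1, a2, a3⟩ := hFm p hp
          obtain ⟨b1, b2, b3⟩ := hFm p' hp'
          rw [mul_one]
          refine le_trans ?_ (Nat.le_ceil _)
          exact near_low (D := (τ.1, (n : ℤ))) hρ hn.1 rfl hnρ (hΛ _ (hlow p.1 a1.1).1) (hΛ _ (hlow p'.1 b1.1).1)
            (by rw [← a2]; exact hΛ _ a1.2.1) (by rw [← b2]; exact hΛ _ b1.2.1)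
        have c1 := image_card one_pos _ hdm
        have c2 : F.card ≤ (Z.image fun x => ⌊tt ρ x / 1⌋).card := by
          apply Finset.card_le_card_of_injOn (fun p => ⌊tt ρ p.1⌋)
          · intro p hp
            have hp := Finset.mem_coe.1 hp
            apply Finset.mem_coe.2
            refine Finset.mem_image.2 ⟨low ⌊tt ρ p.1⌋, Finset.mem_image_of_mem _ hp, ?_⟩
            rw [div_one]
            exact (hlow p.1 (hFm p hp).1.1).2.1
          · intro p hp p' hp' heq
            obtain ⟨a1, a2, a3⟩ := hFm p (Finset.mem_coe.1 hp)
            obtain ⟨b1, b2, b3⟩ := hFm p' (Finset.mem_coe.1 hp')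
            simp only at heq
            have e2 : p.2 = p'.2 := by rw [a2, b2, heq]
            have e1 : p.1 = p'.1 := (hΛ _ a1.1).inj hρ (hΛ _ b1.1) (by rw [a3, b3, heq])
            exact Prod.ext e1 e2
        have c2 : (F.card : ℝ) ≤ ((Z.image fun x => ⌊tt ρ x / 1⌋).card : ℝ) := by exact_mod_cast c2
        have c3 := (Nat.ceil_lt_add_one (by positivity : 0 ≤ 250 * ρ / n)).le
        have c4 : (1 : ℝ) ≤ ρ / n := by rw [le_div_iff₀ hn0]; linarith
        have e5 : 250 * ρ / n = 250 * (ρ / n) := by ring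
        have e6 : 503 * ρ / n = 503 * (ρ / n) := by ring
        rw [e6]
        rw [e5] at c3 c1
        linarith
      refine (Finset.sum_le_sum this).trans ?_
      rw [Finset.sum_const, nsmul_eq_mul, mul_comm]
    · intro p hp
      have hp := Finset.mem_filter.1 (Finset.mem_coe.1 hp)
      obtain ⟨q1, q2⟩ := hp
      obtain ⟨a, b, c, d⟩ := hP p q1
      obtain ⟨l1, l2, l3⟩ := hlow p.1 a
      apply Finset.mem_coe.2
      have col := (hΛ _ l1).collinear hρ (hΛ _ b) (hΛ _ a)
        (by rw [abs_sub_comm]; exact cap_close hρ (l2.trans c)) (by rw [abs_sub_comm]; exact cap_close hρ l2)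
      have df := (hΛ _ b).diff hρ (hΛ _ l1)
      simp only [hf1] at q2
      set w := low ⌊tt ρ p.1⌋ with hw
      have h1 : p.2.2 - w.2 = n := by omega
      have h2 : ((p.1.2 - w.2).toNat : ℤ) = p.1.2 - w.2 := Int.toNat_of_nonneg (by omega)
      simp only [Tn, hf2, Finset.mem_filter, Finset.mem_product, Finset.mem_Icc, Finset.mem_range]
      rw [← hw]
      rw [h1, Nat.abs_cast] at df
      have df := abs_le.1 df
      refine ⟨⟨df, by omega⟩, ?_⟩
      rw [h2, col, h1]
      exact dvd_mul_right _ _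
  rw [Finset.card_eq_sum_card_fiberwise (f := f1) (t := Finset.Icc 1 N) hmap1]
  push_cast
  have hNρ : (N : ℝ) ≤ ρ / 10 := Nat.floor_le (by positivity)
  have hN1 : 1 ≤ N := by
    rw [hN]; apply Nat.le_floor; push_cast; linarith
  calc _ ≤ ∑ n ∈ Finset.Icc 1 N, 1509 * ρ * (n.divisors.card : ℝ) := by
        refine Finset.sum_le_sum fun n hn => (fib n hn).trans ?_
        rw [Finset.mem_Icc] at hn
        have hn0 : (0 : ℝ) < n := by exact_mod_cast hn.1
        have : ((Tn n).card : ℝ) ≤ 3 * n * n.divisors.card := by exact_mod_cast Tn_card n hn.1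
        calc _ ≤ 503 * ρ / n * (3 * n * n.divisors.card) := by gcongr
          _ = _ := by field_simp; ring
    _ = 1509 * ρ * ∑ n ∈ Finset.Icc 1 N, (n.divisors.card : ℝ) := by rw [Finset.mul_sum]
    _ ≤ 1509 * ρ * (N * (1 + Real.log N)) := by
        gcongr; exact sum_divisors_le N
    _ ≤ 1509 * ρ * (ρ / 10 * (1 + Real.log ρ)) := by
        have h1 : (1 : ℝ) ≤ N := by exact_mod_cast hN1
        have : 0 ≤ Real.log N := Real.log_nonneg h1
        have : Real.log N ≤ Real.log ρ := Real.log_le_log (by linarith) (by linarith)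
        gcongr
    _ ≤ _ := by
        have : 0 ≤ Real.log ρ := Real.log_nonneg (by linarith)
        have : 0 ≤ ρ ^ 2 * (1 + Real.log ρ) := by positivity
        nlinarith

lemma arc_Dm {ρ : ℝ} (hρ : 10 ≤ ρ) (Λ : Finset (ℤ × ℤ)) (hΛ : ∀ p ∈ Λ, Arc ρ p) :
    Dm (tt ρ) Λ (20 * ρ ^ 2) := by
  intro x hx y hy
  have hρ0 : 0 < ρ := by linarith
  have h1 := ((hΛ x hx).bounds hρ).2.2
  have h2 := ((hΛ y hy).bounds hρ).2.2
  unfold tt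
  rw [← sub_div, abs_div, abs_of_pos (by positivity : 0 < ρ / 10), div_le_iff₀ (by positivity)]
  have := abs_sub (x.2 : ℝ) y.2
  nlinarith

lemma Sq_arc {ρ : ℝ} (hρ : 10 ≤ ρ) (Λ : Finset (ℤ × ℤ)) (hΛ : ∀ p ∈ Λ, Arc ρ p) :
    Sq (tt ρ) Λ ≤ 500 * ρ ^ 2 * (1 + Real.log ρ) := by
  classical
  have hρ0 : 0 < ρ := by linarith
  obtain ⟨low, hlow⟩ := exists_low ρ Λ
  have hP := Pr_card hρ Λ hΛ
  have c1 : Sq (tt ρ) Λ ≤ Λ.card + 2 * (Pr ρ Λ).card := by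
    unfold Sq
    norm_cast
    have : ((Λ ×ˢ Λ).filter (fun p => ⌊tt ρ p.1⌋ = ⌊tt ρ p.2⌋)) ⊆
        (Λ.image fun x => (x, x)) ∪ (Pr ρ Λ ∪ (Pr ρ Λ).image Prod.swap) := by
      intro p hp
      simp only [Finset.mem_filter, Finset.mem_product] at hp
      obtain ⟨⟨a, b⟩, c⟩ := hp
      simp only [Finset.mem_union]
      rcases lt_trichotomy p.1.2 p.2.2 with h | h | h
      · right; left
        simp only [Pr, Finset.mem_filter, Finset.mem_product]
        exact ⟨⟨a, b⟩, c, h⟩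
      · left
        have := (hΛ _ a).inj hρ (hΛ _ b) h
        refine Finset.mem_image.2 ⟨p.1, a, ?_⟩
        ext <;> simp [this]
      · right; right
        refine Finset.mem_image.2 ⟨p.swap, ?_, by simp⟩
        simp only [Pr, Finset.mem_filter, Finset.mem_product]
        exact ⟨⟨b, a⟩, c.symm, h⟩
    refine (Finset.card_le_card this).trans ((Finset.card_union_le _ _).trans ?_)
    have u1 := Finset.card_union_le (Pr ρ Λ) ((Pr ρ Λ).image Prod.swap)
    have u2 : ((Pr ρ Λ).image Prod.swap).card ≤ (Pr ρ Λ).card := Finset.card_image_le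
    have u3 : (Λ.image fun x => (x, x)).card ≤ Λ.card := Finset.card_image_le
    omega
  have c2 : (Λ.card : ℝ) ≤ ((Λ.image fun x => ⌊tt ρ x / 1⌋).card : ℝ) + (Pr ρ Λ).card := by
    norm_cast
    rw [← Finset.card_filter_add_card_filter_not (s := Λ) (p := fun x => low ⌊tt ρ x⌋ = x)]
    apply add_le_add
    · apply Finset.card_le_card_of_injOn (fun x => ⌊tt ρ x / 1⌋)
      · intro x hx
        exact Finset.mem_coe.2 (Finset.mem_image_of_mem _ (Finset.mem_filter.1 (Finset.mem_coe.1 hx)).1)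
      · intro x hx y hy h
        simp only [div_one] at h
        have a := (Finset.mem_filter.1 (Finset.mem_coe.1 hx)).2
        have b := (Finset.mem_filter.1 (Finset.mem_coe.1 hy)).2
        rw [← a, ← b, h]
    · apply Finset.card_le_card_of_injOn (fun x => (low ⌊tt ρ x⌋, x))
      · intro x hx
        obtain ⟨a, b⟩ := Finset.mem_filter.1 (Finset.mem_coe.1 hx)
        obtain ⟨l1, l2, l3⟩ := hlow x a
        apply Finset.mem_coe.2
        simp only [Pr, Finset.mem_filter, Finset.mem_product]
        refine ⟨⟨l1, a⟩, l2, lt_of_le_of_ne l3 fun h => b ?_⟩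
        exact (hΛ _ l1).inj hρ (hΛ _ a) h
      · intro x _ y _ h
        exact congrArg Prod.snd h
  have c3 := image_card (t := tt ρ) one_pos ⌈20 * ρ ^ 2⌉₊ ((arc_Dm hρ Λ hΛ).mono subset_rfl (by
    rw [mul_one]; exact Nat.le_ceil _))
  have c4 := (Nat.ceil_lt_add_one (by positivity : 0 ≤ 20 * ρ ^ 2)).le
  have l0 : 0 ≤ Real.log ρ := Real.log_nonneg (by linarith)
  have : 0 ≤ ρ ^ 2 * Real.log ρ := by positivity
  nlinarith


/-! ### Combining the four quadrants -/

lemma En_union {A X Y : Finset (ℤ × ℤ)} (h : ind A = ind X + ind Y) {E : ℝ}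
    (hX : En X ≤ E) (hY : En Y ≤ E) : En A ≤ 64 * E := by
  have e : (ind A * cj (ind A)) ^ 3 = ind X * cj (ind X) * (ind A * cj (ind A)) ^ 2 +
      ind X * cj (ind Y) * (ind A * cj (ind A)) ^ 2 + 
      ind Y * cj (ind X) * (ind A * cj (ind A)) ^ 2 +
      ind Y * cj (ind Y) * (ind A * cj (ind A)) ^ 2 := by
    have h' : cj (ind A) = cj (ind X) + cj (ind Y) := by rw [h, map_add]
    have : ind A * cj (ind A) = (ind X + ind Y) * (cj (ind X) + cj (ind Y)) := by rw [← h, ← h']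
    calc (ind A * cj (ind A)) ^ 3 = (ind A * cj (ind A)) * (ind A * cj (ind A)) ^ 2 := by ring
      _ = (ind X + ind Y) * (cj (ind X) + cj (ind Y)) * (ind A * cj (ind A)) ^ 2 := by
        congr 1
      _ = _ := by ring
  have h1 : En A ≤ 2 * (Mx X A + Mx Y A) := by
    have c1 := cross_CS X Y A
    have c2 := cross_CS Y X A
    have : En A = Mx X A + tau (ind X * cj (ind Y) * (ind A * cj (ind A)) ^ 2) +
      tau (ind Y * cj (ind X) * (ind A * cj (ind A)) ^ 2) + Mx Y A := by
      rw [En, e]; simp only [map_add]; rfl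
    linarith
  have key : ∀ Z, En Z ≤ E → En A ≤ 4 * Mx Z A → En A ≤ 64 * E := by
    intro Z hZ hz
    have h3 := Mx_cube Z A
    have n0 := En_nonneg A
    have n1 := En_nonneg Z
    rcases n0.eq_or_lt with h0 | h0
    · rw [← h0]; linarith
    · have : En A ^ 3 ≤ 64 * E * En A ^ 2 := by
        calc En A ^ 3 ≤ (4 * Mx Z A) ^ 3 := by gcongr
          _ = 64 * Mx Z A ^ 3 := by ring
          _ ≤ 64 * (En Z * En A ^ 2) := by gcongr
          _ ≤ 64 * (E * En A ^ 2) := by gcongr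
          _ = _ := by ring
      have p : 0 < En A ^ 2 := by positivity
      nlinarith
  rcases le_total (Mx X A) (Mx Y A) with h | h
  · exact key Y hY (by linarith)
  · exact key X hX (by linarith)

lemma En_image_le (φ : (ℤ × ℤ) →+ (ℤ × ℤ)) (hφ : Function.Injective φ) (A : Finset (ℤ × ℤ)) :
    En A ≤ En (A.image φ) := by
  classical
  rw [En_eq_card, En_eq_card]
  norm_cast
  apply Finset.card_le_card_of_injOn (fun p => (fun i => φ (p.1 i), fun i => φ (p.2 i)))
  · intro p hp
    simp only [Finset.coe_filter, Finset.mem_product, Fintype.mem_piFinset, Set.mem_setOf_eq] at hp ⊢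
    refine ⟨⟨fun i => Finset.mem_image_of_mem _ (hp.1.1 i), fun i => Finset.mem_image_of_mem _ (hp.1.2 i)⟩, ?_⟩
    rw [← map_sum, ← map_sum, hp.2]
  · intro p _ q _ h
    simp only [Prod.mk.injEq] at h
    ext i : 2
    · exact hφ (congrFun h.1 i)
    · exact hφ (congrFun h.2 i)

/-- Membership in the squared annulus. -/
def Ann (ρ : ℝ) (p : ℤ × ℤ) : Prop :=
  ρ ^ 6 ≤ (p.1 : ℝ) ^ 2 + (p.2 : ℝ) ^ 2 ∧ (p.1 : ℝ) ^ 2 + (p.2 : ℝ) ^ 2 ≤ ρ ^ 6 + 3 * ρ ^ 2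

/-- The swap homomorphism. -/
def swp : (ℤ × ℤ) →+ (ℤ × ℤ) := (AddEquiv.prodComm : (ℤ × ℤ) ≃+ (ℤ × ℤ)).toAddMonoidHom

/-- The negation homomorphism. -/
def ngt : (ℤ × ℤ) →+ (ℤ × ℤ) := negAddMonoidHom

lemma swp_apply (p : ℤ × ℤ) : swp p = (p.2, p.1) := rfl
lemma ngt_apply (p : ℤ × ℤ) : ngt p = (-p.1, -p.2) := rfl

lemma swp_inj : Function.Injective swp := by
  intro p q h
  simp only [swp_apply, Prod.mk.injEq] at h
  ext <;> simp [h]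
lemma ngt_inj : Function.Injective ngt := by
  intro p q h
  simp only [ngt_apply, Prod.mk.injEq, neg_inj] at h
  ext <;> simp [h]

lemma En_ann {ρ E : ℝ} (hE : ∀ S : Finset (ℤ × ℤ), (∀ p ∈ S, Arc ρ p) → En S ≤ E)
    (A : Finset (ℤ × ℤ)) (hA : ∀ p ∈ A, Ann ρ p) : En A ≤ 4096 * E := by
  classical
  have half : ∀ S : Finset (ℤ × ℤ), (∀ p ∈ S, Ann ρ p ∧ |p.2| ≤ |p.1|) → En S ≤ 64 * E := by
    intro S hS
    apply En_union (ind_split S (fun p => 0 ≤ p.1))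
    · apply hE
      intro p hp
      rw [Finset.mem_filter] at hp
      obtain ⟨⟨h1, h2⟩, h3⟩ := hS p hp.1
      refine ⟨h1, h2, ?_⟩
      rw [abs_of_nonneg hp.2] at h3
      exact_mod_cast h3
    · refine (En_image_le ngt ngt_inj _).trans (hE _ ?_)
      intro q hq
      obtain ⟨p, hp, rfl⟩ := Finset.mem_image.1 hq
      rw [Finset.mem_filter] at hp
      obtain ⟨⟨h1, h2⟩, h3⟩ := hS p hp.1
      rw [ngt_apply]
      refine ⟨by push_cast; simpa using h1, by push_cast; simpa using h2, ?_⟩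
      rw [abs_of_neg (not_le.1 hp.2), ← abs_neg] at h3
      exact_mod_cast h3
  have : (4096 : ℝ) * E = 64 * (64 * E) := by ring
  rw [this]
  apply En_union (ind_split A (fun p => |p.2| ≤ |p.1|))
  · apply half
    intro p hp
    rw [Finset.mem_filter] at hp
    exact ⟨hA p hp.1, hp.2⟩
  · refine (En_image_le swp swp_inj _).trans (half _ ?_)
    intro q hq
    obtain ⟨p, hp, rfl⟩ := Finset.mem_image.1 hq
    rw [Finset.mem_filter] at hp
    obtain ⟨h1, h2⟩ := hA p hp.1
    rw [swp_apply]
    refine ⟨⟨by rw [add_comm] at h1; exact h1, by rw [add_comm] at h2; exact h2⟩, ?_⟩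
    exact (not_le.1 hp.2).le

lemma En_upper {δ : ℝ} (hδ : 0 < δ) : ∃ C : ℝ, 0 < C ∧ ∀ ρ : ℝ, 10 ≤ ρ →
    ∀ A : Finset (ℤ × ℤ), (∀ p ∈ A, Ann ρ p) → 
      En A ≤ C * (20 * ρ ^ 2) ^ δ * (500 * ρ ^ 2 * (1 + Real.log ρ)) ^ 3 := by
  obtain ⟨C₁, hC, h⟩ := decoup hδ (C₀ := 4000) (by norm_num)
  refine ⟨4096 * C₁, by positivity, fun ρ hρ A hA => ?_⟩
  have := En_ann (ρ := ρ) (E := C₁ * (20 * ρ ^ 2) ^ δ * (500 * ρ ^ 2 * (1 + Real.log ρ)) ^ 3) 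
    (fun S hS => ?_) A hA
  · linarith
  · have h1 := h (tt ρ) S (hyp_arc hρ S hS) S subset_rfl (20 * ρ ^ 2) (by nlinarith) (arc_Dm hρ S hS)
    refine h1.trans ?_
    have n : 0 ≤ Sq (tt ρ) S := by unfold Sq; positivity
    have := Sq_arc hρ S hS
    gcongr


/-! ### The lower bound for the number of lattice points -/

lemma exists_pt {ρ : ℝ} (hρ : 12 ≤ ρ) (a b : ℤ) (ha : 1 ≤ a) (hb : 1 ≤ b)
    (ha' : (a : ℝ) ≤ ρ / 6) (hb' : (b : ℝ) ≤ ρ / 6) (hab : IsCoprime a b) :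
    ∃ x : ℤ × ℤ, ρ ^ 6 ≤ (x.1 : ℝ) ^ 2 + (x.2 : ℝ) ^ 2 ∧
      (x.1 : ℝ) ^ 2 + (x.2 : ℝ) ^ 2 ≤ ρ ^ 6 + 2 * ρ ^ 2 ∧
      0 ≤ (a * x.1 + b * x.2 : ℝ) ∧ (a * x.1 + b * x.2 : ℝ) ≤ ρ ^ 4 / 4 ∧
      0 ≤ (a * x.2 - b * x.1 : ℝ) ∧ (a * x.2 - b * x.1 : ℝ) ≤ ρ ^ 2 := by
  obtain ⟨u, v, huv⟩ := hab
  have haR : (1 : ℝ) ≤ a := by exact_mod_cast ha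
  have hbR : (1 : ℝ) ≤ b := by exact_mod_cast hb
  set Q : ℝ := (a : ℝ) ^ 2 + (b : ℝ) ^ 2 with hQ
  have hQ0 : 0 < Q := by positivity
  have hQ1 : Q ≤ ρ ^ 2 / 18 := by nlinarith
  set r : ℝ := √(ρ ^ 6 * Q) with hr
  have hr2 : r ^ 2 = ρ ^ 6 * Q := Real.sq_sqrt (by positivity)
  have hr0 : 0 ≤ r := Real.sqrt_nonneg _
  have hr1 : r ≤ ρ ^ 4 / 4 := by
    apply le_of_sq_le_sq _ (by positivity)
    rw [hr2]
    have : ρ ^ 6 * Q ≤ ρ ^ 6 * (ρ ^ 2 / 18) := by gcongr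
    have p : 0 ≤ ρ ^ 8 := by positivity
    nlinarith
  set m : ℤ := ⌊r⌋ with hm
  have hm0 : (0 : ℝ) ≤ m := by exact_mod_cast Int.floor_nonneg.2 hr0
  have hm1 : (m : ℝ) ≤ r := Int.floor_le r
  have hm2 : r < m + 1 := Int.lt_floor_add_one r
  set s : ℝ := √(r ^ 2 - m ^ 2) with hs
  have hs2 : s ^ 2 = r ^ 2 - m ^ 2 := Real.sq_sqrt (by nlinarith)
  have hs0 : 0 ≤ s := Real.sqrt_nonneg _
  have hs1 : s ≤ 0.75 * ρ ^ 2 := by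
    apply le_of_sq_le_sq _ (by positivity)
    rw [hs2]
    have : r ^ 2 - (m : ℝ) ^ 2 ≤ 2 * r := by nlinarith
    nlinarith [show 0 ≤ ρ ^ 4 by positivity]
  set k0 : ℝ := a * (v * m) - b * (u * m) with hk0
  set j : ℤ := ⌈(s - k0) / Q⌉ with hj
  have hj1 : s ≤ k0 + j * Q := by
    have := Int.le_ceil ((s - k0) / Q)
    rw [div_le_iff₀ hQ0] at this
    linarith
  have hj2 : k0 + j * Q ≤ s + Q := by
    have := (Int.ceil_lt_add_one ((s - k0) / Q)).le
    rw [← sub_le_iff_le_add, le_div_iff₀ hQ0] at this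
    linarith
  have huvR : (u * a + v * b : ℝ) = 1 := by exact_mod_cast huv
  have e1 : (a * ((u * m - j * b : ℤ) : ℝ) + b * ((v * m + j * a : ℤ) : ℝ)) = m := by
    push_cast
    linear_combination (m : ℝ) * huvR
  have e2 : (a * ((v * m + j * a : ℤ) : ℝ) - b * ((u * m - j * b : ℤ) : ℝ)) = k0 + j * Q := by
    push_cast
    rw [hk0, hQ]; ring
  refine ⟨(u * m - j * b, v * m + j * a), ?_⟩
  simp only
  rw [e1, e2]
  set k := k0 + j * Q with hk
  set N2 : ℝ := ((u * m - j * b : ℤ) : ℝ) ^ 2 + ((v * m + j * a : ℤ) : ℝ) ^ 2 with hN2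
  have e3 : Q * N2 = (m : ℝ) ^ 2 + k ^ 2 := by
    rw [← e2, ← e1, hQ, hN2]; ring
  have k1 : s ^ 2 ≤ k ^ 2 := by gcongr
  have k2 : k ^ 2 ≤ (s + Q) ^ 2 := by
    have : 0 ≤ k := by linarith
    gcongr
  have pρ : 0 ≤ ρ ^ 2 := by positivity
  refine ⟨?_, ?_, hm0, hm1.trans hr1, hs0.trans hj1, ?_⟩
  · have : Q * ρ ^ 6 ≤ Q * N2 := by rw [e3]; linarith
    exact le_of_mul_le_mul_left this hQ0
  · have : Q * N2 ≤ Q * (ρ ^ 6 + 2 * ρ ^ 2) := by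
      rw [e3]
      have : Q * (2 * s + Q) ≤ Q * (2 * ρ ^ 2) := by
        gcongr
        linarith
      have e4 : (s + Q) ^ 2 = s ^ 2 + Q * (2 * s + Q) := by ring
      have e5 : Q * (ρ ^ 6 + 2 * ρ ^ 2) = ρ ^ 6 * Q + Q * (2 * ρ ^ 2) := by ring
      linarith
    exact le_of_mul_le_mul_left this hQ0
  · linarith

lemma pt_inj {ρ : ℝ} (hρ : 12 ≤ ρ) (a b c d x y : ℝ) (h : ρ ^ 6 ≤ x ^ 2 + y ^ 2)
    (h1 : 0 ≤ a * x + b * y) (h2 : a * x + b * y ≤ ρ ^ 4 / 4)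
    (h3 : 0 ≤ a * y - b * x) (h4 : a * y - b * x ≤ ρ ^ 2)
    (h5 : 0 ≤ c * x + d * y) (h6 : c * x + d * y ≤ ρ ^ 4 / 4)
    (h7 : 0 ≤ c * y - d * x) (h8 : c * y - d * x ≤ ρ ^ 2) :
    |a * d - b * c| < 1 := by
  have p : 0 < ρ ^ 6 := by positivity
  have e : (a * d - b * c) * (x ^ 2 + y ^ 2) =
      (a * y - b * x) * (c * x + d * y) - (a * x + b * y) * (c * y - d * x) := by ring
  have b1 : (a * y - b * x) * (c * x + d * y) ≤ ρ ^ 2 * (ρ ^ 4 / 4) := by gcongr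
  have b2 : (a * x + b * y) * (c * y - d * x) ≤ (ρ ^ 4 / 4) * ρ ^ 2 := by gcongr
  have b3 : 0 ≤ (a * y - b * x) * (c * x + d * y) := mul_nonneg h3 h5
  have b4 : 0 ≤ (a * x + b * y) * (c * y - d * x) := mul_nonneg h1 h7
  rw [abs_lt]
  constructor <;> nlinarith

lemma coprime_eq {a b c d : ℕ} (h : a.Coprime b) (h' : c.Coprime d) (e : a * d = b * c) :
    (a, b) = (c, d) := by
  have h1 : a ∣ c := h.dvd_of_dvd_mul_left (Dvd.intro _ e)
  have h2 : c ∣ a := h'.dvd_of_dvd_mul_right (by rw [e]; exact Dvd.intro_left _ rfl)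
  have h3 : b ∣ d := h.symm.dvd_of_dvd_mul_left (by rw [e]; exact Dvd.intro _ rfl)
  have h4 : d ∣ b := h'.symm.dvd_of_dvd_mul_right (by rw [← e]; exact Dvd.intro_left _ rfl)
  rw [Nat.dvd_antisymm h1 h2, Nat.dvd_antisymm h3 h4]

/-- Coprime pairs. -/
def Cop (N : ℕ) : Finset (ℕ × ℕ) :=
  (Finset.Ioc 0 N ×ˢ Finset.Ioc 0 N).filter fun p => p.1.Coprime p.2

lemma sum_inv_sq (n : ℕ) : ∑ d ∈ Finset.Icc 2 (n + 2), (1 : ℝ) / (d : ℝ) ^ 2 ≤ 3 / 4 - 1 / ((n : ℝ) + 2) := by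
  induction n with
  | zero => norm_num
  | succ n ih =>
    rw [show n + 1 + 2 = (n + 2) + 1 by ring, Finset.sum_Icc_succ_top (by omega)]
    have : (1 : ℝ) / ((n + 2 + 1 : ℕ) : ℝ) ^ 2 ≤ 1 / ((n : ℝ) + 2) - 1 / (((n + 1 : ℕ) : ℝ) + 2) := by
      push_cast
      rw [div_sub_div _ _ (by positivity) (by positivity), div_le_div_iff₀ (by positivity) (by positivity)]
      nlinarith
    linarith

lemma Cop_card (N : ℕ) (hN : 2 ≤ N) : (N : ℝ) ^ 2 / 4 ≤ (Cop N).card := by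
  classical
  have h1 := Finset.card_filter_add_card_filter_not (s := Finset.Ioc 0 N ×ˢ Finset.Ioc 0 N)
    (p := fun p => p.1.Coprime p.2)
  rw [Finset.card_product, Nat.card_Ioc] at h1
  have h2 : ((Finset.Ioc 0 N ×ˢ Finset.Ioc 0 N).filter fun p => ¬ p.1.Coprime p.2) ⊆
      (Finset.Icc 2 N).biUnion fun d => ((Finset.Ioc 0 N).filter (d ∣ ·)) ×ˢ ((Finset.Ioc 0 N).filter (d ∣ ·)) := by
    intro p hp
    simp only [Finset.mem_filter, Finset.mem_product, Finset.mem_Ioc] at hp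
    obtain ⟨⟨⟨h1, h2⟩, h3, h4⟩, h5⟩ := hp
    simp only [Finset.mem_biUnion, Finset.mem_Icc, Finset.mem_product, Finset.mem_filter, Finset.mem_Ioc]
    have g := Nat.gcd_pos_of_pos_left p.2 h1
    refine ⟨Nat.gcd p.1 p.2, ⟨?_, (Nat.le_of_dvd h1 (Nat.gcd_dvd_left _ _)).trans h2⟩,
      ⟨⟨h1, h2⟩, Nat.gcd_dvd_left _ _⟩, ⟨h3, h4⟩, Nat.gcd_dvd_right _ _⟩
    rw [Nat.coprime_iff_gcd_eq_one] at h5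
    omega
  have h3 := (Finset.card_le_card h2).trans Finset.card_biUnion_le
  simp only [Finset.card_product, Nat.Ioc_filter_dvd_card_eq_div] at h3
  have h4 : ((∑ d ∈ Finset.Icc 2 N, (N / d) * (N / d) : ℕ) : ℝ) ≤ (N : ℝ) ^ 2 * (3 / 4) := by
    push_cast
    obtain ⟨n, rfl⟩ := Nat.exists_eq_add_of_le' hN
    have := sum_inv_sq n
    have p : (0 : ℝ) ≤ 1 / ((n : ℝ) + 2) := by positivity
    calc ∑ d ∈ Finset.Icc 2 (n + 2), (((n + 2) / d : ℕ) : ℝ) * (((n + 2) / d : ℕ) : ℝ)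
        ≤ ∑ d ∈ Finset.Icc 2 (n + 2), (((n + 2 : ℕ) : ℝ) ^ 2 * (1 / (d : ℝ) ^ 2)) := by
          refine Finset.sum_le_sum fun d hd => ?_
          have := @Nat.cast_div_le ℝ _ _ _ (n + 2) d
          calc _ ≤ (((n + 2 : ℕ) : ℝ) / d) * (((n + 2 : ℕ) : ℝ) / d) := by gcongr
            _ = _ := by ring
      _ = ((n + 2 : ℕ) : ℝ) ^ 2 * ∑ d ∈ Finset.Icc 2 (n + 2), (1 / (d : ℝ) ^ 2) := by
          rw [Finset.mul_sum]
      _ ≤ _ := by gcongr; linarith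
  have h5 : ((((Finset.Ioc 0 N ×ˢ Finset.Ioc 0 N).filter fun p => ¬ p.1.Coprime p.2)).card : ℝ) ≤
      ((∑ d ∈ Finset.Icc 2 N, (N / d) * (N / d) : ℕ) : ℝ) := by exact_mod_cast h3
  have h6 : ((Cop N).card : ℝ) + (((Finset.Ioc 0 N ×ˢ Finset.Ioc 0 N).filter fun p => ¬ p.1.Coprime p.2)).card
      = (N : ℝ) ^ 2 := by
    have : (Cop N).card + (((Finset.Ioc 0 N ×ˢ Finset.Ioc 0 N).filter fun p => ¬ p.1.Coprime p.2)).card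
      = N ^ 2 := by rw [Cop, h1]; simp [pow_two]
    exact_mod_cast this
  linarith

lemma lower {ρ : ℝ} (hρ : 12 ≤ ρ) (A : Finset (ℤ × ℤ))
    (hA : ∀ x : ℤ × ℤ, ρ ^ 6 ≤ (x.1 : ℝ) ^ 2 + (x.2 : ℝ) ^ 2 →
      (x.1 : ℝ) ^ 2 + (x.2 : ℝ) ^ 2 ≤ ρ ^ 6 + 2 * ρ ^ 2 → x ∈ A) : ρ ^ 2 / 576 ≤ A.card := by
  classical
  set N := ⌊ρ / 6⌋₊ with hN
  have hN1 : (N : ℝ) ≤ ρ / 6 := Nat.floor_le (by positivity)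
  have hN2 : ρ / 6 < N + 1 := Nat.lt_floor_add_one _
  have hN3 : 2 ≤ N := Nat.le_floor (by push_cast; linarith)
  have hc := Cop_card N hN3
  have ex : ∀ p : ℕ × ℕ, ∃ x : ℤ × ℤ, p ∈ Cop N → ρ ^ 6 ≤ (x.1 : ℝ) ^ 2 + (x.2 : ℝ) ^ 2 ∧
      (x.1 : ℝ) ^ 2 + (x.2 : ℝ) ^ 2 ≤ ρ ^ 6 + 2 * ρ ^ 2 ∧
      0 ≤ (p.1 * x.1 + p.2 * x.2 : ℝ) ∧ (p.1 * x.1 + p.2 * x.2 : ℝ) ≤ ρ ^ 4 / 4 ∧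
      0 ≤ (p.1 * x.2 - p.2 * x.1 : ℝ) ∧ (p.1 * x.2 - p.2 * x.1 : ℝ) ≤ ρ ^ 2 := by
    intro p
    by_cases hp : p ∈ Cop N
    · have hp' := hp
      simp only [Cop, Finset.mem_filter, Finset.mem_product, Finset.mem_Ioc] at hp'
      obtain ⟨⟨⟨h1, h2⟩, h3, h4⟩, h5⟩ := hp'
      obtain ⟨x, hx⟩ := exists_pt hρ (p.1 : ℤ) (p.2 : ℤ) (by omega) (by omega)
        (by push_cast; exact le_trans (by exact_mod_cast h2) hN1)
        (by push_cast; exact le_trans (by exact_mod_cast h4) hN1) (Nat.isCoprime_iff_coprime.2 h5)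
      exact ⟨x, fun _ => by simpa using hx⟩
    · exact ⟨0, fun h => absurd h hp⟩
  choose f hf using ex
  have hle : (Cop N).card ≤ A.card := by
    apply Finset.card_le_card_of_injOn f
    · intro p hp
      have := hf p (Finset.mem_coe.1 hp)
      exact Finset.mem_coe.2 (hA _ this.1 this.2.1)
    · intro p hp q hq h
      have a1 := hf p (Finset.mem_coe.1 hp)
      have a2 := hf q (Finset.mem_coe.1 hq)
      rw [← h] at a2
      obtain ⟨a, b, c, d, e, g⟩ := a1
      obtain ⟨a', b', c', d', e', g'⟩ := a2
      have := pt_inj hρ _ _ _ _ _ _ a c d e g c' d' e' g'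
      have h0 : |((p.1 * q.2 - p.2 * q.1 : ℤ) : ℝ)| < 1 := by push_cast; exact this
      have h1 : |(p.1 * q.2 - p.2 * q.1 : ℤ)| < 1 := by exact_mod_cast h0
      have h2 := sub_eq_zero.1 (Int.abs_lt_one_iff.1 h1)
      have h3 : p.1 * q.2 = p.2 * q.1 := by exact_mod_cast h2
      exact coprime_eq (Finset.mem_filter.1 (Finset.mem_coe.1 hp)).2
        (Finset.mem_filter.1 (Finset.mem_coe.1 hq)).2 h3
  have : ((Cop N).card : ℝ) ≤ A.card := by exact_mod_cast hle
  have h12 : ρ / 12 ≤ N := by linarith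
  have : (ρ / 12) ^ 2 ≤ (N : ℝ) ^ 2 := by gcongr
  nlinarith


/-! ### Conclusion -/

lemma ann_iff {ρ : ℝ} (h : 1 < ρ) (x : ℤ × ℤ) : x ∈ annulusLattice (ρ ^ 3) ↔
    ρ ^ 6 ≤ (x.1 : ℝ) ^ 2 + (x.2 : ℝ) ^ 2 ∧
      (x.1 : ℝ) ^ 2 + (x.2 : ℝ) ^ 2 ≤ ρ ^ 6 + 2 * ρ ^ 2 + (ρ⁻¹) ^ 2 := by
  have h0 : 0 < ρ := by linarith
  have e : (ρ ^ 3) ^ (-(1 : ℝ) / 3) = ρ⁻¹ := by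
    rw [← Real.rpow_natCast, ← Real.rpow_mul h0.le]
    norm_num
    exact Real.rpow_neg_one ρ
  have e2 : (ρ ^ 3 + ρ⁻¹) ^ 2 = ρ ^ 6 + 2 * ρ ^ 2 + (ρ⁻¹) ^ 2 := by
    field_simp; ring
  unfold annulusLattice
  simp only [Set.mem_setOf_eq]
  rw [e, Real.le_sqrt (by positivity), Real.sqrt_le_left (by positivity), e2]
  · rw [show (ρ ^ 3) ^ 2 = ρ ^ 6 by ring]
  · positivity

lemma inv_sq_le {ρ : ℝ} (h : 1 < ρ) : (ρ⁻¹) ^ 2 ≤ ρ ^ 2 := by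
  have : ρ⁻¹ ≤ 1 := inv_le_one_of_one_le₀ h.le
  have : 0 ≤ ρ⁻¹ := by positivity
  gcongr
  linarith

lemma ann_subset {ρ : ℝ} (h : 1 < ρ) (n : ℕ) (hn : 2 * ρ ^ 3 ≤ n) : 
    annulusLattice (ρ ^ 3) ⊆ (Finset.Icc (-(n : ℤ)) n ×ˢ Finset.Icc (-(n : ℤ)) n : Finset (ℤ × ℤ)) := by
  intro x hx
  obtain ⟨h1, h2⟩ := (ann_iff h x).1 hx
  have h3 := inv_sq_le h
  have h4 : ρ ^ 2 ≤ ρ ^ 6 := pow_le_pow_right₀ h.le (by norm_num)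
  have h5 : (x.1 : ℝ) ^ 2 + (x.2 : ℝ) ^ 2 ≤ (n : ℝ) ^ 2 := by
    have : (2 * ρ ^ 3) ^ 2 ≤ (n : ℝ) ^ 2 := by gcongr
    nlinarith
  have h6 : |(x.1 : ℝ)| ≤ n := abs_le_of_sq_le_sq (by nlinarith [sq_nonneg (x.2 : ℝ)]) (by positivity)
  have h7 : |(x.2 : ℝ)| ≤ n := abs_le_of_sq_le_sq (by nlinarith [sq_nonneg (x.1 : ℝ)]) (by positivity)
  rw [abs_le] at h6 h7
  simp only [Finset.coe_product, Finset.coe_Icc, Set.mem_prod, Set.mem_Icc]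
  exact ⟨⟨by exact_mod_cast h6.1, by exact_mod_cast h6.2⟩, by exact_mod_cast h7.1, by exact_mod_cast h7.2⟩

lemma ann_finset {ρ : ℝ} (h : 1 < ρ) : ∃ A : Finset (ℤ × ℤ), (A : Set (ℤ × ℤ)) = annulusLattice (ρ ^ 3) := by
  have := (Finset.finite_toSet _).subset (ann_subset h ⌈2 * ρ ^ 3⌉₊ (Nat.le_ceil _))
  exact ⟨this.toFinset, by simp⟩

lemma small_case {ε : ℝ} (hε : 0 < ε) {A : Finset (ℤ × ℤ)} {K : ℝ} (hK : (A.card : ℝ) ≤ K) :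
    En A ≤ K ^ 3 * (A.card : ℝ) ^ (3 + ε) := by
  have h := En_le_card A
  rcases Nat.eq_zero_or_pos A.card with h0 | h0
  · rw [h0] at h hK ⊢
    norm_num at h hK
    refine h.trans ?_
    positivity
  · have h1 : (1 : ℝ) ≤ A.card := by exact_mod_cast h0
    have hK0 : 0 ≤ K := by linarith
    have h2 : (A.card : ℝ) ^ 3 ≤ (A.card : ℝ) ^ (3 + ε) := by
      rw [← Real.rpow_natCast]
      exact Real.rpow_le_rpow_of_exponent_le h1 (by push_cast; linarith)
    calc En A ≤ (A.card : ℝ) ^ 6 := h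
      _ = (A.card : ℝ) ^ 3 * (A.card : ℝ) ^ 3 := by ring
      _ ≤ K ^ 3 * (A.card : ℝ) ^ (3 + ε) := by gcongr

lemma large_case {ε : ℝ} (hε : 0 < ε) : ∃ C : ℝ, 0 < C ∧ ∀ ρ : ℝ, 12 ≤ ρ →
    ∀ A : Finset (ℤ × ℤ), (A : Set (ℤ × ℤ)) = annulusLattice (ρ ^ 3) →
      En A ≤ C * (A.card : ℝ) ^ (3 + ε) := by
  set δ : ℝ := 2 * ε / 5 with hδ
  have hδ0 : 0 < δ := by positivity
  obtain ⟨C, hC, h⟩ := En_upper hδ0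
  refine ⟨C * 20 ^ δ * (500 * (1 + 1 / δ)) ^ 3 * 576 ^ (3 + ε), by positivity, fun ρ hρ A hA => ?_⟩
  have h1 : 1 < ρ := by linarith
  have h0 : 0 < ρ := by linarith
  have hmem : ∀ x, x ∈ A ↔ ρ ^ 6 ≤ (x.1 : ℝ) ^ 2 + (x.2 : ℝ) ^ 2 ∧
      (x.1 : ℝ) ^ 2 + (x.2 : ℝ) ^ 2 ≤ ρ ^ 6 + 2 * ρ ^ 2 + (ρ⁻¹) ^ 2 := fun x => by
    rw [← Finset.mem_coe, hA]; exact ann_iff h1 x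
  have hu := h ρ (by linarith) A (fun p hp => by
    obtain ⟨a, b⟩ := (hmem p).1 hp
    have := inv_sq_le h1
    exact ⟨a, by linarith⟩)
  have hl := lower hρ A (fun x a b => (hmem x).2 ⟨a, by have := sq_nonneg (ρ⁻¹); linarith⟩)
  have hlog : 1 + Real.log ρ ≤ (1 + 1 / δ) * ρ ^ δ := by
    have a := Real.log_le_rpow_div h0.le hδ0
    have b := Real.one_le_rpow h1.le hδ0.le
    have : (1 + 1 / δ) * ρ ^ δ = ρ ^ δ + ρ ^ δ / δ := by ring
    linarith
  have hl0 : 0 ≤ Real.log ρ := Real.log_nonneg h1.le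
  have e1 : (20 * ρ ^ 2) ^ δ = 20 ^ δ * (ρ ^ δ) ^ 2 := by
    rw [Real.mul_rpow (by norm_num) (by positivity), ← Real.rpow_natCast, ← Real.rpow_natCast,
      ← Real.rpow_mul h0.le, ← Real.rpow_mul h0.le, mul_comm δ]
  have e2 : ρ ^ 6 * (ρ ^ δ) ^ 5 = (ρ ^ 2) ^ (3 + ε) := by
    rw [← Real.rpow_natCast, ← Real.rpow_natCast, ← Real.rpow_natCast,
      ← Real.rpow_mul h0.le, ← Real.rpow_mul h0.le, ← Real.rpow_add h0]
    congr 1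
    rw [hδ]; push_cast; ring
  have e3 : (ρ ^ 2) ^ (3 + ε) ≤ 576 ^ (3 + ε) * (A.card : ℝ) ^ (3 + ε) := by
    rw [← Real.mul_rpow (by norm_num) (by positivity)]
    apply Real.rpow_le_rpow (by positivity) (by linarith) (by linarith)
  calc En A ≤ C * (20 * ρ ^ 2) ^ δ * (500 * ρ ^ 2 * (1 + Real.log ρ)) ^ 3 := hu
    _ ≤ C * (20 * ρ ^ 2) ^ δ * (500 * ρ ^ 2 * ((1 + 1 / δ) * ρ ^ δ)) ^ 3 := by gcongr
    _ = C * 20 ^ δ * (500 * (1 + 1 / δ)) ^ 3 * (ρ ^ 6 * (ρ ^ δ) ^ 5) := by rw [e1]; ring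
    _ ≤ C * 20 ^ δ * (500 * (1 + 1 / δ)) ^ 3 * (576 ^ (3 + ε) * (A.card : ℝ) ^ (3 + ε)) := by
      rw [e2]; gcongr
    _ = _ := by ring

lemma small_bound : ∃ K : ℝ, 0 ≤ K ∧ ∀ ρ : ℝ, 1 < ρ → ρ < 12 → ∀ A : Finset (ℤ × ℤ),
    (A : Set (ℤ × ℤ)) = annulusLattice (ρ ^ 3) → (A.card : ℝ) ≤ K := by
  obtain ⟨n, hn⟩ := exists_nat_gt (4000 : ℝ)
  refine ⟨((Finset.Icc (-(n : ℤ)) n ×ˢ Finset.Icc (-(n : ℤ)) n).card : ℝ), Nat.cast_nonneg _,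
    fun ρ hρ1 hρ A hA => Nat.cast_le.2 (Finset.card_le_card ?_)⟩
  have := ann_subset hρ1 n (by
    have : ρ ^ 3 ≤ 12 ^ 3 := by gcongr
    linarith)
  rw [← hA] at this
  exact Finset.coe_subset.1 this

theorem additive_energy_annulus :
    ∀ ε > (0 : ℝ), ∃ C > (0 : ℝ), ∀ R : ℝ, 1 < R →
      (energy 3 (annulusLattice R) : ℝ) ≤
        C * ((annulusLattice R).ncard : ℝ) ^ ((3 : ℝ) + ε) := by
  intro ε hε
  obtain ⟨C, hC, h⟩ := large_case hε
  obtain ⟨K, hK0, hK⟩ := small_bound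
  refine ⟨C + K ^ 3, by positivity, fun R hR => ?_⟩
  obtain ⟨ρ, hρ1, rfl⟩ : ∃ ρ : ℝ, 1 < ρ ∧ R = ρ ^ 3 := by
    refine ⟨R ^ ((1 : ℝ) / 3), Real.one_lt_rpow hR (by norm_num), ?_⟩
    rw [← Real.rpow_natCast, ← Real.rpow_mul (by linarith)]
    norm_num
  obtain ⟨A, hA⟩ := ann_finset hρ1
  have key : En A ≤ (C + K ^ 3) * (A.card : ℝ) ^ (3 + ε) := by
    have p : 0 ≤ (A.card : ℝ) ^ (3 + ε) := by positivity
    rw [add_mul]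
    rcases le_or_gt 12 ρ with hρ | hρ
    · have := h ρ hρ A hA
      have : 0 ≤ K ^ 3 * (A.card : ℝ) ^ (3 + ε) := by positivity
      linarith
    · have hc := hK ρ hρ1 hρ A hA
      have := small_case hε hc
      have : 0 ≤ C * (A.card : ℝ) ^ (3 + ε) := by positivity
      linarith
  rw [← hA, Set.ncard_coe_finset, ← En_eq_energy]
  exact key

end
end
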